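/- arXiv:2107.07819 — 7 statements merged into one kernel-verified Lean document; each statement's English description precedes it below -/
import Mathlib

section
/- Let A be a complex *-algebra that is algebraic. Then A admits a pre-C*-norm if and only if the involution of A is proper. -/
/-- A (possibly non-unital) complex algebra is *algebraic* if every element generates a
finite-dimensional subalgebra (equivalently, every element is a root of a nonzero
polynomial with complex coefficients). -/
def IsAlgebraicAlgebra (A : Type*) [NonUnitalRing A] [Module ℂ A] : Prop :=
  ∀ a : A, ∃ S : NonUnitalSubalgebra ℂ A, a ∈ S ∧ FiniteDimensional ℂ S

/-- A pre-C*-norm on a complex `*`-algebra: a submultiplicative norm `σ` with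
`σ (x* x) = σ x ^ 2`. -/
def HasPreCstarNorm (A : Type*) [NonUnitalRing A] [Module ℂ A] [Star A] : Prop :=
  ∃ σ : A → ℝ,
    (∀ a : A, σ a = 0 ↔ a = 0) ∧
    (∀ (c : ℂ) (a : A), σ (c • a) = ‖c‖ * σ a) ∧
    (∀ a b : A, σ (a + b) ≤ σ a + σ b) ∧
    (∀ a b : A, σ (a * b) ≤ σ a * σ b) ∧
    (∀ a : A, σ (star a * a) = σ a ^ 2)

/-- The involution is proper if `a* a = 0` implies `a = 0`. -/
def HasProperInvolution (A : Type*) [NonUnitalRing A] [Star A] : Prop :=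
  ∀ a : A, star a * a = 0 → a = 0

/-- Hermitian: every selfadjoint element has real spectrum (computed in the
unitization `ℂ ⊕ A`). -/
def IsHermitianStarAlgebra (A : Type*) [NonUnitalRing A] [Module ℂ A]
    [SMulCommClass ℂ A A] [IsScalarTower ℂ A A] [Star A] : Prop :=
  ∀ a : A, star a = a → ∀ z ∈ spectrum ℂ (a : Unitization ℂ A), z.im = 0

/-- Semisimple: the Jacobson radical is `{0}` (expressed via the unitization, whose
Jacobson radical meets `A` exactly in the Jacobson radical of `A`). -/
def IsSemisimpleAlgebra (A : Type*) [NonUnitalRing A] [Module ℂ A]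
    [SMulCommClass ℂ A A] [IsScalarTower ℂ A A] : Prop :=
  ∀ a : A, (a : Unitization ℂ A) ∈ (⊥ : Ideal (Unitization ℂ A)).jacobson → a = 0


namespace PreCstar

open Polynomial

section unital

variable {B : Type*} [Ring B] [StarRing B] [Algebra ℂ B] [StarModule ℂ B]

theorem cancel_nonreal (hp : HasProperInvolution B) {h : B} (hh : star h = h) {z : ℂ}
    (hz : z.im ≠ 0) {E : B} (hE : (h - algebraMap ℂ B z) * E = 0) : E = 0 := by
  have h1 : h * E = z • E := by
    rw [sub_mul, sub_eq_zero, ← Algebra.smul_def] at hE; exact hE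
  have h2 : star E * h = (starRingEnd ℂ z) • star E := by
    have := congrArg star h1
    simpa [hh] using this
  have h3 : z • (star E * E) = (starRingEnd ℂ z) • (star E * E) := by
    rw [← mul_smul_comm, ← h1, ← mul_assoc, h2, smul_mul_assoc]
  have h4 : (z - starRingEnd ℂ z) • (star E * E) = 0 := by rw [sub_smul, h3, sub_self]
  rcases smul_eq_zero.1 h4 with h5 | h5
  · exfalso
    apply hz
    have := congrArg Complex.im h5
    simp at this
    linarith
  · exact hp _ h5

theorem cancel_sq (hp : HasProperInvolution B) {k : B} (hk : star k = k) {E : B}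
    (hE : k * (k * E) = 0) : k * E = 0 := by
  apply hp
  rw [star_mul, hk, mul_assoc, hE, mul_zero]

theorem star_real_sub {h : B} (hh : star h = h) (t : ℝ) :
    star (h - algebraMap ℝ B t) = h - algebraMap ℝ B t := by
  simp [hh, Algebra.algebraMap_eq_smul_one, star_smul]

theorem exists_finset_aux (hp : HasProperInvolution B) {h : B} (hh : star h = h) (l : List ℂ) :
    ∃ s : Finset ℝ, ∀ E : B, (l.map (fun z => h - algebraMap ℂ B z)).prod * E = 0 →
      aeval h (∏ t ∈ s, (X - C t)) * E = 0 := by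
  classical
  induction l with
  | nil => exact ⟨∅, fun E hE => by simpa using hE⟩
  | cons z l ih =>
    obtain ⟨s, hs⟩ := ih
    by_cases hz : z.im = 0
    · obtain ⟨t, rfl⟩ : ∃ t : ℝ, (t : ℂ) = z := ⟨z.re, by apply Complex.ext <;> simp [hz]⟩
      have e1 : algebraMap ℂ B (t : ℂ) = algebraMap ℝ B t := by
        rw [IsScalarTower.algebraMap_apply ℝ ℂ B]; rfl
      refine ⟨insert t s, fun E hE => ?_⟩
      have hc : Commute (h - algebraMap ℂ B (t:ℂ))
          (l.map (fun z => h - algebraMap ℂ B z)).prod := by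
        apply Commute.list_prod_right
        intro y hy
        obtain ⟨w, -, rfl⟩ := List.mem_map.1 hy
        exact ((Commute.refl h).sub_right (Algebra.commutes w h).symm).sub_left
          (Algebra.commutes _ _)
      rw [List.map_cons, List.prod_cons, hc.eq, mul_assoc] at hE
      have h1 := hs _ hE
      rw [e1] at h1
      have e2 : h - algebraMap ℝ B t = aeval h (X - C t) := by simp
      by_cases ht : t ∈ s
      · rw [Finset.insert_eq_of_mem ht]
        rw [← Finset.mul_prod_erase s _ ht] at h1 ⊢
        rw [← mul_assoc, e2, ← map_mul, mul_comm, map_mul, map_mul, ← e2, mul_assoc, mul_assoc] at h1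
        rw [map_mul, ← e2, mul_assoc]
        exact cancel_sq hp (star_real_sub hh t) h1
      · rw [Finset.prod_insert ht, mul_comm, map_mul, ← e2, mul_assoc]
        exact h1
    · refine ⟨s, fun E hE => hs _ ?_⟩
      rw [List.map_cons, List.prod_cons, mul_assoc] at hE
      exact cancel_nonreal hp hh hz hE

theorem exists_finset (hp : HasProperInvolution B) (ha : ∀ b : B, IsIntegral ℂ b)
    {h : B} (hh : star h = h) :
    ∃ s : Finset ℝ, aeval h (∏ t ∈ s, (X - C t) : ℝ[X]) = 0 := by
  obtain ⟨p, hpm, hp0⟩ := ha h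
  obtain ⟨s, hs⟩ := exists_finset_aux hp hh p.roots.toList
  refine ⟨s, ?_⟩
  have := hs 1
  rw [mul_one, mul_one] at this
  apply this
  have h1 := (IsAlgClosed.splits p).eq_prod_roots_of_monic hpm
  have h2 : aeval h p = 0 := hp0
  rw [h1, ← Multiset.coe_toList p.roots, Multiset.map_coe, Multiset.prod_coe, map_list_prod,
    List.map_map] at h2
  rw [← h2]
  congr 2
  funext z
  simp

/-- Finite functional calculus. -/
theorem exists_fc (hp : HasProperInvolution B) (ha : ∀ b : B, IsIntegral ℂ b)
    {h : B} (hh : star h = h) :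
    ∃ (s : Finset ℝ) (Φ : (ℝ → ℝ) →ₐ[ℝ] B), Φ id = h ∧ (∀ f, star (Φ f) = Φ f) ∧
      (∀ f y, Commute h y → Commute (Φ f) y) ∧ (∀ f, (∀ t ∈ s, f t = 0) → Φ f = 0) := by
  classical
  obtain ⟨s, hs⟩ := exists_finset hp ha hh
  have key : ∀ p q : ℝ[X], (∀ t ∈ s, p.eval t = q.eval t) → aeval h p = aeval h q := by
    intro p q hpq
    rw [← sub_eq_zero, ← map_sub]
    have : (∏ t ∈ s, (X - C t) : ℝ[X]) ∣ p - q := by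
      apply Finset.prod_dvd_of_coprime
      · intro a _ b _ hab
        exact pairwise_coprime_X_sub_C Function.injective_id hab
      · intro t ht
        rw [dvd_iff_isRoot]
        simp [hpq t ht]
    obtain ⟨r, hr⟩ := this
    rw [hr, map_mul, hs, zero_mul]
  have ev : ∀ (f : ℝ → ℝ), ∀ t ∈ s, (Lagrange.interpolate s id f).eval t = f t := fun f t ht =>
    Lagrange.eval_interpolate_at_node (v := id) f (Function.injective_id.injOn) ht
  let L : (ℝ → ℝ) →ₗ[ℝ] B := (aeval h).toLinearMap ∘ₗ Lagrange.interpolate s id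
  have hL : ∀ f, L f = aeval h (Lagrange.interpolate s id f) := fun f => rfl
  refine ⟨s, AlgHom.ofLinearMap L ?_ ?_, ?_, ?_, ?_, ?_⟩
  · rw [hL, ← map_one (aeval (R := ℝ) h)]
    exact key _ _ fun t ht => by rw [ev _ t ht]; simp
  · intro f g
    rw [hL, hL, hL, ← map_mul]
    exact key _ _ fun t ht => by rw [eval_mul, ev _ t ht, ev _ t ht, ev _ t ht]; simp
  · change L id = h
    rw [hL]
    conv_rhs => rw [← aeval_X (R := ℝ) h]
    exact key _ _ fun t ht => by rw [ev _ t ht]; simp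
  · intro f
    change star (L f) = L f
    rw [hL]
    generalize Lagrange.interpolate s id f = p
    induction p using Polynomial.induction_on' with
    | add p q hp hq => rw [map_add, star_add, hp, hq]
    | monomial n a => simp [aeval_monomial, ← Algebra.smul_def, star_smul, hh]
  · intro f y hy
    change Commute (L f) y
    rw [hL]
    generalize Lagrange.interpolate s id f = p
    induction p using Polynomial.induction_on' with
    | add p q hp hq => rw [map_add]; exact hp.add_left hq
    | monomial n a =>
      rw [aeval_monomial]
      exact Commute.mul_left (Algebra.commutes a y) (hy.pow_left n)
  · intro f hf
    change L f = 0
    rw [hL, ← map_zero (aeval (R := ℝ) h)]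
    exact key _ _ fun t ht => by rw [ev _ t ht, hf t ht]; simp

theorem exists_fc' (hp : HasProperInvolution B) (ha : ∀ b : B, IsIntegral ℂ b)
    {h : B} (hh : star h = h) :
    ∃ (s : Finset ℝ) (Φ : (ℝ → ℝ) →ₐ[ℝ] B), Φ id = h ∧ (∀ f, star (Φ f) = Φ f) ∧
      (∀ f y, Commute h y → Commute (Φ f) y) ∧
      (∀ f, (∀ t, f t = 0 ∨ IsUnit (h - algebraMap ℝ B t)) → Φ f = 0) ∧
      (∀ t, ¬ IsUnit (h - algebraMap ℝ B t) → t ∈ s) ∧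
      (∀ t, Φ (Pi.single t 1) = 0 → IsUnit (h - algebraMap ℝ B t)) ∧
      (∀ f, Φ f = ∑ t ∈ s, f t • Φ (Pi.single t 1)) := by
  classical
  obtain ⟨s, Φ, h1, h2, h3, h4⟩ := exists_fc hp ha hh
  have hsub : ∀ t : ℝ, h - algebraMap ℝ B t = Φ (id - algebraMap ℝ (ℝ → ℝ) t) := by
    intro t; rw [map_sub, h1, AlgHom.commutes]
  have h5 : ∀ f, Φ f = ∑ t ∈ s, f t • Φ (Pi.single t 1) := by
    intro f
    have : Φ (f - ∑ t ∈ s, f t • Pi.single t 1) = 0 := by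
      apply h4
      intro t ht
      simp [Finset.sum_apply, Pi.single_apply, ht]
    rw [map_sub, sub_eq_zero, map_sum] at this
    rw [this]
    simp
  have h7 : ∀ t, Φ (Pi.single t 1) = 0 → IsUnit (h - algebraMap ℝ B t) := by
    intro t ht
    have e : Φ ((id - algebraMap ℝ (ℝ → ℝ) t) * (fun x => (x - t)⁻¹)) = 1 := by
      rw [← sub_zero (1 : B), ← ht, ← map_one Φ, ← map_sub]
      congr 1
      funext x
      by_cases hx : x = t
      · subst hx; simp
      · have : x - t ≠ 0 := sub_ne_zero.2 hx
        simp [hx, this]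
    rw [hsub]
    refine ⟨⟨_, Φ (fun x => (x - t)⁻¹), ?_, ?_⟩, rfl⟩
    · rw [← map_mul, e]
    · rw [← map_mul, mul_comm, e]
  refine ⟨s, Φ, h1, h2, h3, ?_, ?_, h7, h5⟩
  · intro f hf
    rw [h5]
    apply Finset.sum_eq_zero
    intro t ht
    rcases hf t with h6 | h6
    · rw [h6, zero_smul]
    · have : Φ (Pi.single t 1) = 0 := by
        rw [← h6.mul_right_eq_zero, hsub, ← map_mul, ← map_zero Φ]
        congr 1
        funext x
        by_cases hx : x = t
        · subst hx; simp
        · simp [Pi.single_apply, hx]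
      rw [this, smul_zero]
  · intro t ht
    by_contra hts
    apply ht
    apply h7
    apply h4
    intro x hx
    have : x ≠ t := by rintro rfl; exact hts hx
    simp [this]

/-- An element `star a * a` has no negative eigenvalue. -/
theorem no_neg (hp : HasProperInvolution B) (ha : ∀ b : B, IsIntegral ℂ b) {b e : B}
    (he : star e = e) (hee : e * e = e) (hbe : b * e = b) (hb : star b * b = - e) : e = 0 := by
  classical
  by_contra hne
  have heb : e * star b = star b := by
    have := congrArg star hbe
    simpa [he] using this
  set k := e * b + star b * e with hk
  have hks : star k = k := by
    simp only [hk, star_add, star_mul, star_star, he]; abel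
  have hke : Commute k e := by
    change k * e = e * k
    simp only [hk, add_mul, mul_add]
    rw [mul_assoc, hbe, mul_assoc, hee, ← mul_assoc, hee, ← mul_assoc, heb]
  obtain ⟨s, Φ, h1, h2, h3, h4, h5, h8, h6⟩ := exists_fc' hp ha hks
  obtain ⟨t, ht, hg⟩ : ∃ t ∈ s, Φ (Pi.single t 1) * e ≠ 0 := by
    by_contra! hcon
    apply hne
    have := h6 1
    rw [map_one] at this
    rw [← one_mul e, this, Finset.sum_mul]
    apply Finset.sum_eq_zero
    intro t ht
    rw [smul_mul_assoc, hcon t ht, smul_zero]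
  set g := Φ (Pi.single t 1) * e with hgdef
  have heg : e * g = g := by
    rw [hgdef, ← mul_assoc, ← (h3 _ e hke).eq, mul_assoc, hee]
  have hkg : k * g = t • g := by
    have : k * Φ (Pi.single t 1) = t • Φ (Pi.single t 1) := by
      conv_lhs => rw [← h1]
      rw [← map_mul, ← map_smul]
      congr 1
      funext x
      by_cases hx : x = t
      · subst hx; simp
      · simp [Pi.single_apply, hx]
    rw [hgdef, ← mul_assoc, this, smul_mul_assoc]
  obtain ⟨r, hr⟩ : ∃ r : ℝ, r * r + r * t - 1 = 0 := by
    refine ⟨(-t + √(t ^ 2 + 4)) / 2, ?_⟩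
    have := Real.mul_self_sqrt (show 0 ≤ t ^ 2 + 4 by positivity)
    nlinarith
  have e1 : star ((r • e + b) * g) * ((r • e + b) * g) = 0 := by
    have : star (r • e + b) * (r • e + b) = (r * r - 1) • e + r • k := by
      simp only [star_add, star_smul, he, hk, add_mul, mul_add, smul_mul_assoc, mul_smul_comm, hee,
        hb, star_trivial]
      module
    rw [star_mul, mul_assoc, ← mul_assoc _ _ g, this, add_mul, smul_mul_assoc, smul_mul_assoc,
      heg, hkg, smul_smul, ← add_smul, show r * r - 1 + r * t = 0 by linarith, zero_smul, mul_zero]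
  have e2 : b * g = - (r • g) := by
    have := hp _ e1
    rw [add_mul, smul_mul_assoc, heg] at this
    exact (neg_eq_of_add_eq_zero_right this).symm
  have e3 : star (b * g) * (b * g) = - (star g * g) := by
    rw [star_mul, mul_assoc, ← mul_assoc _ _ g, hb, neg_mul, heg, mul_neg]
  rw [e2] at e3
  have e4 : (r * r + 1) • (star g * g) = 0 := by
    simp only [star_neg, star_smul, neg_mul, mul_neg, neg_neg, smul_mul_assoc, mul_smul_comm,
      star_trivial] at e3
    have e5 : r • r • (star g * g) = - (star g * g) := by rw [← e3]; module
    rw [add_smul, mul_smul, e5]; module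
  rcases smul_eq_zero.1 e4 with h7 | h7
  · nlinarith
  · exact hg (hp _ h7)

theorem isUnit_add (hp : HasProperInvolution B) (ha : ∀ b : B, IsIntegral ℂ b) (a : B) {t : ℝ}
    (ht : 0 < t) : IsUnit (star a * a + algebraMap ℝ B t) := by
  classical
  by_contra hcon
  have hh : star (star a * a) = star a * a := by simp
  obtain ⟨s, Φ, h1, h2, h3, h4, h5, h8, h6⟩ := exists_fc' hp ha hh
  set e := Φ (Pi.single (-t) 1) with he
  have hee : e * e = e := by
    rw [he, ← map_mul]
    congr 1
    funext x
    by_cases hx : x = -t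
    · subst hx; simp
    · simp [Pi.single_apply, hx]
  have hae : star a * a * e = (-t) • e := by
    conv_lhs => rw [← h1]
    rw [he, ← map_mul, ← map_smul]
    congr 1
    funext x
    by_cases hx : x = -t
    · subst hx; simp
    · simp [Pi.single_apply, hx]
  have hes : star e = e := h2 _
  have he0 : e = 0 := by
    apply no_neg hp ha (b := (√t)⁻¹ • (a * e)) hes hee
    · rw [smul_mul_assoc, mul_assoc, hee]
    · have h7 : (√t)⁻¹ * (√t)⁻¹ * t = 1 := by
        have := Real.mul_self_sqrt ht.le
        have h8 : √t ≠ 0 := (Real.sqrt_pos.2 ht).ne'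
        field_simp
        rw [pow_two, this]
      rw [star_smul, star_mul, smul_mul_assoc, mul_smul_comm, smul_smul, mul_assoc,
        ← mul_assoc _ a e, hae, hes, mul_smul_comm, hee, smul_smul, star_trivial, mul_neg, h7,
        neg_smul, one_smul]
  apply hcon
  have := h8 (-t) he0
  simpa using this

/-- Elements of the form `star y * y`. -/
def IsP (h : B) : Prop := ∃ y, h = star y * y

theorem IsP.star_eq {h : B} (hh : IsP h) : star h = h := by
  obtain ⟨y, rfl⟩ := hh; simp

theorem sqrt_of_units (hp : HasProperInvolution B) (ha : ∀ b : B, IsIntegral ℂ b) {h : B}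
    (hh : star h = h) (hu : ∀ t : ℝ, 0 < t → IsUnit (h + algebraMap ℝ B t)) :
    ∃ k : B, star k = k ∧ k * k = h := by
  obtain ⟨s, Φ, h1, h2, h3, h4, h5, h8, h6⟩ := exists_fc' hp ha hh
  refine ⟨Φ Real.sqrt, h2 _, ?_⟩
  conv_rhs => rw [← h1]
  rw [← map_mul, ← sub_eq_zero, ← map_sub]
  apply h4
  intro t
  rcases le_or_gt 0 t with ht | ht
  · left
    simp [Real.mul_self_sqrt ht]
  · right
    have := hu (-t) (by linarith)
    rwa [map_neg, ← sub_eq_add_neg] at this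

theorem IsP.sqrt (hp : HasProperInvolution B) (ha : ∀ b : B, IsIntegral ℂ b) {h : B}
    (hh : IsP h) : ∃ k : B, star k = k ∧ k * k = h := by
  apply sqrt_of_units hp ha hh.star_eq
  obtain ⟨y, rfl⟩ := hh
  intro t ht
  exact isUnit_add hp ha y ht

theorem IsP.add (hp : HasProperInvolution B) (ha : ∀ b : B, IsIntegral ℂ b) {h k : B}
    (hh : IsP h) (hk : IsP k) : IsP (h + k) := by
  have hs : star (h + k) = h + k := by rw [star_add, hh.star_eq, hk.star_eq]
  obtain ⟨x, rfl⟩ := hh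
  obtain ⟨y, rfl⟩ := hk
  suffices ∃ k : B, star k = k ∧ k * k = star x * x + star y * y by
    obtain ⟨k, h1, h2⟩ := this
    exact ⟨k, by rw [h1, h2]⟩
  apply sqrt_of_units hp ha hs
  intro t ht
  obtain ⟨w, hw, hww⟩ : ∃ w : B, star w = w ∧ w * w = star x * x + algebraMap ℝ B t := by
    apply sqrt_of_units hp ha
    · simp [Algebra.algebraMap_eq_smul_one, star_smul]
    · intro r hr
      rw [add_assoc, ← map_add]
      exact isUnit_add hp ha x (by positivity)
  have hu : IsUnit (w * w) := by rw [hww]; exact isUnit_add hp ha x ht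
  obtain ⟨u, hu⟩ : IsUnit w := by
    obtain ⟨v, hv⟩ := hu
    have hv1 : w * (w * ↑v⁻¹) = 1 := by rw [← mul_assoc, ← hv, Units.mul_inv]
    have hv2 : (↑v⁻¹ * w) * w = 1 := by rw [mul_assoc, ← hv, Units.inv_mul]
    have := left_inv_eq_right_inv hv2 hv1
    exact ⟨⟨w, _, hv1, by rw [← this, hv2]⟩, rfl⟩
  have hi : star (↑u⁻¹ : B) = ↑u⁻¹ := by
    have e1 : star (↑u⁻¹ : B) * w = 1 := by
      have := congrArg star (Units.mul_inv u)
      rw [hu, star_mul, hw, star_one] at this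
      exact this
    have e2 : w * (↑u⁻¹ : B) = 1 := by rw [← hu, Units.mul_inv]
    exact left_inv_eq_right_inv e1 e2
  have e : star x * x + star y * y + algebraMap ℝ B t =
      w * (star (y * ↑u⁻¹) * (y * ↑u⁻¹) + algebraMap ℝ B 1) * w := by
    rw [star_mul, hi, map_one, mul_add, add_mul, mul_one, hww, ← hu]
    simp only [mul_assoc, Units.inv_mul, mul_one]
    rw [← mul_assoc _ _ (star y * y), Units.mul_inv, one_mul]
    abel
  rw [e]
  have hw1 : IsUnit w := ⟨u, hu⟩
  exact (hw1.mul (isUnit_add hp ha _ one_pos)).mul hw1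

theorem IsP.smul {h : B} (hh : IsP h) {t : ℝ} (ht : 0 ≤ t) : IsP (t • h) := by
  obtain ⟨y, rfl⟩ := hh
  refine ⟨√t • y, ?_⟩
  rw [star_smul, smul_mul_assoc, mul_smul_comm, smul_smul, star_trivial (√t),
    Real.mul_self_sqrt ht]

theorem IsP.conj {h : B} (hh : IsP h) (x : B) : IsP (star x * h * x) := by
  obtain ⟨y, rfl⟩ := hh
  exact ⟨y * x, by simp [mul_assoc]⟩

theorem IsP.eq_zero (hp : HasProperInvolution B) (ha : ∀ b : B, IsIntegral ℂ b) {h : B}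
    (hh : IsP h) (hh' : IsP (-h)) : h = 0 := by
  obtain ⟨s, Φ, h1, h2, h3, h4, h5, h8, h6⟩ := exists_fc' hp ha hh.star_eq
  rw [← h1]
  apply h4
  intro t
  rcases lt_trichotomy t 0 with ht | ht | ht
  · right
    obtain ⟨y, hy⟩ := hh
    have := isUnit_add hp ha y (t := -t) (by linarith)
    rw [← hy] at this
    simpa [sub_eq_add_neg] using this
  · left; exact ht
  · right
    obtain ⟨y, hy⟩ := hh'
    have := isUnit_add hp ha y ht
    rw [← hy] at this
    have := this.neg
    simpa [sub_eq_add_neg, add_comm] using this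

theorem exists_max [Nontrivial B] (hp : HasProperInvolution B) (ha : ∀ b : B, IsIntegral ℂ b)
    {h : B} (hh : star h = h) : ∃ M : ℝ, ∀ c : ℝ, IsP (c • (1 : B) - h) ↔ M ≤ c := by
  classical
  obtain ⟨s, Φ, h1, h2, h3, h4, h5, h8, h6⟩ := exists_fc' hp ha hh
  set s' := s.filter (fun t => ¬ IsUnit (h - algebraMap ℝ B t)) with hs'
  have hne : s'.Nonempty := by
    by_contra hcon
    rw [Finset.not_nonempty_iff_eq_empty] at hcon
    have : Φ 1 = 0 := by
      apply h4
      intro t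
      right
      by_contra ht
      have : t ∈ s' := by simp [hs', ht, h5 t ht]
      simp [hcon] at this
    rw [map_one] at this
    exact one_ne_zero this
  refine ⟨s'.max' hne, fun c => ?_⟩
  rw [Finset.max'_le_iff]
  constructor
  · rintro ⟨y, hy⟩ t ht
    by_contra! hct
    have := isUnit_add hp ha y (t := t - c) (by linarith)
    rw [← hy] at this
    apply (Finset.mem_filter.1 ht).2
    have := this.neg
    rw [Algebra.algebraMap_eq_smul_one] at this ⊢
    convert this using 1
    module
  · intro hall
    obtain ⟨k, hk, hkk⟩ := sqrt_of_units hp ha (h := c • (1 : B) - h)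
      (by simp [star_smul, hh]) (by
        intro t ht
        by_contra hcon
        have h9 : ¬ IsUnit (h - algebraMap ℝ B (c + t)) := by
          intro h10
          apply hcon
          have := h10.neg
          rw [Algebra.algebraMap_eq_smul_one] at this ⊢
          convert this using 1
          module
        have := hall (c + t) (by simp only [hs', Finset.mem_filter]; exact ⟨h5 _ h9, h9⟩)
        linarith)
    exact ⟨k, by rw [hk, hkk]⟩

theorem unital_norm [Nontrivial B] (hp : HasProperInvolution B) (ha : ∀ b : B, IsIntegral ℂ b) :
    HasPreCstarNorm B := by
  have H : ∀ a : B, ∃ M : ℝ, ∀ c : ℝ, IsP (c • (1 : B) - star a * a) ↔ M ≤ c := fun a =>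
    exists_max hp ha (by simp)
  choose M hM using H
  have hM0 : ∀ a, 0 ≤ M a := by
    intro a
    by_contra! h0
    have h1 := (hM a (M a)).2 le_rfl
    have h2 : IsP (M a • (1 : B)) := by
      have := h1.add hp ha ⟨a, rfl⟩
      simpa using this
    have h3 : IsP (- (M a • (1 : B))) := by
      rw [← neg_smul]
      exact IsP.smul ⟨1, by simp⟩ (by linarith)
    rcases smul_eq_zero.1 (h2.eq_zero hp ha h3) with h4 | h4
    · linarith
    · exact one_ne_zero h4
  have key : ∀ a (c : ℝ), 0 ≤ c → (√(M a) ≤ c ↔ IsP ((c * c) • (1 : B) - star a * a)) := by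
    intro a c hc
    rw [hM, Real.sqrt_le_left hc, pow_two]
  set σ : B → ℝ := fun a => √(M a) with hσ
  have σ0 : ∀ a, 0 ≤ σ a := fun a => Real.sqrt_nonneg _
  have σP : ∀ a, IsP ((σ a * σ a) • (1 : B) - star a * a) := fun a =>
    (key a (σ a) (σ0 a)).1 le_rfl
  have hz : ∀ a, σ a = 0 → a = 0 := by
    intro a h0
    have := σP a
    rw [h0, mul_zero, zero_smul, zero_sub] at this
    exact hp _ (IsP.eq_zero hp ha ⟨a, rfl⟩ this)
  have hz0 : σ 0 = 0 := by
    apply le_antisymm _ (σ0 0)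
    rw [hσ]
    refine (key 0 0 le_rfl).2 ⟨0, by simp⟩
  have hsm : ∀ (c : ℂ) (a : B), σ (c • a) ≤ ‖c‖ * σ a := by
    intro c a
    refine (key _ _ (mul_nonneg (norm_nonneg _) (σ0 a))).2 ?_
    have := (σP a).smul (mul_self_nonneg ‖c‖)
    convert this using 1
    have e : star (c • a) * (c • a) = (‖c‖ * ‖c‖) • (star a * a) := by
      rw [star_smul, smul_mul_assoc, mul_smul_comm, smul_smul, ← Complex.coe_smul (‖c‖ * ‖c‖)]
      congr 1
      have := Complex.conj_mul' c
      rw [pow_two] at this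
      push_cast
      exact this
    rw [e]
    module
  refine ⟨σ, fun a => ⟨hz a, fun h => by rw [h, hz0]⟩, ?_, ?_, ?_, ?_⟩
  · intro c a
    apply le_antisymm (hsm c a)
    by_cases hc : c = 0
    · subst hc; simp [hz0]
    · have h1 := hsm c⁻¹ (c • a)
      rw [smul_smul, inv_mul_cancel₀ hc, one_smul, norm_inv] at h1
      have h2 : 0 < ‖c‖ := norm_pos_iff.2 hc
      rwa [inv_mul_eq_div, le_div_iff₀ h2, mul_comm] at h1
  · intro a b
    rcases eq_or_lt_of_le (σ0 a) with h0 | hα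
    · rw [hz a h0.symm, zero_add, hz0, zero_add]
    rcases eq_or_lt_of_le (σ0 b) with h0 | hβ
    · rw [hz b h0.symm, add_zero, hz0, add_zero]
    refine (key _ _ (add_nonneg hα.le hβ.le)).2 ?_
    have hA := σP a
    have hB := σP b
    set α := σ a
    set β := σ b
    have h1 := hA.smul (t := 1 + β / α) (by positivity)
    have h2 := hB.smul (t := 1 + α / β) (by positivity)
    have h3 : IsP ((α * β)⁻¹ • (star (β • a - α • b) * (β • a - α • b))) :=
      IsP.smul ⟨_, rfl⟩ (by positivity)
    have h4 := (h1.add hp ha h2).add hp ha h3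
    convert h4 using 1
    simp only [star_add, star_sub, star_smul, star_trivial, add_mul, mul_add, sub_mul, mul_sub,
      smul_mul_assoc, mul_smul_comm, smul_sub, smul_smul]
    match_scalars <;> field_simp <;> ring
  · intro a b
    refine (key _ _ (mul_nonneg (σ0 a) (σ0 b))).2 ?_
    have h1 := (σP b).smul (mul_self_nonneg (σ a))
    have h2 := (σP a).conj b
    convert h1.add hp ha h2 using 1
    simp only [star_mul, mul_sub, sub_mul, mul_smul_comm, smul_mul_assoc, mul_one, mul_assoc]
    module
  · intro a
    have hP : IsP (star a * a) := ⟨a, rfl⟩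
    have hs : star (star a * a) = star a * a := by simp
    apply le_antisymm
    · refine (key _ _ (sq_nonneg _)).2 ?_
      obtain ⟨k, hk, hkk⟩ := hP.sqrt hp ha
      have h1 := (σP a).smul (sq_nonneg (σ a))
      have h2 := (σP a).conj k
      convert h1.add hp ha h2 using 1
      rw [hs, hk, ← hkk]
      simp only [mul_sub, sub_mul, mul_smul_comm, smul_mul_assoc, mul_one, mul_assoc]
      module
    · rcases eq_or_lt_of_le (σ0 (star a * a)) with h0 | hc
      · have := hp _ (hz _ h0.symm)
        rw [this, hz0]; simp [hz0]
      have h1 := σP (star a * a)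
      set c := σ (star a * a) with hcdef
      have h2 : IsP (star (c • (1 : B) - star a * a) * (c • (1 : B) - star a * a)) := ⟨_, rfl⟩
      have h3 := (h1.add hp ha h2).smul (t := (2 * c)⁻¹) (by positivity)
      have h4 : IsP (c • (1 : B) - star a * a) := by
        convert h3 using 1
        rw [star_sub, star_smul, star_one, hs, star_trivial c]
        simp only [mul_sub, sub_mul, mul_smul_comm, smul_mul_assoc, mul_one, one_mul]
        match_scalars <;> field_simp <;> ring
      rw [hσ]
      change √(M a) ^ 2 ≤ c
      rw [Real.sq_sqrt (hM0 a)]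
      exact (hM a c).1 h4

end unital

theorem integral_unitization {A : Type*} [NonUnitalRing A] [Module ℂ A]
    [SMulCommClass ℂ A A] [IsScalarTower ℂ A A] (halg : IsAlgebraicAlgebra A)
    (x : Unitization ℂ A) : IsIntegral ℂ x := by
  obtain ⟨S, haS, hS⟩ := halg x.snd
  haveI : Module.Finite ℂ (Unitization ℂ S) :=
    Module.Finite.equiv (Unitization.linearEquiv ℂ ℂ S).symm
  let φ : Unitization ℂ S →ₐ[ℂ] Unitization ℂ A := Unitization.lift
    ((Unitization.inrNonUnitalAlgHom ℂ A).comp (NonUnitalSubalgebraClass.subtype S))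
  have h := (IsIntegral.of_finite ℂ
    (Unitization.inl x.fst + Unitization.inr ⟨x.snd, haS⟩ : Unitization ℂ S)).map φ
  convert h using 1
  ext <;> simp [φ, Unitization.algebraMap_eq_inl]

theorem proper_unitization {A : Type*} [NonUnitalRing A] [Module ℂ A]
    [SMulCommClass ℂ A A] [IsScalarTower ℂ A A] [StarRing A] [StarModule ℂ A]
    (hp : HasProperInvolution A) : HasProperInvolution (Unitization ℂ A) := by
  intro x hx
  have h1 : x.fst = 0 := by
    have := congrArg (fun y : Unitization ℂ A => y.fst) hx
    simpa using this
  obtain ⟨a, rfl⟩ : ∃ a : A, x = (a : Unitization ℂ A) :=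
    ⟨x.snd, by ext <;> simp [h1]⟩
  have h2 : star a * a = 0 := by
    have := congrArg (fun y : Unitization ℂ A => y.snd) hx
    simpa using this
  rw [hp a h2]; simp

end PreCstar

/-- An algebraic complex `*`-algebra admits a pre-C*-norm iff its
involution is proper. -/
theorem hasPreCstarNorm_iff_properInvolution (A : Type*) [NonUnitalRing A] [Module ℂ A]
    [SMulCommClass ℂ A A] [IsScalarTower ℂ A A] [StarRing A] [StarModule ℂ A]
    (halg : IsAlgebraicAlgebra A) :
    HasPreCstarNorm A ↔ HasProperInvolution A := by
  constructor
  · rintro ⟨σ, h0, -, -, -, h⟩ a ha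
    have := h a
    rw [ha, (h0 0).2 rfl] at this
    exact (h0 a).1 (pow_eq_zero_iff two_ne_zero |>.1 this.symm)
  · intro hp
    obtain ⟨σ, h1, h2, h3, h4, h5⟩ := PreCstar.unital_norm (B := Unitization ℂ A)
      (PreCstar.proper_unitization hp) (PreCstar.integral_unitization halg)
    refine ⟨fun a => σ (a : Unitization ℂ A), ?_, ?_, ?_, ?_, ?_⟩
    · intro a
      rw [h1]
      exact ⟨fun h => Unitization.inr_injective (by simpa using h), fun h => by simp [h]⟩
    · intro c a
      simpa using h2 c a
    · intro a b
      simpa using h3 a b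
    · intro a b
      simpa using h4 a b
    · intro a
      simpa using h5 a
end

section
/- Every complex Banach algebra that is algebraic and semisimple is finite dimensional. -/
open Polynomial in
theorem exists_idem_aux {B : Type*} [Ring B] [Algebra ℂ B] (a : B) (ha : IsAlgebraic ℂ a)
    (hn : ¬ IsNilpotent a) : ∃ y : B, y * a * (y * a) = y * a ∧ y * a ≠ 0 := by
  obtain ⟨p, hp, hpa⟩ := ha
  obtain ⟨q, hq, hdvd⟩ := Polynomial.exists_eq_pow_rootMultiplicity_mul_and_not_dvd p hp 0
  set k := p.rootMultiplicity 0
  simp only [map_zero, sub_zero] at hq hdvd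
  have hc : IsCoprime ((X : ℂ[X]) ^ (k + 1)) q :=
    ((Polynomial.prime_X.irreducible.coprime_iff_not_dvd).2 hdvd).pow_left
  obtain ⟨u, v, huv⟩ := hc
  have hy : aeval a (u * X ^ k) * a = aeval a (u * X ^ (k + 1)) := by
    simp only [map_mul, map_pow, aeval_X, mul_assoc, pow_succ]
  refine ⟨aeval a (u * X ^ k), ?_, ?_⟩
  · rw [hy, ← map_mul]
    have : u * X ^ (k + 1) * (u * X ^ (k + 1)) = u * X ^ (k + 1) - u * v * X * p := by
      rw [hq]
      linear_combination (u * X ^ (k + 1)) * huv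
    rw [this, map_sub, map_mul _ _ p, hpa, mul_zero, sub_zero]
  · rw [hy]
    intro h0
    apply hn
    refine ⟨k, ?_⟩
    have h1 : (X : ℂ[X]) ^ k = X ^ k * (u * X ^ (k + 1)) + v * p := by
      rw [hq]
      linear_combination (- X ^ k) * huv
    have := congrArg (aeval a) h1
    rw [map_add, map_mul, map_mul _ v, h0, hpa] at this
    simpa using this

theorem exists_idem_of_leftIdeal {B : Type*} [Ring B] [Algebra ℂ B]
    (halg : ∀ a : B, IsAlgebraic ℂ a) (hJ : (⊥ : Ideal B).jacobson = ⊥)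
    (L : Ideal B) (hL : L ≠ ⊥) : ∃ e ∈ L, e * e = e ∧ e ≠ 0 := by
  by_contra hcon
  push Not at hcon
  apply hL
  rw [eq_bot_iff, ← hJ]
  intro x hx
  rw [Ideal.mem_jacobson_iff]
  intro y
  have hnil : IsNilpotent (y * x) := by
    by_contra hn
    obtain ⟨z, hz, hz0⟩ := exists_idem_aux _ (halg (y * x)) hn
    exact hz0 (hcon _ (L.mul_mem_left _ (L.mul_mem_left _ hx)) hz)
  obtain ⟨w, hw⟩ := hnil.isUnit_add_one
  refine ⟨(↑w⁻¹ : B), ?_⟩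
  have : (↑w⁻¹ : B) * (y * x + 1) = 1 := by rw [← hw]; simp
  rw [Ideal.mem_bot, mul_assoc, ← mul_add_one (↑w⁻¹ : B) (y * x), this, sub_self]

theorem exists_generator {B : Type*} [Ring B] [Algebra ℂ B]
    (halg : ∀ a : B, IsAlgebraic ℂ a) (hJ : (⊥ : Ideal B).jacobson = ⊥)
    (hseq : ¬ ∃ f : ℕ → B, (∀ n, f n * f n = f n) ∧ (∀ n, f n ≠ 0) ∧
      ∀ m n, m ≠ n → f m * f n = 0)
    (L : Ideal B) : ∃ e ∈ L, e * e = e ∧ ∀ x ∈ L, x * e = x := by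
  by_contra hcon
  push Not at hcon
  have step : ∀ e : {e : B // e ∈ L ∧ e * e = e}, ∃ f : B, f ∈ L ∧ f * f = f ∧ f ≠ 0 ∧
      e.1 * f = 0 ∧ f * e.1 = 0 := by
    rintro ⟨e, heL, he⟩
    obtain ⟨x, hxL, hx⟩ := hcon e heL he
    let M : Ideal B := L ⊓ LinearMap.ker (LinearMap.toSpanSingleton B B e)
    have hM : M ≠ ⊥ := by
      intro h
      have : x - x * e ∈ M := by
        refine ⟨L.sub_mem hxL (L.mul_mem_left _ heL), ?_⟩
        simp [sub_mul, mul_assoc, he]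
      rw [h, Ideal.mem_bot, sub_eq_zero] at this
      exact hx this.symm
    obtain ⟨f, ⟨hfL, hfe⟩, hf, hf0⟩ := exists_idem_of_leftIdeal halg hJ M hM
    have hfe : f * e = 0 := by simpa using hfe
    refine ⟨f - e * f, L.sub_mem hfL (L.mul_mem_left _ hfL), ?_, ?_, ?_, ?_⟩
    · have h1 : f * (e * f) = 0 := by rw [← mul_assoc, hfe, zero_mul]
      simp only [sub_mul, mul_sub, hf, mul_assoc, h1]
      simp
    · intro h
      apply hf0
      have := congrArg (f * ·) h
      simpa [mul_sub, ← mul_assoc, hfe, hf] using this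
    · simp [mul_sub, ← mul_assoc, he]
    · simp [sub_mul, mul_assoc, hfe]
  choose F hFL hFi hF0 hF1 hF2 using step
  let nxt : {e : B // e ∈ L ∧ e * e = e} → {e : B // e ∈ L ∧ e * e = e} := fun e =>
    ⟨e.1 + F e, L.add_mem e.2.1 (hFL e), by
      simp [mul_add, add_mul, e.2.2, hFi, hF1, hF2]⟩
  let E : ℕ → {e : B // e ∈ L ∧ e * e = e} := fun n =>
    Nat.rec ⟨0, L.zero_mem, by simp⟩ (fun _ e => nxt e) n
  have hE : ∀ n, (E (n + 1)).1 = (E n).1 + F (E n) := fun n => rfl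
  have key : ∀ m k, (E (m + 1 + k)).1 * F (E m) = F (E m) ∧
      F (E m) * (E (m + 1 + k)).1 = F (E m) := by
    intro m k
    induction k with
    | zero => simp [hE, add_mul, mul_add, hFi, hF1, hF2]
    | succ k ih =>
      rw [← add_assoc, hE, add_mul, mul_add, ih.1, ih.2]
      constructor
      · rw [← ih.1, ← mul_assoc, hF2]; simp [ih.1]
      · rw [← ih.2, mul_assoc, hF1]; simp [ih.2]
  have orth : ∀ m n, m < n → F (E m) * F (E n) = 0 ∧ F (E n) * F (E m) = 0 := by
    intro m n hmn
    obtain ⟨k, rfl⟩ := Nat.exists_eq_add_of_le (Nat.succ_le_of_lt hmn)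
    obtain ⟨h1, h2⟩ := key m k
    constructor
    · rw [← h2, mul_assoc, Nat.succ_eq_add_one, hF1, mul_zero]
    · rw [← h1, ← mul_assoc, Nat.succ_eq_add_one, hF2, zero_mul]
  refine hseq ⟨fun n => F (E n), fun n => hFi _, fun n => hF0 _, fun m n hmn => ?_⟩
  rcases lt_or_gt_of_ne hmn with h | h
  · exact (orth m n h).1
  · exact (orth n m h).2

theorem isSemisimpleRing_aux {B : Type*} [Ring B] [Algebra ℂ B]
    (halg : ∀ a : B, IsAlgebraic ℂ a) (hJ : (⊥ : Ideal B).jacobson = ⊥)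
    (hseq : ¬ ∃ f : ℕ → B, (∀ n, f n * f n = f n) ∧ (∀ n, f n ≠ 0) ∧
      ∀ m n, m ≠ n → f m * f n = 0) : IsSemisimpleRing B := by
  refine (isSemisimpleModule_iff B B).2 ⟨fun L => ?_⟩
  obtain ⟨e, heL, he, hLe⟩ := exists_generator halg hJ hseq L
  refine ⟨LinearMap.ker (LinearMap.toSpanSingleton B B e), ?_⟩
  rw [isCompl_iff, Submodule.disjoint_def, Submodule.codisjoint_iff_exists_add_eq]
  constructor
  · intro x hx hx2
    rw [← hLe x hx]
    simpa using hx2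
  · intro z
    refine ⟨z * e, z - z * e, Ideal.mul_mem_left L _ heL, ?_, by simp⟩
    simp [sub_mul, mul_assoc, he]

theorem finite_of_isSemisimpleRing_aux {B : Type*} [Ring B] [Algebra ℂ B]
    (halg : ∀ a : B, IsAlgebraic ℂ a) [IsSemisimpleRing B] : Module.Finite ℂ B := by
  obtain ⟨n, D, d, _, _, hd, ⟨e⟩⟩ := IsSemisimpleRing.exists_algEquiv_pi_matrix_divisionRing ℂ B
  have hfin : ∀ i, Module.Finite ℂ (D i) := by
    intro i
    have : Algebra.IsIntegral ℂ (D i) := by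
      refine ⟨fun x => ?_⟩
      rw [← isAlgebraic_iff_isIntegral]
      have := hd i
      obtain ⟨p, hp, hpa⟩ := halg (e.symm (fun j => if h : j = i then h ▸ Matrix.scalar (Fin (d i)) x else 0))
      refine ⟨p, hp, ?_⟩
      have h1 := congrArg e hpa
      rw [← Polynomial.aeval_algHom_apply] at h1
      simp only [AlgEquiv.apply_symm_apply, map_zero] at h1
      have h2 := congrArg (Pi.evalAlgHom ℂ (fun i => Matrix (Fin (d i)) (Fin (d i)) (D i)) i) h1
      rw [← Polynomial.aeval_algHom_apply] at h2
      simp only [Pi.evalAlgHom_apply, dite_true, map_zero] at h2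
      have h3 : Polynomial.aeval (Matrix.scalar (Fin (d i)) x) p
          = Matrix.scalar (Fin (d i)) (Polynomial.aeval x p) := by
        simp only [Polynomial.aeval_eq_sum_range, map_sum, ← map_pow]
        refine Finset.sum_congr rfl fun k _ => ?_
        ext a b
        by_cases hab : a = b <;> simp [hab]
      rw [h3] at h2
      have h4 := congrFun (congrFun h2 0) 0
      simpa using h4
    have hb := IsAlgClosed.algebraMap_bijective_of_isIntegral (k := ℂ) (K := D i)
    exact Module.Finite.of_surjective (Algebra.linearMap ℂ (D i)) hb.2
  exact Module.Finite.equiv e.toLinearEquiv.symm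

theorem no_orthogonal_seq_aux {B : Type*} [NormedRing B] [NormedAlgebra ℂ B] [CompleteSpace B]
    (halg : ∀ a : B, IsAlgebraic ℂ a) : ¬ ∃ f : ℕ → B, (∀ n, f n * f n = f n) ∧ (∀ n, f n ≠ 0) ∧
      ∀ m n, m ≠ n → f m * f n = 0 := by
  rintro ⟨f, hf, hf0, hforth⟩
  -- strictly decreasing positive coefficients
  let g : ℕ → ℝ := fun n => ∑ i ∈ Finset.range (n + 1), (1 + ‖f i‖)
  have hg : StrictMono g := by
    apply strictMono_nat_of_lt_succ
    intro n
    simp only [g]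
    rw [Finset.sum_range_succ _ (n + 1)]
    have := norm_nonneg (f (n + 1))
    linarith
  have hg1 : ∀ n, ‖f n‖ < g n := by
    intro n
    simp only [g]
    have h1 : 1 + ‖f n‖ ≤ ∑ i ∈ Finset.range (n + 1), (1 + ‖f i‖) :=
      Finset.single_le_sum (f := fun i => 1 + ‖f i‖) (fun i _ => by positivity) (by simp)
    linarith
  have hgpos : ∀ n, 0 < g n := fun n => (norm_nonneg _).trans_lt (hg1 n)
  let c : ℕ → ℝ := fun n => (1 / 2) ^ n / g n
  have hcpos : ∀ n, 0 < c n := fun n => div_pos (by positivity) (hgpos n)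
  have hc : StrictAnti c := by
    intro m n hmn
    have h1 : ((1 : ℝ) / 2) ^ n < (1 / 2) ^ m :=
      pow_lt_pow_right_of_lt_one₀ (by norm_num) (by norm_num) hmn
    exact div_lt_div₀ h1 (hg hmn).le (by positivity) (hgpos m)
  have hsum : Summable fun n => (c n : ℂ) • f n := by
    refine Summable.of_norm_bounded (g := fun n => ((1 : ℝ) / 2) ^ n)
      (summable_geometric_of_lt_one (by norm_num) (by norm_num)) fun n => ?_
    rw [norm_smul, Complex.norm_real, Real.norm_of_nonneg (hcpos n).le]
    simp only [c]
    rw [div_mul_eq_mul_div, div_le_iff₀ (hgpos n)]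
    exact mul_le_mul_of_nonneg_left (hg1 n).le (by positivity)
  have hmul : ∀ n, (∑' k, (c k : ℂ) • f k) * f n = (c n : ℂ) • f n := by
    intro n
    rw [← hsum.tsum_mul_right, tsum_eq_single n]
    · rw [smul_mul_assoc, hf]
    · intro m hm
      rw [smul_mul_assoc, hforth m n hm, smul_zero]
  generalize (∑' k, (c k : ℂ) • f k) = a at hmul
  obtain ⟨p, hp, hpa⟩ := halg a
  have hpow : ∀ n k, a ^ k * f n = ((c n : ℂ) ^ k) • f n := by
    intro n k
    induction k with
    | zero => simp
    | succ k ih => rw [pow_succ, mul_assoc, hmul, mul_smul_comm, ih, smul_smul, pow_succ, mul_comm]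
  have hroot : ∀ n, p.IsRoot (c n : ℂ) := by
    intro n
    have h1 : Polynomial.aeval a p * f n = (p.eval (c n : ℂ)) • f n := by
      rw [Polynomial.aeval_eq_sum_range, Polynomial.eval_eq_sum_range, Finset.sum_mul,
        Finset.sum_smul]
      refine Finset.sum_congr rfl fun k _ => ?_
      rw [smul_mul_assoc, hpow, smul_smul]
    rw [hpa, zero_mul] at h1
    exact (smul_eq_zero.1 h1.symm).resolve_right (hf0 n)
  have hinj : Function.Injective fun n => (c n : ℂ) :=
    Complex.ofReal_injective.comp hc.injective
  exact (Set.infinite_range_of_injective hinj)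
    ((Polynomial.finite_setOfPred_isRoot hp).subset (by rintro _ ⟨n, rfl⟩; exact hroot n))

theorem unitization_isAlgebraic_aux {A : Type*} [NonUnitalRing A] [Module ℂ A]
    [SMulCommClass ℂ A A] [IsScalarTower ℂ A A] (halg : IsAlgebraicAlgebra A)
    (x : Unitization ℂ A) : IsAlgebraic ℂ x := by
  have hinr : ∀ a : A, IsAlgebraic ℂ (a : Unitization ℂ A) := by
    intro a
    obtain ⟨S, haS, hS⟩ := halg a
    have : Module.Finite ℂ (Unitization ℂ S) :=
      by
      refine Module.Finite.of_surjective
        ((Algebra.linearMap ℂ (Unitization ℂ S)).coprod (Unitization.inrHom ℂ ℂ S)) fun y => ?_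
      refine ⟨(y.fst, y.snd), ?_⟩
      ext <;> simp [Unitization.algebraMap_eq_inl]
    let φ : Unitization ℂ S →ₐ[ℂ] Unitization ℂ A :=
      Unitization.lift ((Unitization.inrNonUnitalAlgHom ℂ A).comp (NonUnitalSubalgebraClass.subtype S))
    have h := (Algebra.IsIntegral.isIntegral (R := ℂ) ((⟨a, haS⟩ : S) : Unitization ℂ S)).map φ
    rw [isAlgebraic_iff_isIntegral]
    simpa [φ] using h
  obtain ⟨p, hp, hpa⟩ := hinr x.snd
  refine ⟨p.comp (Polynomial.X - Polynomial.C x.fst), ?_, ?_⟩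
  · intro h
    rw [Polynomial.comp_eq_zero_iff] at h
    rcases h with h | ⟨_, h⟩
    · exact hp h
    · have := congrArg (fun q => Polynomial.coeff q 1) h
      simp [Polynomial.coeff_C] at this
  · have hx : Polynomial.aeval x (Polynomial.X - Polynomial.C x.fst)
        = (x.snd : Unitization ℂ A) := by
      simp only [map_sub, Polynomial.aeval_X, Polynomial.aeval_C]
      rw [sub_eq_iff_eq_add]
      ext <;> simp [Unitization.algebraMap_eq_inl]
    rw [Polynomial.aeval_comp, hx, hpa]

theorem unitization_jacobson_aux {A : Type*} [NonUnitalRing A] [Module ℂ A]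
    [SMulCommClass ℂ A A] [IsScalarTower ℂ A A] (hss : IsSemisimpleAlgebra A) :
    (⊥ : Ideal (Unitization ℂ A)).jacobson = ⊥ := by
  rw [eq_bot_iff]
  intro x hx
  have hfst : x.fst = 0 := by
    by_contra h0
    obtain ⟨z, hz⟩ := Ideal.mem_jacobson_iff.1 hx (algebraMap ℂ _ (-x.fst⁻¹))
    rw [Ideal.mem_bot, sub_eq_zero] at hz
    have := congrArg (Unitization.fstHom ℂ A) hz
    simp [mul_assoc, h0, Unitization.algebraMap_eq_inl] at this
  have hx' : x = (x.snd : Unitization ℂ A) := by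
    ext <;> simp [hfst]
  rw [hx'] at hx
  rw [hx', hss _ hx]
  simp

/-- Every complex Banach algebra that is algebraic and semisimple is
finite dimensional. -/
theorem finiteDimensional_of_algebraic_semisimple_banach (A : Type*)
    [NonUnitalNormedRing A] [NormedSpace ℂ A] [SMulCommClass ℂ A A] [IsScalarTower ℂ A A]
    [CompleteSpace A]
    (halg : IsAlgebraicAlgebra A) (hss : IsSemisimpleAlgebra A) :
    FiniteDimensional ℂ A := by
  have halgU := unitization_isAlgebraic_aux halg
  have hJ := unitization_jacobson_aux hss
  let ψ := WithLp.unitizationAlgEquiv (𝕜 := ℂ) (A := A) ℂ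
  have hseq : ¬ ∃ f : ℕ → Unitization ℂ A, (∀ n, f n * f n = f n) ∧ (∀ n, f n ≠ 0) ∧
      ∀ m n, m ≠ n → f m * f n = 0 := by
    rintro ⟨f, h1, h2, h3⟩
    refine no_orthogonal_seq_aux (B := WithLp 1 (Unitization ℂ A)) (fun a => ?_)
      ⟨fun n => ψ.symm (f n), fun n => ?_, fun n => ?_, fun m n hmn => ?_⟩
    · obtain ⟨p, hp, hpa⟩ := halgU (ψ a)
      refine ⟨p, hp, ψ.injective ?_⟩
      rw [← Polynomial.aeval_algHom_apply, hpa, map_zero]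
    · rw [← map_mul, h1]
    · simpa using h2 n
    · rw [← map_mul, h3 m n hmn, map_zero]
  have := isSemisimpleRing_aux halgU hJ hseq
  have hfin := finite_of_isSemisimpleRing_aux halgU
  exact Module.Finite.of_injective (Unitization.inrHom ℂ ℂ A) Unitization.inr_injective
end

section
/- Let A be a complex *-algebra that is algebraic and admits a pre-C*-norm. Then A satisfies the (EP)-axiom: for every a ∈ A with a ≠ 0 there exists w in the bicommutant {a*a}'' of {a*a} such that w = w* and (a*a)w² is a nonzero projection. -/
/-- The commutant of a subset of a multiplicative structure. -/
def commutant {A : Type*} [Mul A] (S : Set A) : Set A :=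
  {a : A | ∀ s ∈ S, a * s = s * a}

section EPHelpers

variable {A : Type*} [NonUnitalRing A] [Module ℂ A]
    [SMulCommClass ℂ A A] [IsScalarTower ℂ A A] [StarRing A] [StarModule ℂ A]

/-- Almost-positivity of `k` with respect to `σ`. -/
def EPPos (σ : A → ℝ) (k : A) : Prop :=
  ∃ C : ℝ, 0 ≤ C ∧ ∀ s : ℝ, 0 ≤ s → ∀ x : A,
    σ (x - (s : ℂ) • (k * x)) ≤ (1 + C * s ^ 2) * σ x

lemma ep_norm_nonneg (σ : A → ℝ) (h0 : ∀ a : A, σ a = 0 ↔ a = 0)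
    (hs : ∀ (c : ℂ) (a : A), σ (c • a) = ‖c‖ * σ a)
    (ha : ∀ a b : A, σ (a + b) ≤ σ a + σ b) (x : A) : 0 ≤ σ x := by
  have h1 := ha x ((-1 : ℂ) • x)
  have h2 : x + (-1 : ℂ) • x = 0 := by simp
  rw [h2, hs, (h0 0).2 rfl] at h1
  simp at h1
  linarith

lemma ep_norm_star (σ : A → ℝ) (h0 : ∀ a : A, σ a = 0 ↔ a = 0)
    (hn : ∀ x : A, 0 ≤ σ x)
    (hm : ∀ a b : A, σ (a * b) ≤ σ a * σ b)
    (hc : ∀ a : A, σ (star a * a) = σ a ^ 2) (x : A) : σ (star x) = σ x := by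
  have key : ∀ x : A, σ x ≤ σ (star x) := by
    intro x
    have h1 := hm (star x) x
    rw [hc] at h1
    rcases (hn x).eq_or_lt with h | h
    · rw [← h]; exact hn _
    · nlinarith
  refine le_antisymm ?_ (key x)
  simpa using key (star x)

lemma ep_pos_sq (σ : A → ℝ)
    (hs : ∀ (c : ℂ) (a : A), σ (c • a) = ‖c‖ * σ a)
    (ha : ∀ a b : A, σ (a + b) ≤ σ a + σ b)
    (hn : ∀ x : A, 0 ≤ σ x)
    (hm : ∀ a b : A, σ (a * b) ≤ σ a * σ b)
    (hc : ∀ a : A, σ (star a * a) = σ a ^ 2)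
    (hst : ∀ a : A, σ (star a) = σ a) (h : A) (hh : star h = h) : EPPos σ (h * h) := by
  refine ⟨σ h ^ 4, by positivity, ?_⟩
  intro s hs0 x
  obtain ⟨r, hr⟩ : ∃ r : ℝ, r * r = 2 * s :=
    ⟨√(2 * s), Real.mul_self_sqrt (by positivity)⟩
  have main : ∀ t : ℝ, t * t = 2 * s →
      σ (x - (s : ℂ) • (h * h * x) + (Complex.I * t) • (h * x)) ≤ (1 + σ h ^ 4 * s ^ 2) * σ x := by
    intro t ht
    have htc : (t : ℂ) * t = 2 * s := by exact_mod_cast ht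
    have e1 : star (x - (s : ℂ) • (h * h * x) + (Complex.I * t) • (h * x)) *
        (x - (s : ℂ) • (h * h * x) + (Complex.I * t) • (h * x)) =
        star x * x + ((s : ℂ) ^ 2) • (star x * (h * (h * (h * (h * x))))) := by
      simp only [star_add, star_sub, star_smul, star_mul, hh, mul_add, add_mul, mul_sub, sub_mul,
        smul_mul_assoc, mul_smul_comm, mul_assoc, smul_smul, Complex.star_def, map_mul,
        Complex.conj_I, Complex.conj_ofReal, smul_sub, smul_add]
      have e2 : Complex.I * (t : ℂ) * (-Complex.I * t) = 2 * s := by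
        linear_combination (-(t : ℂ) ^ 2) * Complex.I_mul_I + htc
      have e3 : -Complex.I * (t : ℂ) * (Complex.I * t) = 2 * s := by
        linear_combination (-(t : ℂ) ^ 2) * Complex.I_mul_I + htc
      match_scalars <;> first | ring1 | linear_combination e2 | linear_combination (-1 : ℂ) * e2
    have e4 : σ (star x * (h * (h * (h * (h * x))))) ≤ σ h ^ 4 * σ x ^ 2 := by
      have a1 := hm h x
      have a2 := hm h (h * x)
      have a3 := hm h (h * (h * x))
      have a4 := hm h (h * (h * (h * x)))
      have a5 := hm (star x) (h * (h * (h * (h * x))))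
      rw [hst] at a5
      have H := hn h
      calc _ ≤ _ := a5
        _ ≤ σ x * (σ h * (σ h * (σ h * (σ h * σ x)))) := by
          refine mul_le_mul_of_nonneg_left ?_ (hn x)
          refine a4.trans (mul_le_mul_of_nonneg_left ?_ H)
          refine a3.trans (mul_le_mul_of_nonneg_left ?_ H)
          exact a2.trans (mul_le_mul_of_nonneg_left a1 H)
        _ = _ := by ring
    have e5 : σ (x - (s : ℂ) • (h * h * x) + (Complex.I * t) • (h * x)) ^ 2 ≤
        (1 + σ h ^ 4 * s ^ 2) * σ x ^ 2 := by
      rw [← hc, e1]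
      refine (ha _ _).trans ?_
      rw [hs, hc]
      have : ‖(s : ℂ) ^ 2‖ = s ^ 2 := by simp
      rw [this]
      nlinarith [mul_le_mul_of_nonneg_left e4 (sq_nonneg s)]
    have hq : 0 ≤ σ h ^ 4 * s ^ 2 := by positivity
    refine abs_le_of_sq_le_sq' ?_ (mul_nonneg (by positivity) (hn x)) |>.2
    refine e5.trans ?_
    rw [mul_pow]
    refine mul_le_mul_of_nonneg_right ?_ (sq_nonneg _)
    nlinarith
  have m1 := main r hr
  have m2 := main (-r) (by linarith)
  have e : (2 : ℂ) • (x - (s : ℂ) • (h * h * x)) =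
      (x - (s : ℂ) • (h * h * x) + (Complex.I * r) • (h * x)) +
      (x - (s : ℂ) • (h * h * x) + (Complex.I * (-r : ℝ)) • (h * x)) := by
    push_cast
    module
  have e' := ha (x - (s : ℂ) • (h * h * x) + (Complex.I * r) • (h * x))
      (x - (s : ℂ) • (h * h * x) + (Complex.I * (-r : ℝ)) • (h * x))
  rw [← e, hs] at e'
  have : ‖(2 : ℂ)‖ = 2 := by simp
  rw [this] at e'
  linarith

lemma ep_pos_add (σ : A → ℝ)
    (hs : ∀ (c : ℂ) (a : A), σ (c • a) = ‖c‖ * σ a)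
    (ha : ∀ a b : A, σ (a + b) ≤ σ a + σ b) {k l : A} (hk : EPPos σ k) (hl : EPPos σ l) :
    EPPos σ (k + l) := by
  obtain ⟨C, hC, hk⟩ := hk
  obtain ⟨D, hD, hl⟩ := hl
  refine ⟨2 * (C + D), by positivity, ?_⟩
  intro s s0 x
  have m1 := hk (2 * s) (by positivity) x
  have m2 := hl (2 * s) (by positivity) x
  have e : (2 : ℂ) • (x - (s : ℂ) • ((k + l) * x)) =
      (x - ((2 * s : ℝ) : ℂ) • (k * x)) + (x - ((2 * s : ℝ) : ℂ) • (l * x)) := by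
    push_cast
    rw [add_mul]
    module
  have e' := ha (x - ((2 * s : ℝ) : ℂ) • (k * x)) (x - ((2 * s : ℝ) : ℂ) • (l * x))
  rw [← e, hs] at e'
  have : ‖(2 : ℂ)‖ = 2 := by simp
  rw [this] at e'
  nlinarith

/-- `c* c = -e` with `e` a projection and `c e = c` forces `e = 0`. -/
lemma ep_no_neg (hnorm : HasPreCstarNorm A) (c e : A) (he : e * e = e)
    (hce : c * e = c) (hcc : star c * c = -e) : e = 0 := by
  obtain ⟨σ, h0, hs, ha, hm, hc⟩ := hnorm
  have hn := ep_norm_nonneg σ h0 hs ha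
  have hst := ep_norm_star σ h0 hn hm hc
  have sq := ep_pos_sq σ hs ha hn hm hc hst
  have hg : (c * star c) * (c * star c) = -(c * star c) := by
    calc _ = c * (star c * c) * star c := by simp only [mul_assoc]
      _ = _ := by rw [hcc]; simp [hce]
  have p1 := sq (c + star c) (by simp [add_comm])
  have p2 := sq (Complex.I • (c - star c)) (by
    simp only [star_smul, star_sub, star_star, Complex.star_def, Complex.conj_I]; module)
  have p3 := sq (c * star c) (by simp)
  have p := ep_pos_add σ hs ha (ep_pos_add σ hs ha p1 p2) (ep_pos_add σ hs ha p3 p3)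
  have key : (c + star c) * (c + star c) + Complex.I • (c - star c) * Complex.I • (c - star c) +
      (c * star c * (c * star c) + c * star c * (c * star c)) = -(e + e) := by
    rw [hg]
    rw [smul_mul_smul_comm, Complex.I_mul_I, neg_one_smul]
    simp only [mul_add, add_mul, mul_sub, sub_mul, hcc]
    abel
  rw [key] at p
  obtain ⟨C, hC, hp⟩ := p
  by_contra hne
  have hpos : 0 < σ e := lt_of_le_of_ne (hn e) (fun h => hne ((h0 e).1 h.symm))
  have hq := hp (1 / (C + 1)) (by positivity) e
  have e1 : e - ((1 / (C + 1) : ℝ) : ℂ) • (-(e + e) * e) =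
      ((1 + 2 * (1 / (C + 1)) : ℝ) : ℂ) • e := by
    rw [neg_mul, add_mul, he]
    push_cast
    module
  rw [e1, hs, Complex.norm_real, Real.norm_of_nonneg (by positivity)] at hq
  have hq' := le_of_mul_le_mul_right hq hpos
  have hu : (C + 1) * (1 / (C + 1)) = 1 := by field_simp
  have hv : 0 < 1 / (C + 1) := by positivity
  nlinarith

lemma ep_proper (hnorm : HasPreCstarNorm A) (x : A) (hx : star x * x = 0) : x = 0 := by
  obtain ⟨σ, h0, hs, ha, hm, hc⟩ := hnorm
  have := hc x
  rw [hx, (h0 0).2 rfl] at this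
  exact (h0 x).1 (pow_eq_zero_iff (two_ne_zero) |>.1 this.symm)

lemma ep_proper_unitization (hnorm : HasPreCstarNorm A) (x : Unitization ℂ A)
    (hx : star x * x = 0) : x = 0 := by
  have h1 : x.fst = 0 := by
    have := congrArg (fun v : Unitization ℂ A => v.fst) hx
    simpa using this
  have h2 : x = (x.snd : Unitization ℂ A) := by
    ext <;> simp [h1]
  have h3 : star x.snd * x.snd = 0 := by
    apply Unitization.inr_injective (R := ℂ)
    rw [Unitization.inr_mul, Unitization.inr_star, ← h2, hx, Unitization.inr_zero]
  rw [h2, ep_proper hnorm _ h3, Unitization.inr_zero]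

lemma ep_integral (halg : IsAlgebraicAlgebra A) (b : A) :
    IsIntegral ℂ (b : Unitization ℂ A) := by
  obtain ⟨S, hb, hS⟩ := halg b
  let T : Module.End ℂ S := LinearMap.mulLeft ℂ (⟨b, hb⟩ : S)
  have hT : IsIntegral ℂ T := Algebra.IsIntegral.isIntegral T
  obtain ⟨m, hm, hm0⟩ := hT
  have hm0 : Polynomial.aeval T m = 0 := hm0
  have key : ∀ q : Polynomial ℂ, ∀ s : S,
      (((Polynomial.aeval T q s : S) : A) : Unitization ℂ A) =
        Polynomial.aeval (b : Unitization ℂ A) q * ((s : A) : Unitization ℂ A) := by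
    intro q
    induction q using Polynomial.induction_on' with
    | add p q hp hq =>
      intro s
      simp [hp, hq, add_mul]
    | monomial n c =>
      intro s
      have : ∀ n : ℕ, ∀ s : S, ((((T ^ n) s : S) : A) : Unitization ℂ A) =
          (b : Unitization ℂ A) ^ n * ((s : A) : Unitization ℂ A) := by
        intro n
        induction n with
        | zero => intro s; simp
        | succ n ih =>
          intro s
          rw [pow_succ, Module.End.mul_apply, ih, pow_succ, mul_assoc, ← Unitization.inr_mul]
          rfl
      simp only [Polynomial.aeval_monomial, Module.algebraMap_end_eq_smul_id]
      rw [Algebra.algebraMap_eq_smul_one (A := Unitization ℂ A), smul_mul_assoc, smul_mul_assoc,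
        one_mul, smul_mul_assoc, ← this n s, ← Unitization.inr_smul]
      rfl
  refine ⟨m * Polynomial.X, hm.mul Polynomial.monic_X, ?_⟩
  change Polynomial.aeval (b : Unitization ℂ A) (m * Polynomial.X) = 0
  have := key m ⟨b, hb⟩
  rw [hm0] at this
  rw [map_mul, Polynomial.aeval_X, ← this]
  simp

lemma ep_pow_zero (hnorm : HasPreCstarNorm A) (u : Unitization ℂ A) (hu : star u = u) (n : ℕ)
    (h : u ^ (n + 1) = 0) : u = 0 := by
  induction n with
  | zero => simpa using h
  | succ n ih =>
    apply ih
    apply ep_proper_unitization hnorm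
    rw [star_pow, hu, ← pow_add, show n + 1 + (n + 1) = n + 1 + 1 + n by ring, pow_add, h, zero_mul]

/-- An eigenvector of `b` polynomial in `b`. -/
lemma ep_eigen (halg : IsAlgebraicAlgebra A) (hnorm : HasPreCstarNorm A) (b : A)
    (hb : star b = b) (hb0 : b ≠ 0) : ∃ (z : ℂ) (f : A) (q : Polynomial ℂ), z ≠ 0 ∧ f ≠ 0 ∧
      (f : Unitization ℂ A) = Polynomial.aeval (b : Unitization ℂ A) q ∧ b * f = z • f := by
  have hint := ep_integral halg b
  set u : Unitization ℂ A := (b : Unitization ℂ A) with hu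
  have hus : star u = u := by rw [hu, ← Unitization.inr_star, hb]
  have hu0 : u ≠ 0 := by
    intro h
    apply hb0
    apply Unitization.inr_injective (R := ℂ)
    simpa using h
  have hmon := minpoly.monic hint
  obtain ⟨z, hz, hz0⟩ : ∃ z ∈ (minpoly ℂ u).roots, z ≠ 0 := by
    by_contra! hcon
    have hsplit := IsAlgClosed.splits (minpoly ℂ u)
    have h1 := hsplit.eq_prod_roots_of_monic hmon
    rw [Multiset.eq_replicate_card.2 hcon] at h1
    simp only [Multiset.map_replicate, Multiset.prod_replicate, map_zero, sub_zero] at h1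
    have h2 := minpoly.aeval ℂ u
    rw [h1] at h2
    simp only [map_pow, Polynomial.aeval_X] at h2
    exact hu0 (ep_pow_zero hnorm u hus _ (by rw [pow_succ, h2, zero_mul]))
  have hroot := Polynomial.isRoot_of_mem_roots hz
  obtain ⟨q, hq⟩ := Polynomial.dvd_iff_isRoot.2 hroot
  have hann := minpoly.aeval ℂ u
  rw [hq] at hann
  simp only [map_mul, map_sub, Polynomial.aeval_X, Polynomial.aeval_C] at hann
  have heig : u * Polynomial.aeval u q = z • Polynomial.aeval u q := by
    rw [sub_mul, sub_eq_zero] at hann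
    rw [hann, Algebra.smul_def]
  have hq0 : q ≠ 0 := by
    rintro rfl
    exact minpoly.ne_zero hint (by rw [hq, mul_zero])
  have hne : Polynomial.aeval u q ≠ 0 := by
    intro h
    have h1 := Polynomial.natDegree_le_of_dvd (minpoly.dvd ℂ u h) hq0
    rw [hq, Polynomial.natDegree_mul (Polynomial.X_sub_C_ne_zero z) hq0,
      Polynomial.natDegree_X_sub_C] at h1
    omega
  have hfst : (Polynomial.aeval u q).fst = 0 := by
    have := congrArg (fun v : Unitization ℂ A => v.fst) heig
    simpa [hu, hz0] using this
  have hin : ((Polynomial.aeval u q).snd : Unitization ℂ A) = Polynomial.aeval u q := by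
    ext <;> simp [hfst]
  refine ⟨z, (Polynomial.aeval u q).snd, q, hz0, ?_, hin, ?_⟩
  · intro h
    rw [h] at hin
    exact hne (by rw [← hin]; simp)
  · apply Unitization.inr_injective (R := ℂ)
    rw [Unitization.inr_mul, Unitization.inr_smul, hin]
    exact heig

lemma ep_aeval_eigen (u v : Unitization ℂ A) (z : ℂ) (h : u * v = z • v) (q : Polynomial ℂ) :
    Polynomial.aeval u q * v = (q.eval z) • v := by
  induction q using Polynomial.induction_on' with
  | add p q hp hq => simp [add_mul, hp, hq, add_smul]
  | monomial n c =>
    have : ∀ n : ℕ, u ^ n * v = z ^ n • v := by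
      intro n
      induction n with
      | zero => simp
      | succ n ih => rw [pow_succ, mul_assoc, h, mul_smul_comm, ih, smul_smul, pow_succ, mul_comm]
    rw [Polynomial.aeval_monomial, Polynomial.eval_monomial, Algebra.algebraMap_eq_smul_one,
      smul_mul_assoc, one_mul, smul_mul_assoc, this, smul_smul]

lemma ep_bicomm (b f : A) (q : Polynomial ℂ)
    (hf : (f : Unitization ℂ A) = Polynomial.aeval (b : Unitization ℂ A) q) :
    f ∈ commutant (commutant {b}) := by
  intro y hy
  have hy : y * b = b * y := hy b rfl
  apply Unitization.inr_injective (R := ℂ)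
  rw [Unitization.inr_mul, Unitization.inr_mul, hf]
  have hc : Commute (b : Unitization ℂ A) (y : Unitization ℂ A) := by
    change _ * _ = _ * _
    rw [← Unitization.inr_mul, ← Unitization.inr_mul, hy]
  have hmem : Polynomial.aeval (b : Unitization ℂ A) q ∈
      Subalgebra.centralizer ℂ {(y : Unitization ℂ A)} := by
    have hb : (b : Unitization ℂ A) ∈ Subalgebra.centralizer ℂ {(y : Unitization ℂ A)} := by
      rw [Subalgebra.mem_centralizer_iff]
      rintro g rfl
      exact hc.symm
    exact Algebra.adjoin_le (Set.singleton_subset_iff.2 hb) (Polynomial.aeval_mem_adjoin_singleton ℂ _)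
  rw [Subalgebra.mem_centralizer_iff] at hmem
  exact (hmem _ rfl).symm

lemma ep_bicomm_smul (S : Set A) (c : ℂ) (f : A)
    (hf : f ∈ commutant S) : c • f ∈ commutant S := by
  intro y hy
  rw [smul_mul_assoc, mul_smul_comm, hf y hy]

/-- Existence of an eigenprojection in the bicommutant. -/
lemma ep_proj (halg : IsAlgebraicAlgebra A) (hnorm : HasPreCstarNorm A) (b : A)
    (hb : star b = b) (hb0 : b ≠ 0) : ∃ (t : ℝ) (e : A), t ≠ 0 ∧ e ≠ 0 ∧
      e ∈ commutant (commutant {b}) ∧ star e = e ∧ e * e = e ∧ b * e = (t : ℂ) • e := by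
  obtain ⟨z, f, q, hz, hf, hfq, hbf⟩ := ep_eigen halg hnorm b hb hb0
  have hW := ep_bicomm b f q hfq
  have hbb : b ∈ commutant ({b} : Set A) := by rintro _ rfl; rfl
  have hfb : f * b = b * f := hW b hbb
  have hsb : star f * b = b * star f := by
    have := congrArg star hfb
    simp only [star_mul, hb] at this
    exact this.symm
  have hnormal : f * star f = star f * f := hW (star f) (by rintro _ rfl; exact hsb)
  have hff : f * f = (q.eval z) • f := by
    apply Unitization.inr_injective (R := ℂ)
    rw [Unitization.inr_mul, Unitization.inr_smul]
    nth_rewrite 1 [hfq]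
    apply ep_aeval_eigen
    rw [← Unitization.inr_mul, hbf, Unitization.inr_smul]
  have hμ : q.eval z ≠ 0 := by
    intro h
    rw [h, zero_smul] at hff
    apply hf
    apply ep_proper hnorm
    apply ep_proper hnorm
    rw [star_mul, star_star]
    calc star f * f * (star f * f) = star f * (f * star f) * f := by simp only [mul_assoc]
      _ = star f * star f * (f * f) := by rw [hnormal]; simp only [mul_assoc]
      _ = 0 := by rw [hff, mul_zero]
  set μ := q.eval z with hμd
  obtain ⟨e, hed⟩ : ∃ e, e = μ⁻¹ • f := ⟨_, rfl⟩
  have hee : e * e = e := by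
    rw [hed, smul_mul_assoc, mul_smul_comm, hff, smul_smul μ⁻¹ μ, inv_mul_cancel₀ hμ, one_smul]
  have hen : e * star e = star e * e := by
    rw [hed, star_smul, smul_mul_smul_comm, smul_mul_smul_comm, hnormal, mul_comm]
  have hese : star e * star e = star e := by rw [← star_mul, hee]
  have hes' : e - star e * e = 0 := by
    apply ep_proper hnorm
    have h1 : star e * (star e * e) = star e * e := by rw [← mul_assoc, hese]
    have h2 : star e * e * e = star e * e := by rw [mul_assoc, hee]
    have h3 : star e * e * (star e * e) = star e * e := by
      rw [mul_assoc, ← mul_assoc e, hen, h2, h1]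
    simp only [star_sub, star_mul, star_star, mul_sub, sub_mul, h1, h2, h3]
    abel
  have hes : star e = e := by
    have h := sub_eq_zero.1 hes'
    rw [h]; simp
  have he0 : e ≠ 0 := by rw [hed]; exact smul_ne_zero (inv_ne_zero hμ) hf
  have hbe : b * e = z • e := by rw [hed, mul_smul_comm, hbf, smul_comm]
  have heW : e ∈ commutant (commutant {b}) := by rw [hed]; exact ep_bicomm_smul _ _ _ hW
  have hreal : star z = z := by
    have h1 := congrArg star hbe
    rw [star_mul, hes, hb, star_smul, hes, heW b hbb, hbe] at h1
    have h2 : (z - star z) • e = 0 := by rw [sub_smul, h1, sub_self]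
    rcases smul_eq_zero.1 h2 with h | h
    · exact (sub_eq_zero.1 h).symm
    · exact absurd h he0
  obtain ⟨t, rfl⟩ := Complex.conj_eq_iff_real.1 hreal
  exact ⟨t, e, by simpa using hz, he0, heW, hes, hee, hbe⟩

end EPHelpers

/-- An algebraic complex `*`-algebra with a pre-C*-norm satisfies the
(EP)-axiom: for every `a ≠ 0` there is a selfadjoint `w` in the bicommutant of `{a* a}`
such that `(a* a) * w²` is a nonzero projection. -/
theorem ep_axiom_of_algebraic_preCstarNorm (A : Type*) [NonUnitalRing A] [Module ℂ A]
    [SMulCommClass ℂ A A] [IsScalarTower ℂ A A] [StarRing A] [StarModule ℂ A]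
    (halg : IsAlgebraicAlgebra A) (hnorm : HasPreCstarNorm A) :
    ∀ a : A, a ≠ 0 → ∃ w ∈ commutant (commutant {star a * a}), star w = w ∧
      star (star a * a * (w * w)) = star a * a * (w * w) ∧
      (star a * a * (w * w)) * (star a * a * (w * w)) = star a * a * (w * w) ∧
      star a * a * (w * w) ≠ 0 := by
  intro a ha
  have hb : star (star a * a) = star a * a := by simp
  have hb0 : star a * a ≠ 0 := fun h => ha (ep_proper hnorm a h)
  obtain ⟨t, e, ht, he0, heW, hes, hee, hbe⟩ := ep_proj halg hnorm _ hb hb0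
  have htpos : 0 < t := by
    by_contra hneg
    have htn : 0 < -t := by
      have := lt_of_le_of_ne (not_lt.1 hneg) ht
      linarith
    obtain ⟨r, hr⟩ : ∃ r : ℝ, r * r * t = -1 := by
      refine ⟨√((-t)⁻¹), ?_⟩
      rw [Real.mul_self_sqrt (by positivity)]
      field_simp
    have hrc : (r : ℂ) * r * t = -1 := by exact_mod_cast hr
    refine he0 (ep_no_neg hnorm ((r : ℂ) • (a * e)) e hee ?_ ?_)
    · rw [smul_mul_assoc, mul_assoc, hee]
    · have h1 : star (a * e) * (a * e) = (t : ℂ) • e := by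
        rw [star_mul, hes, mul_assoc, ← mul_assoc (star a), hbe, mul_smul_comm, hee]
      rw [star_smul, smul_mul_smul_comm, h1, smul_smul, Complex.star_def, Complex.conj_ofReal, hrc,
        neg_one_smul]
  obtain ⟨r, hr⟩ : ∃ r : ℝ, r * r * t = 1 := by
    refine ⟨√(t⁻¹), ?_⟩
    rw [Real.mul_self_sqrt (by positivity)]
    field_simp
  have hrc : (r : ℂ) * r * t = 1 := by exact_mod_cast hr
  have key : star a * a * (((r : ℂ) • e) * ((r : ℂ) • e)) = e := by
    rw [smul_mul_smul_comm, hee, mul_smul_comm, hbe, smul_smul, hrc, one_smul]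
  refine ⟨(r : ℂ) • e, ep_bicomm_smul _ _ _ heW, ?_, ?_, ?_, ?_⟩
  · rw [star_smul, hes, Complex.star_def, Complex.conj_ofReal]
  · rw [key, hes]
  · rw [key, hee]
  · rw [key]; exact he0
end

section
/- Let A be a complex *-algebra that is algebraic and admits a pre-C*-norm. Then A satisfies the (UPSR)-axiom: for every positive element x ∈ A₊ there exists a unique y ∈ A₊ with y² = x, and moreover this y lies in the bicommutant {x}''. -/
/-- A positive element: a finite sum of elements of the form `a* a`. -/
def IsPositiveElem {A : Type*} [NonUnitalRing A] [Star A] (x : A) : Prop :=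
  ∃ (n : ℕ) (f : Fin n → A), x = ∑ i, star (f i) * f i

/-- The conclusion follows from an injective star homomorphism into a C*-algebra. -/
theorem upsr_of_embedding {A B : Type*} [NonUnitalRing A] [Module ℂ A]
    [SMulCommClass ℂ A A] [IsScalarTower ℂ A A] [StarRing A] [StarModule ℂ A]
    [NonUnitalCStarAlgebra B]
    (halg : IsAlgebraicAlgebra A) (φ : A →⋆ₙₐ[ℂ] B) (hφ : Function.Injective φ) :
    ∀ x : A, IsPositiveElem x →
      ∃ y : A, (IsPositiveElem y ∧ y * y = x) ∧
        (∀ z : A, IsPositiveElem z → z * z = x → z = y) ∧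
        y ∈ commutant (commutant {x}) := by
  let _ := CStarAlgebra.spectralOrder B
  have := CStarAlgebra.spectralOrderedRing B
  have hpos : ∀ a : A, IsPositiveElem a → 0 ≤ φ a := by
    rintro a ⟨n, f, rfl⟩
    rw [map_sum]
    refine Finset.sum_nonneg fun i _ => ?_
    rw [map_mul, map_star]
    exact star_mul_self_nonneg _
  have hsqrt : ∀ a : A, 0 ≤ φ a → ∃ b : A, φ b = CFC.sqrt (φ a) := by
    intro a ha
    have hsa : star a = a := hφ (by rw [map_star]; exact ha.isSelfAdjoint.star_eq)
    obtain ⟨S, haS, hS⟩ := halg a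
    let T : NonUnitalStarSubalgebra ℂ A := NonUnitalStarAlgebra.adjoin ℂ {a}
    have hTS : T.toNonUnitalSubalgebra ≤ S := by
      refine NonUnitalAlgebra.adjoin_le ?_
      rintro b (hb | hb)
      · rw [Set.mem_singleton_iff.1 hb]; exact haS
      · rw [Set.mem_star, Set.mem_singleton_iff] at hb
        have : b = a := by rw [← star_star b, hb, hsa]
        rw [this]; exact haS
    have hTS' : T.toNonUnitalSubalgebra.toSubmodule ≤ S.toSubmodule := hTS
    have hS' : FiniteDimensional ℂ S.toSubmodule := hS
    have hT : FiniteDimensional ℂ T.toNonUnitalSubalgebra.toSubmodule :=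
      Submodule.finiteDimensional_of_le hTS'
    let U : NonUnitalStarSubalgebra ℂ B := T.map φ
    have hUeq : (U : Set B) =
        (T.toNonUnitalSubalgebra.toSubmodule.map (φ : A →ₗ[ℂ] B) : Submodule ℂ B) := rfl
    have hclosed : IsClosed (U : Set B) := by
      rw [hUeq]
      exact Submodule.closed_of_finiteDimensional _
    have haU : φ a ∈ U := ⟨a, NonUnitalStarAlgebra.self_mem_adjoin_singleton ℂ a, rfl⟩
    have hmem : cfcₙ Real.sqrt (φ a) ∈ U :=
      cfcₙ_mem (𝕜' := ℂ) (hs := hclosed) Real.sqrt haU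
    rw [← CFC.sqrt_eq_real_sqrt _ ha] at hmem
    obtain ⟨b, -, hb⟩ := hmem
    exact ⟨b, hb⟩
  intro x hx
  obtain ⟨y, hy⟩ := hsqrt x (hpos x hx)
  have hy0 : 0 ≤ φ y := by rw [hy]; exact CFC.sqrt_nonneg _
  obtain ⟨r, hr⟩ := hsqrt y hy0
  have hr0 : 0 ≤ φ r := by rw [hr]; exact CFC.sqrt_nonneg _
  refine ⟨y, ⟨⟨1, fun _ => r, ?_⟩, ?_⟩, ?_, ?_⟩
  · apply hφ
    simp only [Finset.univ_unique, Finset.sum_const, Finset.card_singleton, one_smul]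
    rw [map_mul, map_star, hr0.isSelfAdjoint.star_eq, hr, CFC.sqrt_mul_sqrt_self _ hy0]
  · apply hφ
    rw [map_mul, hy, CFC.sqrt_mul_sqrt_self _ (hpos x hx)]
  · intro z hz hzx
    apply hφ
    rw [hy]
    exact (CFC.sqrt_unique (by rw [← map_mul, hzx]) (hpos z hz)).symm
  · intro s hs
    have h1 : s * x = x * s := hs x rfl
    have h2 : Commute (φ x) (φ s) := by
      rw [commute_iff_eq, ← map_mul, ← map_mul, h1]
    have h3 : Commute (CFC.sqrt (φ x)) (φ s) := h2.cfcₙ_nnreal _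
    rw [← hy, commute_iff_eq, ← map_mul, ← map_mul] at h3
    exact hφ h3

section CompletionConstruction

set_option linter.unusedSectionVars false

open UniformSpace UniformSpace.Completion

variable (A : Type*) [NonUnitalNormedRing A] [StarRing A] [CStarRing A] [NormedSpace ℂ A]
  [SMulCommClass ℂ A A] [IsScalarTower ℂ A A] [StarModule ℂ A]

/-- Multiplication on the completion. -/
@[reducible] noncomputable def complMul : Mul (Completion A) :=
  ⟨Function.curry <| (isDenseInducing_coe.prodMap isDenseInducing_coe).extend
    ((↑) ∘ Function.uncurry (· * ·))⟩

attribute [local instance] complMul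

theorem compl_coe_mul (a b : A) : ((a * b : A) : Completion A) = a * b :=
  ((isDenseInducing_coe.prodMap isDenseInducing_coe).extend_eq
      ((continuous_coe A).comp (@continuous_mul A _ _ _)) (a, b)).symm

theorem compl_continuousMul : ContinuousMul (Completion A) where
  continuous_mul := by
    let m := (AddMonoidHom.mul : A →+ A →+ A).compr₂ toCompl
    have : Continuous fun p : A × A => m p.1 p.2 := (continuous_coe A).comp continuous_mul
    have di : IsDenseInducing (toCompl : A → Completion A) := isDenseInducing_coe
    exact (di.extend_Z_bilin di this :)

attribute [local instance] compl_continuousMul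

/-- The star operation on the completion. -/
@[reducible] noncomputable def complStar : Star (Completion A) := ⟨Completion.map star⟩

attribute [local instance] complStar

theorem uniformContinuous_star_aux : UniformContinuous (star : A → A) :=
  (Isometry.of_dist_eq (f := (star : A → A)) fun a b => by
    rw [dist_eq_norm, dist_eq_norm, ← star_sub, norm_star]).uniformContinuous

theorem compl_coe_star (a : A) : ((star a : A) : Completion A) = star (a : Completion A) :=
  (Completion.map_coe (uniformContinuous_star_aux A) a).symm

theorem compl_continuousStar : ContinuousStar (Completion A) :=
  ⟨Completion.continuous_map⟩

attribute [local instance] compl_continuousStar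

/-- The completion is a non-unital normed ring. -/
@[reducible] noncomputable def complRing : NonUnitalNormedRing (Completion A) :=
  { (inferInstance : NormedAddCommGroup (Completion A)), complMul A with
    zero_mul a :=
      Completion.induction_on a (isClosed_eq (by fun_prop) continuous_const)
        fun a => by rw [← coe_zero, ← compl_coe_mul, zero_mul]
    mul_zero a :=
      Completion.induction_on a (isClosed_eq (by fun_prop) continuous_const)
        fun a ↦ by rw [← coe_zero, ← compl_coe_mul, mul_zero]
    mul_assoc a b c :=
      Completion.induction_on₃ a b c
        (isClosed_eq (by fun_prop) (by fun_prop))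
        fun a b c => by simp only [← compl_coe_mul, mul_assoc]
    left_distrib a b c :=
      Completion.induction_on₃ a b c
        (isClosed_eq (by fun_prop) (by fun_prop))
        fun a b c => by simp only [← coe_add, ← compl_coe_mul, mul_add]
    right_distrib a b c :=
      Completion.induction_on₃ a b c
        (isClosed_eq (by fun_prop) (by fun_prop))
        fun a b c => by simp only [← coe_add, ← compl_coe_mul, add_mul]
    norm_mul_le x y := by
      induction x, y using induction_on₂ with
      | hp => apply isClosed_le <;> fun_prop
      | ih x y => simpa only [← compl_coe_mul, norm_coe] using norm_mul_le x y }

theorem compl_star_star (a : Completion A) : star (star a) = a :=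
  Completion.induction_on a (isClosed_eq (by fun_prop) continuous_id)
    fun a => by simp only [← compl_coe_star, star_star]

theorem compl_star_mul (a b : Completion A) : star (a * b) = star b * star a :=
  Completion.induction_on₂ a b (isClosed_eq (by fun_prop) (by fun_prop))
    fun a b => by simp only [← compl_coe_star, ← compl_coe_mul, star_mul]

theorem compl_star_add (a b : Completion A) : star (a + b) = star a + star b :=
  Completion.induction_on₂ a b (isClosed_eq (by fun_prop) (by fun_prop))
    fun a b => by simp only [← compl_coe_star, ← coe_add, star_add]

theorem compl_norm (x : Completion A) : ‖x‖ * ‖x‖ ≤ ‖star x * x‖ := by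
  induction x using Completion.induction_on with
  | hp => apply isClosed_le <;> fun_prop
  | ih x => simpa only [← compl_coe_mul, ← compl_coe_star, norm_coe] using
      CStarRing.norm_mul_self_le x

theorem compl_continuous_smul (c : ℂ) : Continuous fun a : Completion A => c • a :=
  (Completion.uniformContinuous_map (f := fun a : A => c • a)).continuous

theorem compl_smul_mul (c : ℂ) (a b : Completion A) : (c • a) * b = c • (a * b) :=
  Completion.induction_on₂ a b (isClosed_eq
    (((compl_continuous_smul A c).comp continuous_fst).mul continuous_snd)
    ((compl_continuous_smul A c).comp (continuous_fst.mul continuous_snd)))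
    fun a b => by simp only [← coe_smul, ← compl_coe_mul, smul_mul_assoc]

theorem compl_mul_smul (c : ℂ) (a b : Completion A) : c • (a * b) = a * (c • b) :=
  Completion.induction_on₂ a b (isClosed_eq
    ((compl_continuous_smul A c).comp (continuous_fst.mul continuous_snd))
    (continuous_fst.mul ((compl_continuous_smul A c).comp continuous_snd)))
    fun a b => by simp only [← coe_smul, ← compl_coe_mul, mul_smul_comm]

theorem compl_star_smul (c : ℂ) (a : Completion A) : star (c • a) = star c • star a :=
  Completion.induction_on a (isClosed_eq
    (compl_continuous_smul A c).star
    ((compl_continuous_smul A (star c)).comp continuous_star))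
    fun a => by simp only [← coe_smul, ← compl_coe_star, star_smul]

/-- The completion is a C*-algebra. -/
@[reducible] noncomputable def complCStar : NonUnitalCStarAlgebra (Completion A) :=
  { complRing A, complStar A, (inferInstance : NormedSpace ℂ (Completion A)) with
    star_involutive := compl_star_star A
    star_mul := compl_star_mul A
    star_add := compl_star_add A
    complete := (Completion.completeSpace A).complete
    norm_mul_self_le := compl_norm A
    smul_assoc := compl_smul_mul A
    smul_comm := compl_mul_smul A
    star_smul := compl_star_smul A }

theorem upsr_of_normed (halg : IsAlgebraicAlgebra A) :
    ∀ x : A, IsPositiveElem x →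
      ∃ y : A, (IsPositiveElem y ∧ y * y = x) ∧
        (∀ z : A, IsPositiveElem z → z * z = x → z = y) ∧
        y ∈ commutant (commutant {x}) := by
  letI := complCStar A
  let φ : A →⋆ₙₐ[ℂ] Completion A :=
    { toFun := fun a => (a : Completion A)
      map_smul' := fun c a => coe_smul c a
      map_zero' := coe_zero
      map_add' := fun a b => coe_add a b
      map_mul' := fun a b => compl_coe_mul A a b
      map_star' := fun a => compl_coe_star A a }
  exact upsr_of_embedding halg φ (coe_injective A)

end CompletionConstruction

/-- An algebraic complex `*`-algebra with a pre-C*-norm satisfies the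
(UPSR)-axiom: every positive element has a unique positive square root, which moreover
lies in the bicommutant of `{x}`. -/
theorem upsr_axiom_of_algebraic_preCstarNorm (A : Type*) [NonUnitalRing A] [Module ℂ A]
    [SMulCommClass ℂ A A] [IsScalarTower ℂ A A] [StarRing A] [StarModule ℂ A]
    (halg : IsAlgebraicAlgebra A) (hnorm : HasPreCstarNorm A) :
    ∀ x : A, IsPositiveElem x →
      ∃ y : A, (IsPositiveElem y ∧ y * y = x) ∧
        (∀ z : A, IsPositiveElem z → z * z = x → z = y) ∧
        y ∈ commutant (commutant {x}) := by
  obtain ⟨σ, h0, hsmul, hadd, hmul, hstar⟩ := hnorm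
  have hneg : ∀ a, σ (-a) = σ a := fun a => by
    have := hsmul (-1) a
    simpa using this
  let N : AddGroupNorm A :=
    { toFun := σ
      map_zero' := (h0 0).2 rfl
      add_le' := hadd
      neg' := hneg
      eq_zero_of_map_eq_zero' := fun a ha => (h0 a).1 ha }
  letI : NonUnitalNormedRing A :=
    { ‹NonUnitalRing A›, N.toNormedAddCommGroup with
      norm_mul_le := hmul }
  letI : NormedSpace ℂ A := { ‹Module ℂ A› with norm_smul_le := fun c a => (hsmul c a).le }
  haveI : CStarRing A := ⟨fun {a} => by
    have h : ‖star a * a‖ = ‖a‖ ^ 2 := hstar a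
    rw [h, sq]⟩
  exact upsr_of_normed A halg
end

section
/- Let A be a complex *-algebra that is algebraic and admits a pre-C*-norm. Then A is finite dimensional if and only if every family of pairwise orthogonal nonzero projections in A is finite. -/
namespace OrthProj

open Polynomial

section proper
variable {R : Type*} [Ring R] [StarRing R]

lemma sa_nilp (hp : ∀ a : R, star a * a = 0 → a = 0) (k : R) (hk : star k = k) :
    ∀ n : ℕ, k ^ (2 ^ n) = 0 → k = 0 := by
  intro n
  induction n with
  | zero => intro h; simpa using h
  | succ n ih =>
    intro h
    apply ih
    apply hp
    rw [star_pow, hk, ← pow_add]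
    rw [← h]; congr 1; ring

lemma normal_nilp (hp : ∀ a : R, star a * a = 0 → a = 0) (x : R)
    (hx : star x * x = x * star x) (n : ℕ) (h : x ^ n = 0) : x = 0 := by
  apply hp
  apply sa_nilp hp _ (by simp) n
  have hc : Commute (star x) x := hx
  have h1 : (star x * x) ^ n = 0 := by rw [hc.mul_pow, h, mul_zero]
  exact pow_eq_zero_of_le (Nat.lt_two_pow_self).le h1

lemma normal_idem (hp : ∀ a : R, star a * a = 0 → a = 0) (q : R)
    (hx : star q * q = q * star q) (hq : q * q = q) : star q = q := by
  have hs : star q * star q = star q := by rw [← star_mul, hq]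
  have h1 : q - star q * q = 0 := by
    apply hp
    have e1 : star q * (star q * q) = star q * q := by rw [← mul_assoc, hs]
    have e2 : (star q * q) * q = star q * q := by rw [mul_assoc, hq]
    have e3 : (star q * q) * (star q * q) = star q * q := by
      rw [mul_assoc, hx, ← mul_assoc q q, hq, ← hx, e1]
    simp only [star_sub, star_mul, star_star, mul_sub, sub_mul, e1, e2, e3, sub_self]
  have h2 : q = star q * q := sub_eq_zero.mp h1
  rw [h2]; simp
end proper

set_option linter.unusedSectionVars false

variable {A : Type*} [NonUnitalRing A]
    [Module ℂ A] [SMulCommClass ℂ A A] [IsScalarTower ℂ A A] [StarRing A] [StarModule ℂ A]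

lemma unit_proper (hp : ∀ a : A, star a * a = 0 → a = 0) (u : Unitization ℂ A)
    (h : star u * u = 0) : u = 0 := by
  have h1 := congrArg (fun z : Unitization ℂ A => z.fst) h
  simp at h1
  have h2 : u = (u.snd : Unitization ℂ A) := by
    ext <;> simp [h1]
  rw [h2] at h ⊢
  rw [← Unitization.inr_star, ← Unitization.inr_mul] at h
  have := hp _ (Unitization.inr_injective (h.trans (Unitization.inr_zero ℂ).symm))
  rw [this]; simp

lemma exists_poly (halg : IsAlgebraicAlgebra A) (h : A) :
    ∃ P : ℂ[X], P ≠ 0 ∧ aeval (h : Unitization ℂ A) P = 0 := by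
  obtain ⟨S, hS, hfd⟩ := halg h
  let W : Submodule ℂ (Unitization ℂ A) := S.toSubmodule.map (Unitization.inrHom ℂ ℂ A)
  have : FiniteDimensional ℂ S.toSubmodule := hfd
  have hW : FiniteDimensional ℂ W := inferInstance
  let φ : ℂ[X] →ₗ[ℂ] Unitization ℂ A :=
    (aeval (h : Unitization ℂ A)).toLinearMap ∘ₗ LinearMap.mulLeft ℂ X
  have hpow : ∀ n : ℕ, (h : Unitization ℂ A) ^ (n + 1) ∈ W := by
    intro n
    induction n with
    | zero => exact ⟨h, hS, by simp⟩
    | succ n ih =>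
      obtain ⟨y, hy, hy'⟩ := ih
      refine ⟨y * h, S.mul_mem hy hS, ?_⟩
      rw [pow_succ, ← hy']
      simp
  have hφ : ∀ p, φ p ∈ W := by
    intro p
    induction p using Polynomial.induction_on' with
    | add p q hp hq => rw [map_add]; exact W.add_mem hp hq
    | monomial n a =>
      have : φ (monomial n a) = a • (h : Unitization ℂ A) ^ (n + 1) := by
        simp only [φ, LinearMap.comp_apply, LinearMap.mulLeft_apply, AlgHom.toLinearMap_apply,
          X_mul_monomial, aeval_monomial, Algebra.smul_def]
      rw [this]
      exact W.smul_mem _ (hpow n)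
  by_contra hcon
  push Not at hcon
  have hinj : Function.Injective (φ.codRestrict W hφ) := by
    rw [← LinearMap.ker_eq_bot, LinearMap.ker_eq_bot']
    intro p hp
    by_contra hp0
    exact hcon (X * p) (mul_ne_zero X_ne_zero hp0) (congrArg Subtype.val hp)
  have hf : FiniteDimensional ℂ ℂ[X] := FiniteDimensional.of_injective _ hinj
  exact Polynomial.not_finite hf

lemma spec (halg : IsAlgebraicAlgebra A) (hp : ∀ a : A, star a * a = 0 → a = 0)
    (h : A) (hh : star h = h) :
    h ∈ Submodule.span ℂ {p : A | star p = p ∧ p * p = p ∧ ∃ y, p = h * y} := by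
  classical
  set u : Unitization ℂ A := (h : Unitization ℂ A) with hu
  have hus : star u = u := by rw [hu, ← Unitization.inr_star, hh]
  have hpu := unit_proper hp
  have hstar : ∀ P : ℂ[X], ∃ Q : ℂ[X], star (aeval u P) = aeval u Q := by
    intro P
    induction P using Polynomial.induction_on' with
    | add p q hp hq =>
      obtain ⟨a, ha⟩ := hp
      obtain ⟨b, hb⟩ := hq
      exact ⟨a + b, by simp [ha, hb]⟩
    | monomial n a =>
      refine ⟨monomial n (star a), ?_⟩
      rw [aeval_monomial, aeval_monomial, ← Algebra.smul_def, ← Algebra.smul_def, star_smul,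
        star_pow, hus]
  have hnorm : ∀ P : ℂ[X], star (aeval u P) * aeval u P = aeval u P * star (aeval u P) := by
    intro P
    obtain ⟨Q, hQ⟩ := hstar P
    rw [hQ, ← map_mul, ← map_mul, mul_comm]
  obtain ⟨P, hP0, hPu⟩ := exists_poly halg h
  set s := P.roots.toFinset with hs
  have hnod : aeval u (Lagrange.nodal s id) = 0 := by
    apply normal_nilp hpu _ (hnorm _) P.natDegree
    rw [← map_pow]
    have hdvd : P ∣ (Lagrange.nodal s id) ^ P.natDegree := by
      have hsplit := IsAlgClosed.splits P
      refine hsplit.dvd_of_roots_le_roots hP0 ?_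
      have hr : (Lagrange.nodal s (id : ℂ → ℂ)).roots = s.val := by
        rw [Lagrange.nodal_eq]
        exact roots_prod_X_sub_C s
      rw [roots_pow, hr, Multiset.le_iff_count]
      intro a
      rw [Multiset.count_nsmul]
      by_cases ha : a ∈ s
      · have h1 : 1 ≤ s.val.count a := Multiset.one_le_count_iff_mem.mpr ha
        have h2 : P.roots.count a ≤ P.natDegree :=
          (Multiset.count_le_card _ _).trans (card_roots' P)
        nlinarith
      · have : a ∉ P.roots := fun h => ha (Multiset.mem_toFinset.mpr h)
        rw [Multiset.count_eq_zero_of_notMem this]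
        exact Nat.zero_le _
    obtain ⟨R, hR⟩ := hdvd
    rw [hR, map_mul, hPu, zero_mul]
  let q : ℂ → Unitization ℂ A := fun i => aeval u (Lagrange.basis s id i)
  have hne : s.Nonempty := by
    rw [Finset.nonempty_iff_ne_empty]
    intro h0
    rw [h0, Lagrange.nodal_empty, map_one] at hnod
    exact one_ne_zero hnod
  have hsum : ∑ i ∈ s, q i = 1 := by
    simp only [q]
    rw [← map_sum, Lagrange.sum_basis Function.injective_id.injOn hne, map_one]
  have heig : ∀ i ∈ s, u * q i = i • q i := by
    intro i hi
    have h1 : aeval u ((X - C i) * Lagrange.basis s id i) = 0 := by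
      have : Lagrange.nodal s id ∣ (X - C i) * Lagrange.basis s id i := by
        rw [Lagrange.nodal_eq_mul_nodal_erase hi]
        apply mul_dvd_mul (by simp)
        rw [Lagrange.basis_eq_prod_sub_inv_mul_nodal_div hi,
          Lagrange.nodal_erase_eq_nodal_div hi]
        exact Dvd.intro_left _ rfl
      obtain ⟨R, hR⟩ := this
      rw [hR, map_mul, hnod, zero_mul]
    rw [map_mul, map_sub, aeval_X, aeval_C, sub_mul, sub_eq_zero, ← Algebra.smul_def] at h1
    exact h1
  have hcomm : ∀ i j, q i * q j = q j * q i := by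
    intro i j
    simp only [q]
    rw [← map_mul, ← map_mul, mul_comm]
  have horth : ∀ i ∈ s, ∀ j ∈ s, i ≠ j → q i * q j = 0 := by
    intro i hi j hj hij
    have h1 : i • (q i * q j) = j • (q i * q j) := by
      rw [← smul_mul_assoc, ← heig i hi, mul_assoc, hcomm i j, ← mul_assoc, heig j hj,
        smul_mul_assoc]
    rw [← sub_eq_zero, ← sub_smul] at h1
    exact (smul_eq_zero.mp h1).resolve_left (sub_ne_zero.mpr hij)
  have hidem : ∀ i ∈ s, q i * q i = q i := by
    intro i hi
    have h1 : q i * ∑ j ∈ s, q j = q i := by rw [hsum, mul_one]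
    rw [Finset.mul_sum, Finset.sum_eq_single i] at h1
    · exact h1
    · intro j hj hji; exact horth i hi j hj hji.symm
    · intro h; exact absurd hi h
  have hsa : ∀ i ∈ s, star (q i) = q i := fun i hi =>
    normal_idem hpu _ (hnorm _) (hidem i hi)
  have hdec : h = ∑ i ∈ s, i • (q i).snd := by
    have h1 : u = ∑ i ∈ s, i • q i := by
      rw [← Finset.sum_congr rfl heig, ← Finset.mul_sum, hsum, mul_one]
    have h2 := congrArg (Unitization.sndHom ℂ ℂ A) h1
    rw [map_sum] at h2
    simpa [hu] using h2
  have : ∑ i ∈ s, i • (q i).snd ∈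
      Submodule.span ℂ {p : A | star p = p ∧ p * p = p ∧ ∃ y, p = h * y} := by
    refine Submodule.sum_mem _ fun i hi => ?_
    by_cases hi0 : i = 0
    · rw [hi0, zero_smul]; exact Submodule.zero_mem _
    refine Submodule.smul_mem _ _ (Submodule.subset_span ?_)
    have hfst : (q i).fst = 0 := by
      have := congrArg (fun z : Unitization ℂ A => z.fst) (heig i hi)
      simp [hu, hi0] at this
      exact this
    have hqi : q i = ((q i).snd : Unitization ℂ A) := by ext <;> simp [hfst]
    have a1 := hsa i hi
    have a2 := hidem i hi
    have a3 := heig i hi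
    rw [hqi] at a1 a2 a3
    rw [← Unitization.inr_star] at a1
    rw [← Unitization.inr_mul] at a2
    rw [hu, ← Unitization.inr_mul, ← Unitization.inr_smul] at a3
    refine ⟨Unitization.inr_injective a1, Unitization.inr_injective a2, i⁻¹ • (q i).snd, ?_⟩
    rw [mul_smul_comm, Unitization.inr_injective a3, smul_smul, inv_mul_cancel₀ hi0, one_smul]
  rwa [← hdec] at this

/-- projections -/
def Proj (e : A) : Prop := star e = e ∧ e * e = e

/-- minimal projections -/
def MinProj (e : A) : Prop := e ≠ 0 ∧ Proj e ∧ ∀ q : A, Proj q → e * q = q → q = 0 ∨ q = e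

lemma proj_swap {e q : A} (he : star e = e) (hq : star q = q) (h : e * q = q) : q * e = q := by
  have := congrArg star h
  rwa [star_mul, he, hq] at this

lemma exists_proj (halg : IsAlgebraicAlgebra A) (hp : ∀ a : A, star a * a = 0 → a = 0)
    (a : A) (ha : a ≠ 0) : ∃ f : A, f ≠ 0 ∧ Proj f ∧ ∃ y, f = a * y := by
  have h0 : a * star a ≠ 0 := by
    intro h
    apply ha
    have := hp (star a) (by rwa [star_star])
    simpa using this
  by_contra hcon
  push Not at hcon
  have h1 := spec halg hp (a * star a) (by simp)
  apply h0
  have : Submodule.span ℂ {p : A | star p = p ∧ p * p = p ∧ ∃ y, p = a * star a * y} ≤ ⊥ := by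
    rw [Submodule.span_le]
    rintro p ⟨p1, p2, y, hy⟩
    by_contra hne
    exact hcon p hne ⟨p1, p2⟩ (star a * y) (by rw [hy, mul_assoc])
  exact (Submodule.mem_bot ℂ).mp (this h1)

lemma min_sa (halg : IsAlgebraicAlgebra A) (hp : ∀ a : A, star a * a = 0 → a = 0)
    {e : A} (he : MinProj e) (h : A) (hs : star h = h) (heh : e * h = h) :
    h ∈ Submodule.span ℂ {e} := by
  have h1 := spec halg hp h hs
  refine (Submodule.span_le.mpr ?_) h1
  rintro p ⟨p1, p2, y, hy⟩
  rcases he.2.2 p ⟨p1, p2⟩ (by rw [hy, ← mul_assoc, heh]) with h | h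
  · rw [h]; exact Submodule.zero_mem _
  · rw [h]; exact Submodule.mem_span_singleton_self e

lemma min_corner (halg : IsAlgebraicAlgebra A) (hp : ∀ a : A, star a * a = 0 → a = 0)
    {e : A} (he : MinProj e) (a : A) (h1 : e * a = a) (h2 : a * e = a) :
    ∃ c : ℂ, a = c • e := by
  have es := he.2.1.1
  have h3 : e * star a = star a := by
    have := congrArg star h2
    rwa [star_mul, es] at this
  have m1 := min_sa halg hp he (a + star a) (by simp [add_comm]) (by rw [mul_add, h1, h3])
  have m2 := min_sa halg hp he (Complex.I • (a - star a))
    (by simp [star_smul, ← smul_neg]) (by rw [mul_smul_comm, mul_sub, h1, h3])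
  have : a = (1 / 2 : ℂ) • (a + star a) + (-Complex.I / 2) • (Complex.I • (a - star a)) := by
    rw [smul_smul]
    have : -Complex.I / 2 * Complex.I = 1 / 2 := by
      linear_combination (-1 / 2) * Complex.I_mul_I
    rw [this]
    module
  have m3 : a ∈ Submodule.span ℂ {e} := by
    rw [this]
    exact Submodule.add_mem _ (Submodule.smul_mem _ _ m1) (Submodule.smul_mem _ _ m2)
  obtain ⟨c, hc⟩ := Submodule.mem_span_singleton.mp m3
  exact ⟨c, hc.symm⟩

lemma min_pair (halg : IsAlgebraicAlgebra A) (hp : ∀ a : A, star a * a = 0 → a = 0)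
    {e f : A} (he : MinProj e) (hf : MinProj f) :
    ∃ v : A, ∀ x : A, ∃ c : ℂ, e * x * f = c • v := by
  by_cases hz : ∀ x : A, e * x * f = 0
  · exact ⟨0, fun x => ⟨0, by simp [hz x]⟩⟩
  push Not at hz
  obtain ⟨x₀, hx₀⟩ := hz
  set x := e * x₀ * f with hx
  have ee := he.2.1.2
  have ff := hf.2.1.2
  have es := he.2.1.1
  have fs := hf.2.1.1
  have ex : e * x = x := by rw [hx, ← mul_assoc, ← mul_assoc, ee]
  have xf : x * f = x := by rw [hx, mul_assoc, ff]
  have fx : f * star x = star x := by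
    have := congrArg star xf
    rwa [star_mul, fs] at this
  have xe : star x * e = star x := by
    have := congrArg star ex
    rwa [star_mul, es] at this
  obtain ⟨c, hc⟩ := min_corner halg hp hf (star x * x) (by rw [← mul_assoc, fx])
    (by rw [mul_assoc, xf])
  have hc0 : c ≠ 0 := by
    rintro rfl
    rw [zero_smul] at hc
    exact hx₀ (hp _ hc)
  refine ⟨x, fun z => ?_⟩
  obtain ⟨d, hd⟩ := min_corner halg hp he ((e * z * f) * star x)
    (by simp only [← mul_assoc, ee]) (by rw [mul_assoc, xe])
  refine ⟨c⁻¹ * d, ?_⟩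
  have h1 : (e * z * f) * (star x * x) = d • x := by
    rw [← mul_assoc, hd, smul_mul_assoc, ex]
  rw [hc, mul_smul_comm, mul_assoc, ff] at h1
  rw [mul_smul, ← h1, smul_smul, inv_mul_cancel₀ hc0, one_smul]

/-- The finiteness hypothesis. -/
def FinOrth (A : Type*) [NonUnitalRing A] [Star A] : Prop :=
  ∀ S : Set A, (∀ e ∈ S, e ≠ 0 ∧ star e = e ∧ e * e = e) →
        (∀ e ∈ S, ∀ f ∈ S, e ≠ f → e * f = 0) → S.Finite

lemma exists_min (hfin : FinOrth A) (p : A) (hp0 : p ≠ 0) (hp : Proj p) :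
    ∃ e : A, MinProj e ∧ p * e = e := by
  let r : {q : A // Proj q} → {q : A // Proj q} → Prop :=
    fun a b => b.1 * a.1 = a.1 ∧ a.1 ≠ b.1
  have hwf : WellFounded r := by
    rw [wellFounded_iff_isEmpty_descending_chain]
    refine ⟨fun ⟨g, hg⟩ => ?_⟩
    have hle : ∀ m k, (g m).1 * (g (m + k)).1 = (g (m + k)).1 := by
      intro m k
      induction k with
      | zero => exact (g m).2.2
      | succ k ih =>
        rw [← add_assoc, ← (hg (m + k)).1, ← mul_assoc, ih]
    have hle1 : ∀ m n, m ≤ n → (g m).1 * (g n).1 = (g n).1 := by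
      intro m n hmn
      obtain ⟨k, rfl⟩ := Nat.exists_eq_add_of_le hmn
      exact hle m k
    have hle2 : ∀ m n, m ≤ n → (g n).1 * (g m).1 = (g n).1 := fun m n hmn =>
      proj_swap (g m).2.1 (g n).2.1 (hle1 m n hmn)
    let d : ℕ → A := fun n => (g n).1 - (g (n + 1)).1
    have d0 : ∀ n, d n ≠ 0 := fun n h => (hg n).2 (sub_eq_zero.mp h).symm
    have ds : ∀ n, star (d n) = d n := fun n => by
      simp only [d, star_sub, (g n).2.1, (g (n + 1)).2.1]
    have dd : ∀ n, d n * d n = d n := fun n => by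
      simp only [d, mul_sub, sub_mul, (g n).2.2, (g (n + 1)).2.2, hle1 n (n + 1) (by omega),
        hle2 n (n + 1) (by omega)]
      abel
    have dlt : ∀ m n, m < n → d m * d n = 0 := fun m n hmn => by
      simp only [d, mul_sub, sub_mul, hle1 m n (by omega), hle1 (m + 1) n (by omega),
        hle1 m (n + 1) (by omega), hle1 (m + 1) (n + 1) (by omega)]
      abel
    have dor : ∀ m n, m ≠ n → d m * d n = 0 := fun m n hmn => by
      rcases lt_or_gt_of_ne hmn with h | h
      · exact dlt m n h
      · have := congrArg star (dlt n m h)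
        rwa [star_mul, ds, ds, star_zero] at this
    have dinj : Function.Injective d := by
      intro m n hmn
      by_contra hne
      have := dor m n hne
      rw [← hmn, dd] at this
      exact d0 m this
    refine Set.infinite_range_of_injective dinj (hfin _ ?_ ?_)
    · rintro _ ⟨n, rfl⟩
      exact ⟨d0 n, ds n, dd n⟩
    · rintro _ ⟨m, rfl⟩ _ ⟨n, rfl⟩ hne
      exact dor m n (fun h => hne (by rw [h]))
  obtain ⟨e, ⟨he0, hpe⟩, hmin⟩ := hwf.has_min {q | q.1 ≠ 0 ∧ p * q.1 = q.1} ⟨⟨p, hp⟩, hp0, hp.2⟩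
  refine ⟨e.1, ⟨he0, e.2, fun q hq heq => ?_⟩, hpe⟩
  by_contra hcon
  push Not at hcon
  refine hmin ⟨q, hq⟩ ⟨hcon.1, ?_⟩ ⟨heq, hcon.2⟩
  change p * q = q
  rw [← heq, ← mul_assoc, hpe]

lemma exists_maxfam (hfin : FinOrth A) : ∃ S : Finset A, (∀ e ∈ S, MinProj e) ∧
    (∀ e ∈ S, ∀ f ∈ S, e ≠ f → e * f = 0) ∧
    ∀ q : A, MinProj q → (∀ e ∈ S, e * q = 0) → False := by
  obtain ⟨M, hM⟩ := zorn_subset {S : Set A | (∀ e ∈ S, MinProj e) ∧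
    (∀ e ∈ S, ∀ f ∈ S, e ≠ f → e * f = 0)} (by
    intro c hc hch
    refine ⟨⋃₀ c, ⟨?_, ?_⟩, fun s hs => Set.subset_sUnion_of_mem hs⟩
    · rintro e ⟨s, hs, hes⟩
      exact (hc hs).1 e hes
    · rintro e ⟨s, hs, hes⟩ f ⟨t, ht, hft⟩ hne
      rcases hch.total hs ht with h | h
      · exact (hc ht).2 e (h hes) f hft hne
      · exact (hc hs).2 e hes f (h hft) hne)
  have hMf : M.Finite := hfin M (fun e he => ⟨(hM.prop.1 e he).1, (hM.prop.1 e he).2.1⟩) hM.prop.2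
  refine ⟨hMf.toFinset, by simpa using hM.prop.1, by simpa using hM.prop.2, ?_⟩
  intro q hq hqe
  have hqe' : ∀ e ∈ M, e * q = 0 := by simpa using hqe
  have hqe2 : ∀ e ∈ M, q * e = 0 := fun e he => by
    have := congrArg star (hqe' e he)
    rwa [star_mul, hq.2.1.1, (hM.prop.1 e he).2.1.1, star_zero] at this
  have hin : insert q M ∈ {S : Set A | (∀ e ∈ S, MinProj e) ∧
      (∀ e ∈ S, ∀ f ∈ S, e ≠ f → e * f = 0)} := by
    refine ⟨?_, ?_⟩
    · rintro e (rfl | he)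
      · exact hq
      · exact hM.prop.1 e he
    · rintro e (rfl | he) f (rfl | hf) hne
      · exact absurd rfl hne
      · exact hqe2 f hf
      · exact hqe' e he
      · exact hM.prop.2 e he f hf hne
  have hqM : q ∈ M := hM.le_of_ge hin (Set.subset_insert q M) (Set.mem_insert q M)
  have := hqe' q hqM
  rw [hq.2.1.2] at this
  exact hq.1 this

lemma finite_of (halg : IsAlgebraicAlgebra A) (hp : ∀ a : A, star a * a = 0 → a = 0)
    (hfin : FinOrth A) : FiniteDimensional ℂ A := by
  classical
  obtain ⟨S, hS, horth, hmax⟩ := exists_maxfam hfin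
  have key : ∀ a : A, (∀ e ∈ S, e * a = 0) → a = 0 := by
    intro a ha
    by_contra ha0
    obtain ⟨f, hf0, hf, y, hy⟩ := exists_proj halg hp a ha0
    obtain ⟨q, hq, hfq⟩ := exists_min hfin f hf0 hf
    refine hmax q hq fun e he => ?_
    rw [← hfq, hy, ← mul_assoc, ← mul_assoc, ha e he, zero_mul, zero_mul]
  have left : ∀ x : A, x = ∑ e ∈ S, e * x := by
    intro x
    rw [← sub_eq_zero]
    apply key
    intro e he
    rw [mul_sub, Finset.mul_sum, Finset.sum_eq_single e]
    · rw [← mul_assoc, (hS e he).2.1.2, sub_self]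
    · intro f hf hne
      rw [← mul_assoc, horth e he f hf hne.symm, zero_mul]
    · intro h; exact absurd he h
  have right : ∀ x : A, x = ∑ f ∈ S, x * f := by
    intro x
    have := congrArg star (left (star x))
    rw [star_star, star_sum] at this
    refine this.trans (Finset.sum_congr rfl fun f hf => ?_)
    rw [star_mul, star_star, (hS f hf).2.1.1]
  have hv : ∀ e f : A, ∃ v : A, e ∈ S → f ∈ S → ∀ x : A, ∃ c : ℂ, e * x * f = c • v := by
    intro e f
    by_cases he : e ∈ S
    · by_cases hf : f ∈ S
      · obtain ⟨v, hv⟩ := min_pair halg hp (hS e he) (hS f hf)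
        exact ⟨v, fun _ _ => hv⟩
      · exact ⟨0, fun _ h => absurd h hf⟩
    · exact ⟨0, fun h => absurd h he⟩
  choose v hv using hv
  refine ⟨⟨(S ×ˢ S).image (fun z => v z.1 z.2), ?_⟩⟩
  rw [eq_top_iff]
  rintro x -
  rw [left x]
  refine Submodule.sum_mem _ fun e he => ?_
  rw [right (e * x)]
  refine Submodule.sum_mem _ fun f hf => ?_
  obtain ⟨c, hc⟩ := hv e f he hf x
  rw [hc]
  refine Submodule.smul_mem _ _ (Submodule.subset_span ?_)
  simp only [Finset.coe_image, Set.mem_image]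
  exact ⟨(e, f), by simp [he, hf], rfl⟩

lemma finOrth_of [FiniteDimensional ℂ A] : FinOrth A := by
  intro S hS horth
  have hli : LinearIndependent ℂ (Subtype.val : S → A) := by
    rw [linearIndependent_iff']
    intro s g hg i hi
    have h1 : i.1 * ∑ j ∈ s, g j • j.1 = g i • i.1 := by
      rw [Finset.mul_sum, Finset.sum_eq_single i]
      · rw [mul_smul_comm, (hS _ i.2).2.2]
      · intro j _ hne
        rw [mul_smul_comm, horth _ i.2 _ j.2 (fun h => hne (Subtype.ext h.symm)), smul_zero]
      · intro h; exact absurd hi h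
    rw [hg, mul_zero] at h1
    exact (smul_eq_zero.mp h1.symm).resolve_right (hS _ i.2).1
  exact hli.setFinite

end OrthProj

/-- An algebraic complex `*`-algebra with a pre-C*-norm is finite
dimensional iff every family of pairwise orthogonal nonzero projections is finite. -/
theorem finiteDimensional_iff_orthogonal_projections_finite (A : Type*) [NonUnitalRing A]
    [Module ℂ A] [SMulCommClass ℂ A A] [IsScalarTower ℂ A A] [StarRing A] [StarModule ℂ A]
    (halg : IsAlgebraicAlgebra A) (hnorm : HasPreCstarNorm A) :
    FiniteDimensional ℂ A ↔
      ∀ S : Set A, (∀ e ∈ S, e ≠ 0 ∧ star e = e ∧ e * e = e) →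
        (∀ e ∈ S, ∀ f ∈ S, e ≠ f → e * f = 0) → S.Finite := by
  have hp : ∀ a : A, star a * a = 0 → a = 0 := by
    obtain ⟨σ, h0, -, -, -, hc⟩ := hnorm
    intro a ha
    have h1 := hc a
    rw [ha, (h0 0).mpr rfl] at h1
    exact (h0 a).mp (pow_eq_zero_iff (two_ne_zero)|>.mp h1.symm)
  constructor
  · intro hfd
    exact OrthProj.finOrth_of
  · intro hfin
    exact OrthProj.finite_of halg hp hfin
end

section
/- Let M be a complex *-algebra. The following are equivalent: (i) M is an algebraic Baer *-algebra without Abelian summand; (ii) M is a finite-dimensional Baer *-algebra without Abelian summand. Moreover, if these hold, then M is *-isomorphic to a finite direct product of full complex matrix algebras M_{n_k}(ℂ) with every n_k ≥ 2. -/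
/-- A Baer `*`-ring: the right annihilator of every nonempty subset is the principal
right ideal generated by a projection. -/
def IsBaerStarRing (A : Type*) [Mul A] [Zero A] [Star A] : Prop :=
  ∀ S : Set A, S.Nonempty → ∃ f : A, star f = f ∧ f * f = f ∧
    {y : A | ∀ s ∈ S, s * y = 0} = {z : A | ∃ x : A, z = f * x}

/-- `A` has no Abelian summand: the only central projection `e` such that all
projections of the corner `eAe` are central in `eAe` is `e = 0`. -/
def HasNoAbelianSummand (A : Type*) [Mul A] [Zero A] [Star A] : Prop :=
  ∀ e : A, star e = e → e * e = e → (∀ x : A, e * x = x * e) →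
    (∀ p : A, star p = p → p * p = p → e * p * e = p →
      ∀ x : A, p * (e * x * e) = (e * x * e) * p) → e = 0


namespace BaerAux

theorem aeval_eig {A : Type*} [Ring A] [Algebra ℂ A] {a r : A} {μ : ℂ} (h : a * r = μ • r)
    (p : Polynomial ℂ) : Polynomial.aeval a p * r = p.eval μ • r := by
  induction p using Polynomial.induction_on' with
  | add p q hp hq => simp [add_mul, hp, hq, add_smul]
  | monomial n c =>
    have : ∀ n : ℕ, a ^ n * r = μ ^ n • r := by
      intro n
      induction n with
      | zero => simp
      | succ n ih => rw [pow_succ', mul_assoc, ih, mul_smul_comm, h, smul_smul, pow_succ]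
    rw [Polynomial.aeval_monomial, Polynomial.eval_monomial, mul_assoc, this,
      ← Algebra.smul_def, smul_smul]

theorem isIntegral_of {A : Type*} [Ring A] [Algebra ℂ A] (h : IsAlgebraicAlgebra A) (a : A) :
    IsIntegral ℂ a := by
  obtain ⟨S, haS, hfin⟩ := h a
  have hmem : ∀ p : Polynomial ℂ, Polynomial.aeval a (Polynomial.X * p) ∈ S := by
    intro p
    induction p using Polynomial.induction_on' with
    | add p q hp hq => rw [mul_add, map_add]; exact add_mem hp hq
    | monomial n c =>
      have : ∀ n : ℕ, a ^ (n + 1) ∈ S := by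
        intro n
        induction n with
        | zero => simpa using haS
        | succ n ih => rw [pow_succ]; exact mul_mem ih haS
      rw [Polynomial.X_mul_monomial, Polynomial.aeval_monomial, ← Algebra.smul_def]
      exact S.toSubmodule.smul_mem c (this n)
  let L : Polynomial ℂ →ₗ[ℂ] S :=
    { toFun := fun p => ⟨Polynomial.aeval a (Polynomial.X * p), hmem p⟩
      map_add' := fun p q => by ext; simp [mul_add]
      map_smul' := fun c p => by ext; simp }
  have hL : ¬ Function.Injective L := by
    intro hinj
    exact Polynomial.not_finite (R := ℂ) (Module.Finite.of_injective L hinj)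
  rw [← LinearMap.ker_eq_bot, Submodule.eq_bot_iff] at hL
  push Not at hL
  obtain ⟨p, hp, hp0⟩ := hL
  rw [← isAlgebraic_iff_isIntegral]
  refine ⟨Polynomial.X * p, mul_ne_zero Polynomial.X_ne_zero hp0, ?_⟩
  exact congrArg Subtype.val (LinearMap.mem_ker.mp hp)

theorem proper_of {A : Type*} [NonUnitalRing A] [StarRing A] (hB : IsBaerStarRing A) (a : A)
    (h : star a * a = 0) : a = 0 := by
  obtain ⟨f, hf, hff, hS⟩ := hB {star a} ⟨_, rfl⟩
  have h1 : a ∈ {z : A | ∃ x : A, z = f * x} := by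
    rw [← hS]; rintro s rfl; exact h
  obtain ⟨x, hx⟩ := h1
  have h2 : f ∈ {y : A | ∀ s ∈ ({star a} : Set A), s * y = 0} := by
    rw [hS]; exact ⟨f, hff.symm⟩
  have h3 : star a * f = 0 := h2 _ rfl
  have h4 : f * a = a := by rw [hx, ← mul_assoc, hff]
  have h5 : star a = 0 := by rw [← h3]; conv_lhs => rw [← h4, star_mul, hf]
  simpa using h5

theorem spectral {A : Type*} [Ring A] [StarRing A] [Algebra ℂ A] [StarModule ℂ A]
    (hp : ∀ a : A, star a * a = 0 → a = 0) (hi : ∀ a : A, IsIntegral ℂ a)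
    {a : A} (ha : star a = a) (ha0 : a ≠ 0) :
    ∃ (μ : ℝ) (r : A), μ ≠ 0 ∧ star r = r ∧ r * r = r ∧ r ≠ 0 ∧ a * r = (μ : ℂ) • r ∧
      r * a = (μ : ℂ) • r := by
  -- not nilpotent
  have hnil : ∀ n : ℕ, a ^ (n + 1) ≠ 0 := by
    have h2 : ∀ k : ℕ, a ^ (2 ^ k) ≠ 0 := by
      intro k
      induction k with
      | zero => simpa using ha0
      | succ k ih =>
        intro h
        apply ih
        apply hp
        rw [star_pow, ha, ← pow_add, ← two_mul, ← pow_succ', h]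
    intro n h
    apply h2 (n + 1)
    have : n + 1 ≤ 2 ^ (n + 1) := Nat.lt_two_pow_self.le
    rw [← Nat.sub_add_cancel this, pow_add, h, mul_zero]
  have hne : minpoly ℂ a ≠ 0 := minpoly.ne_zero (hi a)
  have hroot : ∃ μ : ℂ, μ ≠ 0 ∧ (minpoly ℂ a).IsRoot μ := by
    by_contra hcon
    push Not at hcon
    have hs := IsAlgClosed.splits (minpoly ℂ a)
    have h1 := hs.eq_prod_roots_of_monic (minpoly.monic (hi a))
    have h2 : (minpoly ℂ a).roots = Multiset.replicate (Multiset.card (minpoly ℂ a).roots) 0 := by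
      rw [Multiset.eq_replicate]
      refine ⟨rfl, fun b hb => ?_⟩
      by_contra hb0
      exact hcon b hb0 (Polynomial.isRoot_of_mem_roots hb)
    rw [h2] at h1
    simp only [Multiset.map_replicate, map_zero, sub_zero, Multiset.prod_replicate] at h1
    have h3 := minpoly.aeval ℂ a
    rw [h1, map_pow, Polynomial.aeval_X] at h3
    apply hnil (Multiset.card (minpoly ℂ a).roots)
    rw [pow_succ, h3, zero_mul]
  obtain ⟨μ, hμ0, hμ⟩ := hroot
  obtain ⟨k, hk⟩ := Polynomial.dvd_iff_isRoot.mpr hμ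
  have hk0 : k ≠ 0 := by rintro rfl; simp at hk; exact hne hk
  set v := Polynomial.aeval a k with hv
  have hv0 : v ≠ 0 := by
    intro h
    have hd := minpoly.degree_le_of_ne_zero ℂ a hk0 h
    have h1 : (minpoly ℂ a).natDegree = 1 + k.natDegree := by
      rw [hk, Polynomial.natDegree_mul (Polynomial.X_sub_C_ne_zero μ) hk0,
        Polynomial.natDegree_X_sub_C]
    have := Polynomial.natDegree_le_natDegree hd
    omega
  have hav : a * v = μ • v := by
    have h1 := minpoly.aeval ℂ a
    rw [hk, map_mul, ← hv] at h1
    simp only [map_sub, Polynomial.aeval_X, Polynomial.aeval_C, sub_mul, sub_eq_zero] at h1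
    rw [h1, Algebra.smul_def]
  have hcom : a * v = v * a := by
    rw [hv]
    have := Polynomial.aeval_X (R := ℂ) a
    conv_lhs => rw [← this]
    conv_rhs => rw [← this]
    simp only [Polynomial.aeval_X]
    rw [show a * Polynomial.aeval a k = Polynomial.aeval a (Polynomial.X * k) by simp, mul_comm]
    simp
  have hcom' : a * star v = star v * a := by
    have := congrArg star hcom
    rw [star_mul, star_mul, ha] at this
    exact this.symm
  set h := star v * v with hh
  have hstar : star h = h := by simp [hh]
  have hh0 : h ≠ 0 := fun h0 => hv0 (hp v h0)
  have hah : a * h = μ • h := by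
    rw [hh, ← mul_assoc, hcom', mul_assoc, hav, mul_smul_comm]
  have hha : h * a = μ • h := by
    rw [← hah, hh, mul_assoc, ← hcom, ← mul_assoc, ← hcom', mul_assoc]
  have hμr : star μ = μ := by
    have := congrArg star hah
    rw [star_mul, star_smul, hstar, ha, hha] at this
    have h2 : (μ - star μ) • h = 0 := by rw [sub_smul, this, sub_self]
    rcases smul_eq_zero.mp h2 with h3 | h3
    · exact (sub_eq_zero.mp h3).symm
    · exact absurd h3 hh0
  have hvh : v * h = k.eval μ • h := aeval_eig hah k
  have hhv : star v * h = star (k.eval μ) • h := by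
    have : Commute h v := by
      have h1 : Commute h a := by rw [Commute, SemiconjBy, hah, hha]
      have h2 : v * h = h * v := by
        rw [hv]
        have : ∀ p : Polynomial ℂ, Polynomial.aeval a p * h = h * Polynomial.aeval a p := by
          intro p
          induction p using Polynomial.induction_on' with
          | add p q hp hq => simp [add_mul, mul_add, hp, hq]
          | monomial n c =>
            rw [Polynomial.aeval_monomial, ← Algebra.smul_def, smul_mul_assoc, mul_smul_comm,
              (h1.pow_right n).eq]
        exact this k
      exact h2.symm
    have h3 := congrArg star hvh
    rw [← this.eq, star_mul, star_smul, hstar] at h3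
    exact h3
  set c : ℂ := star (k.eval μ) * k.eval μ with hc
  have hsq : h * h = c • h := by
    conv_lhs => rw [hh]
    rw [mul_assoc, ← hh, hvh, mul_smul_comm, hhv, smul_smul, mul_comm]
  have hc0 : c ≠ 0 := by
    intro h0
    rw [h0, zero_smul] at hsq
    exact hh0 (hp h (by rw [hstar, hsq]))
  have hcs : star c = c := by simp [hc, mul_comm]
  have hcoe : ((μ.re : ℝ) : ℂ) = μ := Complex.conj_eq_iff_re.mp hμr
  refine ⟨μ.re, c⁻¹ • h, ?_, ?_, ?_, ?_, ?_, ?_⟩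
  · intro h0; apply hμ0; rw [← hcoe, h0]; simp
  · rw [star_smul, hstar, star_inv₀, hcs]
  · rw [smul_mul_smul_comm, hsq, smul_smul, mul_assoc, inv_mul_cancel₀ hc0, mul_one]
  · exact smul_ne_zero (inv_ne_zero hc0) hh0
  · rw [hcoe, mul_smul_comm, hah, smul_comm]
  · rw [hcoe, smul_mul_assoc, hha, smul_comm]

theorem scale {A : Type*} [Ring A] [StarRing A] [Algebra ℂ A] [StarModule ℂ A]
    (hp : ∀ a : A, star a * a = 0 → a = 0) {r y : A} (hr : star r = r) (hrr : r * r = r)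
    (hr0 : r ≠ 0) (hry : r * y = y) (hyr : y * r = 0) {l : ℝ} (hl : l ≠ 0)
    (hyy : y * star y = (l : ℂ) • r) :
    ∃ c : ℂ, (c • y) * star (c • y) = r := by
  have hsr : star y * r = star y := by rw [← hr, ← star_mul, hry]
  have hrs : r * star y = 0 := by rw [← hr, ← star_mul, hyr, star_zero]
  rcases lt_or_gt_of_ne hl with hneg | hpos
  · exfalso
    set t : ℂ := ((Real.sqrt (-l) : ℝ) : ℂ) with ht
    have ht2 : t * t = -(l : ℂ) := by
      rw [ht, ← Complex.ofReal_mul, Real.mul_self_sqrt (by linarith)]; simp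
    have hts : star t = t := Complex.conj_ofReal _
    have ht0 : t ≠ 0 := by
      intro h0; rw [h0] at ht2; simp at ht2; exact hl ht2
    have hz : star (star (y + t • r)) * star (y + t • r) = 0 := by
      rw [star_star, star_add, star_smul, hr, hts, add_mul, mul_add, mul_add, hyy,
        mul_smul_comm, hyr, smul_mul_assoc, hrs, smul_mul_smul_comm, hrr, ht2]
      simp
    have h1 := hp _ hz
    rw [star_eq_zero] at h1
    have h2 : (y + t • r) * r = t • r := by rw [add_mul, hyr, smul_mul_assoc, hrr, zero_add]
    rw [h1, zero_mul] at h2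
    exact smul_ne_zero ht0 hr0 h2.symm
  · set t : ℂ := ((Real.sqrt l : ℝ) : ℂ) with ht
    have ht2 : t * t = (l : ℂ) := by
      rw [ht, ← Complex.ofReal_mul, Real.mul_self_sqrt hpos.le]
    have hts : star t = t := Complex.conj_ofReal _
    have ht0 : t ≠ 0 := by
      intro h0; rw [h0] at ht2; exact hl (by simpa using ht2.symm)
    refine ⟨t⁻¹, ?_⟩
    rw [star_smul, star_inv₀, hts, smul_mul_smul_comm, hyy, smul_smul, ← ht2]
    field_simp
    simp

/-- from `p y q ≠ 0` get a partial isometry -/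
theorem partial_isom {A : Type*} [Ring A] [StarRing A] [Algebra ℂ A] [StarModule ℂ A]
    (hp : ∀ a : A, star a * a = 0 → a = 0) (hi : ∀ a : A, IsIntegral ℂ a)
    {p q y : A} (hps : star p = p) (hpp : p * p = p) (hqs : star q = q) (hqq : q * q = q)
    (hpq : p * q = 0) (hy : p * y * q ≠ 0) :
    ∃ r w : A, star r = r ∧ r * r = r ∧ r ≠ 0 ∧ p * r = r ∧ r * w = w ∧ w * q = w ∧
      w * star w = r := by
  have hqp : q * p = 0 := by rw [← hps, ← hqs, ← star_mul, hpq, star_zero]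
  set x := p * y * q with hx
  have hxx0 : x * star x ≠ 0 := by
    intro h
    have := hp (star x) (by rwa [star_star])
    exact hy (by simpa using this)
  obtain ⟨μ, r, hμ, hrs, hrr, hr0, har, hra⟩ := spectral hp hi (a := x * star x) (by simp) hxx0
  have hpx : p * x = x := by rw [hx, ← mul_assoc, ← mul_assoc, hpp]
  have hxq : x * q = x := by rw [hx, mul_assoc, hqq]
  have hμ' : (μ : ℂ) ≠ 0 := by exact_mod_cast hμ
  have hpr : p * r = r := by
    have h1 : p * ((μ : ℂ) • r) = (μ : ℂ) • r := by
      rw [← har, ← mul_assoc, ← mul_assoc, hpx]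
    rw [mul_smul_comm] at h1
    exact smul_right_injective A hμ' h1
  have hqr : q * r = 0 := by rw [← hpr, ← mul_assoc, hqp, zero_mul]
  obtain ⟨c, hc⟩ := scale hp (r := r) (y := r * x) hrs hrr hr0 (by rw [← mul_assoc, hrr])
    (by rw [mul_assoc, ← hxq, mul_assoc, hqr, mul_zero, mul_zero]) hμ
    (by rw [star_mul, hrs, mul_assoc, ← mul_assoc x, har, mul_smul_comm, hrr])
  refine ⟨r, c • (r * x), hrs, hrr, hr0, hpr, ?_, ?_, hc⟩
  · rw [mul_smul_comm, ← mul_assoc, hrr]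
  · rw [smul_mul_assoc, mul_assoc, hxq]

end BaerAux
namespace BaerAux

theorem sup_fam {A : Type*} [Ring A] [StarRing A] (hB : IsBaerStarRing A) (e r : ℕ → A)
    (hes : ∀ n, star (e n) = e n) (heo : ∀ m n, m ≠ n → e m * e n = 0)
    (hrs : ∀ n, star (r n) = r n) (hrr : ∀ n, r n * r n = r n) (hre : ∀ n, r n * e n = r n) :
    ∃ f : A, star f = f ∧ ∀ n, f * e n = r n := by
  obtain ⟨g, hgs, hgg, hS⟩ := hB (Set.range r) ⟨r 0, 0, rfl⟩
  have hg : ∀ n, r n * g = 0 := by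
    intro n
    have : g ∈ {y : A | ∀ s ∈ Set.range r, s * y = 0} := by rw [hS]; exact ⟨g, hgg.symm⟩
    exact this _ ⟨n, rfl⟩
  have hg2 : ∀ x : A, (∀ n, r n * x = 0) → g * x = x := by
    intro x hx
    have : x ∈ {z : A | ∃ x : A, z = g * x} := by
      rw [← hS]; rintro _ ⟨n, rfl⟩; exact hx n
    obtain ⟨z, rfl⟩ := this
    rw [← mul_assoc, hgg]
  have her : ∀ n, e n * r n = r n := by
    intro n; have := congrArg star (hre n); rwa [star_mul, hes, hrs] at this
  refine ⟨1 - g, by simp [hgs], fun n => ?_⟩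
  have h1 : g * (e n - r n) = e n - r n := by
    apply hg2
    intro m
    by_cases hmn : m = n
    · subst hmn; rw [mul_sub, hre, hrr, sub_self]
    · have h2 : r m * e n = 0 := by rw [← hre, mul_assoc, heo m n hmn, mul_zero]
      rw [mul_sub, h2, ← her n, ← mul_assoc, h2, zero_mul, sub_zero]
  have h2 : g * r n = 0 := by
    have := congrArg star (hg n); rwa [star_mul, hgs, hrs, star_zero] at this
  rw [mul_sub, h2, sub_zero] at h1
  rw [sub_mul, one_mul, h1]; abel

theorem no_seq {A : Type*} [Ring A] [StarRing A] [Algebra ℂ A] [StarModule ℂ A]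
    (hB : IsBaerStarRing A) (hi : ∀ a : A, IsIntegral ℂ a) (p q y : ℕ → A)
    (hps : ∀ n, star (p n) = p n) (hpp : ∀ n, p n * p n = p n)
    (hqs : ∀ n, star (q n) = q n) (hqq : ∀ n, q n * q n = q n)
    (hpq : ∀ n, p n * q n = 0) (hy : ∀ n, p n * y n * q n ≠ 0)
    (ho : ∀ m n, m ≠ n → (p m + q m) * (p n + q n) = 0) : False := by
  have hp := proper_of hB
  choose r w hrs hrr hr0 hpr hrw hwq hww using fun n =>
    partial_isom hp hi (hps n) (hpp n) (hqs n) (hqq n) (hpq n) (hy n)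
  have hqp : ∀ n, q n * p n = 0 := by
    intro n; rw [← hps, ← hqs, ← star_mul, hpq, star_zero]
  have hrp : ∀ n, r n * p n = r n := by
    intro n; have := congrArg star (hpr n); rwa [star_mul, hps, hrs] at this
  have hrq : ∀ n, r n * q n = 0 := by
    intro n; rw [← hrp, mul_assoc, hpq, mul_zero]
  have hqr : ∀ n, q n * r n = 0 := by
    intro n; rw [← hpr, ← mul_assoc, hqp, zero_mul]
  have hwp : ∀ n, w n * p n = 0 := by
    intro n; rw [← hwq, mul_assoc, hqp, mul_zero]
  have hwr : ∀ n, w n * r n = 0 := by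
    intro n; rw [← hwq, mul_assoc, hqr, mul_zero]
  have hrw' : ∀ n, r n * star (w n) = 0 := by
    intro n; have := congrArg star (hwr n); rwa [star_mul, hrs, star_zero] at this
  set a : ℕ → ℝ := fun n => 1 / ((n : ℝ) + 1) with ha
  set b : ℕ → ℝ := fun n => Real.sqrt (1 - a n * a n) with hb
  have ha0 : ∀ n, 0 < a n := fun n => by simp only [ha]; positivity
  have ha1 : ∀ n, a n ≤ 1 := fun n => by
    simp only [ha]; rw [div_le_one (by positivity)]; linarith [Nat.cast_nonneg (α := ℝ) n]
  have hab : ∀ n, a n * a n + b n * b n = 1 := by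
    intro n
    simp only [hb]
    rw [Real.mul_self_sqrt (by nlinarith [ha0 n, ha1 n])]; ring
  set u : ℕ → A := fun n => (a n : ℂ) • r n + (b n : ℂ) • w n with hu
  have hus : ∀ n, star (u n) = (a n : ℂ) • r n + (b n : ℂ) • star (w n) := by
    intro n; simp [hu, hrs]
  have huu : ∀ n, u n * star (u n) = r n := by
    intro n
    rw [hus, hu]
    simp only [add_mul, mul_add, smul_mul_smul_comm, hrr, hwr, hrw', hww, smul_zero, add_zero,
      zero_add]
    rw [← add_smul]
    have : (a n : ℂ) * a n + b n * b n = 1 := by exact_mod_cast hab n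
    rw [this, one_smul]
  have hru : ∀ n, r n * u n = u n := by
    intro n; simp only [hu, mul_add, mul_smul_comm, hrr, hrw]
  have hur : ∀ n, u n * r n = (a n : ℂ) • r n := by
    intro n; simp only [hu, add_mul, smul_mul_assoc, hrr, hwr, smul_zero, add_zero]
  have hru' : ∀ n, r n * star (u n) = (a n : ℂ) • r n := by
    intro n; have := congrArg star (hur n); rw [star_mul, hrs, star_smul, hrs] at this
    rw [this]; simp
  have hue : ∀ n, u n * (p n + q n) = u n := by
    intro n
    simp only [hu, add_mul, mul_add, smul_mul_assoc, hrp, hrq, hwp, hwq, smul_zero, add_zero,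
      zero_add]
  have hes : ∀ n, star (p n + q n) = p n + q n := by intro n; rw [star_add, hps, hqs]
  have hre : ∀ n, r n * (p n + q n) = r n := by intro n; rw [mul_add, hrp, hrq, add_zero]
  have her : ∀ n, (p n + q n) * r n = r n := by intro n; rw [add_mul, hpr, hqr, add_zero]
  have hQe : ∀ n, (star (u n) * u n) * (p n + q n) = star (u n) * u n := by
    intro n; rw [mul_assoc, hue]
  have hQs : ∀ n, star (star (u n) * u n) = star (u n) * u n := by intro n; simp
  have heQ : ∀ n, (p n + q n) * (star (u n) * u n) = star (u n) * u n := by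
    intro n; have := congrArg star (hQe n); rwa [star_mul, hes, hQs] at this
  obtain ⟨f, hfs, hf⟩ := sup_fam hB (fun n => p n + q n) r hes ho hrs hrr hre
  obtain ⟨g, hgs, hg⟩ := sup_fam hB (fun n => p n + q n) (fun n => star (u n) * u n) hes ho hQs
    (by intro n
        change star (u n) * u n * (star (u n) * u n) = star (u n) * u n
        rw [mul_assoc, ← mul_assoc (u n), huu, hru]) hQe
  have hkey : ∀ n, (f * g) * r n = ((a n : ℂ) * a n) • r n := by
    intro n
    have h1 : g * r n = star (u n) * u n * r n := by
      rw [← hg n]; change _ = g * (p n + q n) * r n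
      rw [mul_assoc, her]
    have h2 : f * (star (u n) * u n) = r n * (star (u n) * u n) := by
      rw [← hf n]; change _ = f * (p n + q n) * _
      rw [mul_assoc, heQ]
    rw [mul_assoc, h1, ← mul_assoc, h2, ← mul_assoc, hru', mul_assoc, hur, smul_mul_smul_comm, hrr]
  have hroot : ∀ n, (minpoly ℂ (f * g)).IsRoot ((a n : ℂ) * a n) := by
    intro n
    have := aeval_eig (hkey n) (minpoly ℂ (f * g))
    rw [minpoly.aeval, zero_mul] at this
    rcases smul_eq_zero.mp this.symm with h | h
    · exact h
    · exact absurd h (hr0 n)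
  have hinj : Function.Injective (fun n => (a n : ℂ) * a n) := by
    intro m n hmn
    have h1 : a m * a m = a n * a n := by
      have : (a m : ℂ) * a m = a n * a n := hmn
      exact_mod_cast this
    have h2 : a m = a n := by
      rcases mul_self_eq_mul_self_iff.mp h1 with h | h
      · exact h
      · linarith [ha0 m, ha0 n]
    simp only [ha] at h2
    have h3 : (m : ℝ) + 1 = n + 1 := by
      have := congrArg (fun x : ℝ => 1 / x) h2
      simpa using this
    exact_mod_cast (add_right_cancel h3)
  have hfin := Polynomial.finite_setOfPred_isRoot (minpoly.ne_zero (hi (f * g)))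
  exact Set.infinite_of_injective_forall_mem hinj hroot hfin

theorem central_cover {A : Type*} [Ring A] [StarRing A] (hB : IsBaerStarRing A) (p : A) :
    ∃ z : A, star z = z ∧ z * z = z ∧ (∀ x, z * x = x * z) ∧ p * z = p ∧
      ∀ x, (∀ y, p * y * x = 0) → z * x = 0 := by
  obtain ⟨f, hfs, hff, hS⟩ := hB (Set.range fun y => p * y) ⟨_, 0, rfl⟩
  have h1 : ∀ x, f * x = x ↔ ∀ y, p * y * x = 0 := by
    intro x
    have : x ∈ {z : A | ∃ x : A, z = f * x} ↔ ∀ y, p * y * x = 0 := by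
      rw [← hS]
      simp
    rw [← this]
    constructor
    · intro h; exact ⟨x, h.symm⟩
    · rintro ⟨z, rfl⟩; rw [← mul_assoc, hff]
  have h2 : ∀ x, f * (x * f) = x * f := by
    intro x
    rw [h1]
    intro y
    rw [← mul_assoc, mul_assoc p]
    exact (h1 f).mp hff _
  have h3 : ∀ x, f * x = x * f := by
    intro x
    have := congrArg star (h2 (star x))
    simp only [star_mul, star_star, hfs] at this
    rw [← h2, ← mul_assoc, this]
  refine ⟨1 - f, by simp [hfs], by simp [mul_sub, sub_mul, hff], fun x => ?_, ?_, fun x hx => ?_⟩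
  · rw [sub_mul, mul_sub, h3]; simp
  · have := (h1 f).mp hff 1
    rw [mul_one] at this
    rw [mul_sub, this]; simp
  · rw [sub_mul, (h1 x).mpr hx]; simp

theorem no_orth {A : Type*} [Ring A] [StarRing A] [Algebra ℂ A] [StarModule ℂ A]
    (hB : IsBaerStarRing A) (hi : ∀ a : A, IsIntegral ℂ a) (hN : HasNoAbelianSummand A)
    (p : ℕ → A) (hps : ∀ n, star (p n) = p n) (hpp : ∀ n, p n * p n = p n)
    (hp0 : ∀ n, p n ≠ 0) (ho : ∀ m n, m ≠ n → p m * p n = 0) : False := by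
  obtain ⟨g, hg | hg⟩ :=
    exists_increasing_or_nonincreasing_subseq' (fun a b : A => ∃ y, a * y * b ≠ 0) p
  · choose y hy using hg
    have hne : ∀ a b, a ≠ b → p (g a) * p (g b) = 0 := fun a b hab =>
      ho _ _ (fun h => hab (g.injective h))
    refine no_seq hB hi (fun n => p (g (2 * n))) (fun n => p (g (2 * n + 1))) (fun n => y (2 * n))
      (fun n => hps _) (fun n => hpp _) (fun n => hps _) (fun n => hpp _)
      (fun n => hne _ _ (by omega)) (fun n => hy _) ?_
    intro m n hmn
    simp only [add_mul, mul_add]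
    rw [hne _ _ (by omega), hne _ _ (by omega), hne _ _ (by omega), hne _ _ (by omega)]
    simp
  · push Not at hg
    have hg' : ∀ m n, m ≠ n → ∀ y, p (g m) * y * p (g n) = 0 := by
      intro m n hmn y
      rcases lt_or_gt_of_ne hmn with h | h
      · exact hg m n h y
      · have := congrArg star (hg n m h (star y))
        simp only [star_mul, star_star, hps, star_zero] at this
        rw [mul_assoc]; exact this
    choose z hzs hzz hzc hpz hz using fun n => central_cover hB (p (g n))
    have hz0 : ∀ n, z n ≠ 0 := by
      intro n h; apply hp0 (g n); rw [← hpz, h, mul_zero]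
    have hzo : ∀ m n, m ≠ n → z m * z n = 0 := by
      intro m n hmn
      apply hz
      intro y
      rw [mul_assoc, ← hzc n y, ← mul_assoc, ← hzc, hz n _ (hg' n m hmn.symm), zero_mul]
    have hna : ∀ n, ∃ q y : A, star q = q ∧ q * q = q ∧ z n * q * z n = q ∧
        q * y * (z n - q) ≠ 0 := by
      intro n
      by_contra hcon
      push Not at hcon
      apply hz0 n
      apply hN (z n) (hzs n) (hzz n) (hzc n)
      intro q hqs hqq hzq x
      have hq1 : z n * q = q := by
        conv_rhs => rw [← hzq]
        conv_lhs => rw [← hzq, ← mul_assoc, ← mul_assoc, hzz]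
      have hq2 : q * z n = q := by rw [← hzc, hq1]
      have h1 : ∀ y, q * y * z n = q * y * q := by
        intro y
        have := hcon q y hqs hqq hzq
        rwa [mul_sub, sub_eq_zero] at this
      have h2 : z n * x * q = q * x * q := by
        have := congrArg star (h1 (star x))
        simp only [star_mul, star_star, hqs, hzs] at this
        rw [mul_assoc, this, mul_assoc]
      calc q * (z n * x * z n) = (q * z n) * x * z n := by simp only [mul_assoc]
        _ = q * x * q := by rw [hq2, h1]
        _ = z n * x * (z n * q) := by rw [hq1, h2]
        _ = _ := by simp only [mul_assoc]
    choose q y hqs hqq hzq hy using hna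
    have hq1 : ∀ n, z n * q n = q n := by
      intro n
      conv_rhs => rw [← hzq]
      conv_lhs => rw [← hzq, ← mul_assoc, ← mul_assoc, hzz]
    have hq2 : ∀ n, q n * z n = q n := by intro n; rw [← hzc, hq1]
    refine no_seq hB hi q (fun n => z n - q n) y hqs hqq (fun n => by simp [hzs, hqs])
      (fun n => ?_) (fun n => ?_) hy (fun m n hmn => ?_)
    · simp [mul_sub, sub_mul, hzz, hqq, hq1, hq2]
    · simp [mul_sub, hq2, hqq]
    · simp [hzo m n hmn]

/-- Minimal projections. -/
def IsMin {A : Type*} [Ring A] [StarRing A] (r : A) : Prop :=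
  star r = r ∧ r * r = r ∧ r ≠ 0 ∧ ∀ q : A, star q = q → q * q = q → r * q = q → q = 0 ∨ q = r

theorem decomp {A : Type*} [Ring A] [StarRing A] [Algebra ℂ A] [StarModule ℂ A]
    (hB : IsBaerStarRing A) (hi : ∀ a : A, IsIntegral ℂ a) (hN : HasNoAbelianSummand A) :
    ∃ s : Finset A, (∀ r ∈ s, IsMin r) ∧ (∀ r ∈ s, ∀ t ∈ s, r ≠ t → r * t = 0) ∧
      ∑ r ∈ s, r = 1 := by
  classical
  let P := {p : A // star p = p ∧ p * p = p}
  let R : P → P → Prop := fun a b => b.1 * a.1 = a.1 ∧ a.1 ≠ b.1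
  have hwf : WellFounded R := by
    rw [wellFounded_iff_isEmpty_descending_chain]
    refine ⟨fun ⟨f, hf⟩ => ?_⟩
    have h1 : ∀ n k, (f n).1 * (f (n + k)).1 = (f (n + k)).1 := by
      intro n k
      induction k with
      | zero => exact (f n).2.2
      | succ k ih => rw [← add_assoc, ← (hf (n + k)).1, ← mul_assoc, ih]
    have h2 : ∀ n k, (f (n + k)).1 * (f n).1 = (f (n + k)).1 := by
      intro n k
      have := congrArg star (h1 n k)
      rwa [star_mul, (f n).2.1, (f (n + k)).2.1] at this
    have hlt : ∀ m n, m < n → ((f m).1 - (f (m + 1)).1) * ((f n).1 - (f (n + 1)).1) = 0 := by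
      intro m n hmn
      obtain ⟨k, rfl⟩ := Nat.exists_eq_add_of_lt hmn
      have e1 := h1 m (k + 1)
      have e2 := h1 (m + 1) k
      have e3 := h1 m (k + 1 + 1)
      have e4 := h1 (m + 1) (k + 1)
      rw [show m + (k + 1) = m + k + 1 by omega] at e1
      rw [show m + 1 + k = m + k + 1 by omega] at e2
      rw [show m + (k + 1 + 1) = m + k + 1 + 1 by omega] at e3
      rw [show m + 1 + (k + 1) = m + k + 1 + 1 by omega] at e4
      simp only [sub_mul, mul_sub, e1, e2, e3, e4]
      abel
    have hs : ∀ n, star ((f n).1 - (f (n + 1)).1) = (f n).1 - (f (n + 1)).1 := by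
      intro n; rw [star_sub, (f n).2.1, (f (n + 1)).2.1]
    refine no_orth hB hi hN (fun n => (f n).1 - (f (n + 1)).1) hs ?_ ?_ ?_
    · intro n
      simp only [sub_mul, mul_sub, (f n).2.2, (f (n + 1)).2.2, h1 n 1, h2 n 1]
      abel
    · intro n h
      exact (hf n).2 (sub_eq_zero.mp h).symm
    · intro m n hmn
      rcases lt_or_gt_of_ne hmn with h | h
      · exact hlt m n h
      · have := congrArg star (hlt n m h)
        rwa [star_mul, hs, hs, star_zero] at this
  have key : ∀ p : P, ∃ s : Finset A, (∀ r ∈ s, IsMin r) ∧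
      (∀ r ∈ s, ∀ t ∈ s, r ≠ t → r * t = 0) ∧ ∑ r ∈ s, r = p.1 := by
    intro p
    induction p using hwf.induction with
    | _ p ih =>
    by_cases h0 : p.1 = 0
    · exact ⟨∅, by simp, by simp, by simp [h0]⟩
    by_cases hmin : IsMin p.1
    · refine ⟨{p.1}, by simpa using hmin, ?_, by simp⟩
      intro r hr t ht hrt
      rw [Finset.mem_singleton] at hr ht
      exact absurd (hr.trans ht.symm) hrt
    have : ∃ q : A, star q = q ∧ q * q = q ∧ p.1 * q = q ∧ q ≠ 0 ∧ q ≠ p.1 := by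
      by_contra hcon
      push Not at hcon
      refine hmin ⟨p.2.1, p.2.2, h0, fun q h1 h2 h3 => ?_⟩
      by_cases hq : q = 0
      · exact Or.inl hq
      · exact Or.inr (hcon q h1 h2 h3 hq)
    obtain ⟨q, hqs, hqq, hpq, hq0, hqp⟩ := this
    have hqp' : q * p.1 = q := by
      have := congrArg star hpq; rwa [star_mul, hqs, p.2.1] at this
    obtain ⟨s, hs1, hs2, hs3⟩ := ih ⟨q, hqs, hqq⟩ ⟨hpq, hqp⟩
    obtain ⟨t, ht1, ht2, ht3⟩ := ih ⟨p.1 - q, by rw [star_sub, p.2.1, hqs], by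
      simp only [sub_mul, mul_sub, p.2.2, hqq, hpq, hqp']; abel⟩
      ⟨by change p.1 * (p.1 - q) = p.1 - q
          rw [mul_sub, p.2.2, hpq], fun h => hq0 (sub_eq_self.mp h)⟩
    change ∑ r ∈ s, r = q at hs3
    change ∑ r ∈ t, r = p.1 - q at ht3
    have hle : ∀ (s : Finset A), (∀ r ∈ s, IsMin r) →
        (∀ r ∈ s, ∀ t ∈ s, r ≠ t → r * t = 0) → ∀ r ∈ s, r * ∑ x ∈ s, x = r := by
      intro s h1 h2 r hr
      rw [Finset.mul_sum, Finset.sum_eq_single r]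
      · exact (h1 r hr).2.1
      · intro b hb hbr; exact h2 r hr b hb hbr.symm
      · intro h; exact absurd hr h
    have horth : ∀ r ∈ s, ∀ x ∈ t, r * x = 0 := by
      intro r hr x hx
      have e1 := hle s hs1 hs2 r hr
      have e2 := hle t ht1 ht2 x hx
      rw [hs3] at e1
      rw [ht3] at e2
      have e3 := congrArg star e2
      rw [star_mul, (ht1 x hx).1, star_sub, p.2.1, hqs] at e3
      rw [← e1, ← e3, mul_assoc, ← mul_assoc q, mul_sub, hqp', hqq]
      simp
    have horth' : ∀ r ∈ s, ∀ x ∈ t, x * r = 0 := by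
      intro r hr x hx
      have := congrArg star (horth r hr x hx)
      rwa [star_mul, (hs1 r hr).1, (ht1 x hx).1, star_zero] at this
    have hdis : Disjoint s t := by
      rw [Finset.disjoint_left]
      intro x hx hx'
      have := horth x hx x hx'
      rw [(hs1 x hx).2.1] at this
      exact (hs1 x hx).2.2.1 this
    refine ⟨s ∪ t, ?_, ?_, ?_⟩
    · intro r hr
      rcases Finset.mem_union.mp hr with h | h
      · exact hs1 r h
      · exact ht1 r h
    · intro r hr x hx hrx
      rcases Finset.mem_union.mp hr with h | h <;> rcases Finset.mem_union.mp hx with h' | h'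
      · exact hs2 r h x h' hrx
      · exact horth r h x h'
      · exact horth' x h' r h
      · exact ht2 r h x h' hrx
    · rw [Finset.sum_union hdis, hs3, ht3]; abel
  exact key ⟨1, star_one A, one_mul 1⟩

end BaerAux
namespace BaerAux

theorem min_scalar {A : Type*} [Ring A] [StarRing A] [Algebra ℂ A] [StarModule ℂ A]
    (hp : ∀ a : A, star a * a = 0 → a = 0) (hi : ∀ a : A, IsIntegral ℂ a)
    {r : A} (hr : IsMin r) (y : A) : ∃ c : ℂ, r * y * r = c • r := by
  obtain ⟨hrs, hrr, hr0, hmin⟩ := hr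
  have hsa : ∀ a : A, star a = a → r * a = a → ∃ c : ℂ, a = c • r := by
    intro a ha hra
    by_cases ha0 : a = 0
    · exact ⟨0, by simp [ha0]⟩
    obtain ⟨μ, q, hμ, hqs, hqq, hq0, haq, hqa⟩ := spectral hp hi ha ha0
    have hμ' : (μ : ℂ) ≠ 0 := by exact_mod_cast hμ
    have hrq : r * q = q := by
      have h1 : r * ((μ : ℂ) • q) = (μ : ℂ) • q := by
        rw [← haq, ← mul_assoc, hra]
      rw [mul_smul_comm] at h1
      exact smul_right_injective A hμ' h1
    rcases hmin q hqs hqq hrq with h | h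
    · exact absurd h hq0
    · subst h
      refine ⟨μ, ?_⟩
      rw [← haq]
      have := congrArg star hra
      rw [star_mul, ha, hrs] at this
      exact this.symm
  set x := r * y * r with hx
  have hrx : r * x = x := by rw [hx, ← mul_assoc, ← mul_assoc, hrr]
  have hrx' : r * star x = star x := by
    rw [hx, star_mul, star_mul, hrs, ← mul_assoc, hrr]
  obtain ⟨c₁, h1⟩ := hsa (x + star x) (by simp [add_comm]) (by rw [mul_add, hrx, hrx'])
  obtain ⟨c₂, h2⟩ := hsa (Complex.I • (x - star x))
    (by rw [star_smul, star_sub, star_star]; simp only [Complex.star_def, Complex.conj_I, neg_smul, smul_sub]; abel)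
    (by rw [mul_smul_comm, mul_sub, hrx, hrx'])
  refine ⟨(1 / 2) * (c₁ - Complex.I * c₂), ?_⟩
  have h3 : x - star x = (-Complex.I * c₂) • r := by
    rw [mul_smul, ← h2, smul_smul]; simp
  have h4 : (2 : ℂ) • x = (x + star x) + (x - star x) := by rw [two_smul]; abel
  rw [mul_smul, sub_smul, ← h1]
  have h5 : x + star x - (Complex.I * c₂) • r = (2 : ℂ) • x := by
    rw [h4, h3, neg_mul, neg_smul, sub_eq_add_neg]
  rw [h5, smul_smul]; norm_num

theorem min_isom {A : Type*} [Ring A] [StarRing A] [Algebra ℂ A] [StarModule ℂ A]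
    (hp : ∀ a : A, star a * a = 0 → a = 0) (hi : ∀ a : A, IsIntegral ℂ a)
    {r s x : A} (hr : IsMin r) (hs : IsMin s) (hrs : r * s = 0) (hx : r * x * s ≠ 0) :
    ∃ w : A, r * w = w ∧ w * s = w ∧ w * star w = r ∧ star w * w = s := by
  obtain ⟨r', w, h1, h2, h3, h4, h5, h6, h7⟩ :=
    partial_isom hp hi hr.1 hr.2.1 hs.1 hs.2.1 hrs hx
  rcases hr.2.2.2 r' h1 h2 h4 with h | h
  · exact absurd h h3
  subst h
  refine ⟨w, h5, h6, h7, ?_⟩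
  have h8 : s * star w = star w := by
    have := congrArg star h6; rwa [star_mul, hs.1] at this
  rcases hs.2.2.2 (star w * w) (by simp)
    (by rw [mul_assoc, ← mul_assoc w, h7, h5]) (by rw [← mul_assoc, h8]) with h | h
  · exfalso
    have := hp w h
    rw [this, zero_mul] at h7
    exact h3 h7.symm
  · exact h

theorem struct_iso {A : Type*} [Ring A] [StarRing A] [Algebra ℂ A] [StarModule ℂ A]
    (m : ℕ) (n : Fin m → ℕ) (ρ : Fin m → A) (w : ∀ k, Fin (n k) → A)
    (hρ0 : ∀ k, ρ k ≠ 0) (hρs : ∀ k, star (ρ k) = ρ k)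
    (hρρ : ∀ k, ρ k * ρ k = ρ k)
    (hmin : ∀ k y, ∃ c : ℂ, ρ k * y * ρ k = c • ρ k)
    (hρw : ∀ k i, ρ k * w k i = w k i)
    (hw1 : ∀ k i, w k i * star (w k i) = ρ k)
    (hw0 : ∀ k i j, i ≠ j → w k i * star (w k j) = 0)
    (hsum : ∑ k, ∑ i, star (w k i) * w k i = 1)
    (hoff : ∀ k l i j x, k ≠ l → w k i * x * star (w l j) = 0) :
    Nonempty (A ≃⋆ₐ[ℂ] ∀ k, Matrix (Fin (n k)) (Fin (n k)) ℂ) := by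
  have hwρ : ∀ k i, star (w k i) * ρ k = star (w k i) := by
    intro k i; have := congrArg star (hρw k i); rwa [star_mul, hρs] at this
  have hex : ∀ k i j x, ∃ c : ℂ, w k i * x * star (w k j) = c • ρ k := by
    intro k i j x
    obtain ⟨c, hc⟩ := hmin k (w k i * x * star (w k j))
    refine ⟨c, ?_⟩
    rw [← hc]
    conv_lhs => rw [← hρw, ← hwρ]
    simp only [mul_assoc]
  choose τ hτ using hex
  have hcanc : ∀ k (a b : ℂ), a • ρ k = b • ρ k → a = b := by
    intro k a b h
    exact smul_left_injective ℂ (hρ0 k) h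
  let Φ : A →⋆ₙₐ[ℂ] (∀ k, Matrix (Fin (n k)) (Fin (n k)) ℂ) :=
    { toFun := fun x k => Matrix.of fun i j => τ k i j x
      map_smul' := by
        intro c x; funext k; ext i j
        apply hcanc k
        simp only [Matrix.of_apply, Pi.smul_apply, Matrix.smul_apply, MonoidHom.id_apply]
        rw [← hτ, smul_eq_mul, mul_smul, ← hτ, mul_smul_comm, smul_mul_assoc]
      map_zero' := by
        funext k; ext i j
        apply hcanc k
        simp only [Matrix.of_apply, Pi.zero_apply, Matrix.zero_apply]
        rw [← hτ]; simp
      map_add' := by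
        intro x y; funext k; ext i j
        apply hcanc k
        simp only [Matrix.of_apply, Pi.add_apply, Matrix.add_apply]
        rw [← hτ, add_smul, ← hτ, ← hτ, mul_add, add_mul]
      map_mul' := by
        intro x y; funext k; ext i j
        apply hcanc k
        simp only [Matrix.of_apply, Pi.mul_apply, Matrix.mul_apply]
        rw [← hτ, Finset.sum_smul]
        have h1 : w k i * (x * y) * star (w k j)
            = w k i * x * (∑ l, ∑ a, star (w l a) * w l a) * (y * star (w k j)) := by
          rw [hsum]; simp only [mul_assoc, one_mul]
        rw [h1, Finset.mul_sum, Finset.sum_mul, Finset.sum_eq_single k]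
        · rw [Finset.mul_sum, Finset.sum_mul]
          refine Finset.sum_congr rfl fun a _ => ?_
          calc _ = (w k i * x * star (w k a)) * (w k a * y * star (w k j)) := by
                simp only [mul_assoc]
            _ = _ := by rw [hτ, hτ, smul_mul_smul_comm, hρρ]
        · intro l _ hl
          rw [Finset.mul_sum, Finset.sum_mul]
          refine Finset.sum_eq_zero fun a _ => ?_
          rw [← mul_assoc (w k i * x), hoff k l i a x hl.symm]; simp
        · intro h; exact absurd (Finset.mem_univ k) h
      map_star' := by
        intro x; funext k; ext i j
        apply hcanc k
        simp only [Matrix.of_apply, Pi.star_apply, Matrix.star_apply]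
        rw [← hτ]
        have := congrArg star (hτ k j i x)
        rw [star_smul, hρs] at this
        rw [← this]; simp [mul_assoc] }
  have hΦ : ∀ x k i j, Φ x k i j = τ k i j x := fun x k i j => rfl
  have hbij : Function.Bijective Φ := by
    constructor
    · rw [injective_iff_map_eq_zero]
      intro x hx
      have h0 : ∀ k i j, w k i * x * star (w k j) = 0 := by
        intro k i j
        rw [hτ, ← hΦ, hx]; simp
      have h1 : ∀ k l i j, w k i * x * star (w l j) = 0 := by
        intro k l i j
        by_cases h : k = l
        · subst h; exact h0 k i j
        · exact hoff k l i j x h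
      have h2 : x = (∑ k, ∑ i, star (w k i) * w k i) * x * ∑ k, ∑ i, star (w k i) * w k i := by
        rw [hsum]; simp
      rw [h2]
      simp only [Finset.mul_sum, Finset.sum_mul]
      refine Finset.sum_eq_zero fun k _ => Finset.sum_eq_zero fun i _ =>
        Finset.sum_eq_zero fun l _ => Finset.sum_eq_zero fun j _ => ?_
      calc _ = star (w l j) * (w l j * x * star (w k i)) * w k i := by simp only [mul_assoc]
        _ = 0 := by rw [h1]; simp
    · intro X
      refine ⟨∑ k, ∑ i, ∑ j, X k i j • (star (w k i) * w k j), ?_⟩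
      funext l; ext a b
      apply hcanc l
      rw [hΦ, ← hτ, Finset.mul_sum, Finset.sum_mul, Finset.sum_eq_single l]
      · rw [Finset.mul_sum, Finset.sum_mul, Finset.sum_eq_single a]
        · rw [Finset.mul_sum, Finset.sum_mul, Finset.sum_eq_single b]
          · rw [mul_smul_comm, smul_mul_assoc, ← mul_assoc, hw1, hρw, hw1]
          · intro j _ hj
            rw [mul_smul_comm, smul_mul_assoc, mul_assoc, mul_assoc, hw0 l j b hj]; simp
          · intro h; exact absurd (Finset.mem_univ b) h
        · intro i _ hi
          rw [Finset.mul_sum, Finset.sum_mul]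
          refine Finset.sum_eq_zero fun j _ => ?_
          rw [mul_smul_comm, smul_mul_assoc, ← mul_assoc, hw0 l a i hi.symm]; simp
        · intro h; exact absurd (Finset.mem_univ a) h
      · intro k _ hk
        rw [Finset.mul_sum, Finset.sum_mul]
        refine Finset.sum_eq_zero fun i _ => ?_
        rw [Finset.mul_sum, Finset.sum_mul]
        refine Finset.sum_eq_zero fun j _ => ?_
        have := hoff l k a i 1 hk.symm
        rw [mul_one] at this
        rw [mul_smul_comm, smul_mul_assoc, ← mul_assoc, this]; simp
      · intro h; exact absurd (Finset.mem_univ l) h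
  exact ⟨StarAlgEquiv.ofBijective Φ hbij⟩

theorem main_unital {A : Type*} [Ring A] [StarRing A] [Algebra ℂ A] [StarModule ℂ A]
    (hB : IsBaerStarRing A) (hA : IsAlgebraicAlgebra A) (hN : HasNoAbelianSummand A) :
    ∃ (m : ℕ) (n : Fin m → ℕ), (∀ k, 2 ≤ n k) ∧
        Nonempty (A ≃⋆ₐ[ℂ] ∀ k, Matrix (Fin (n k)) (Fin (n k)) ℂ) := by
  classical
  have hi := isIntegral_of hA
  have hp := proper_of hB
  obtain ⟨s, hs1, hs2, hs3⟩ := decomp hB hi hN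
  have hmin : ∀ i : s, IsMin i.1 := fun i => hs1 i.1 i.2
  have horth : ∀ i j : s, i ≠ j → i.1 * j.1 = 0 := fun i j h =>
    hs2 i.1 i.2 j.1 j.2 (fun h' => h (Subtype.ext h'))
  have hsum : ∑ i : s, i.1 = 1 := by rw [← hs3]; exact Finset.sum_coe_sort s (fun x => x)
  have hiso : ∀ i j : s, (∃ x, i.1 * x * j.1 ≠ 0) →
      ∃ w : A, i.1 * w = w ∧ w * j.1 = w ∧ w * star w = i.1 ∧ star w * w = j.1 := by
    rintro i j ⟨x, hx⟩
    by_cases hij : i = j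
    · subst hij
      have h := (hmin i).2.1
      exact ⟨i.1, h, h, by rw [(hmin i).1, h], by rw [(hmin i).1, h]⟩
    · exact min_isom hp hi (hmin i) (hmin j) (horth i j hij) hx
  let S : Setoid s :=
    { r := fun i j => ∃ x, i.1 * x * j.1 ≠ 0
      iseqv :=
        { refl := fun i => ⟨1, by rw [mul_one, (hmin i).2.1]; exact (hmin i).2.2.1⟩
          symm := by
            rintro i j ⟨x, hx⟩
            refine ⟨star x, fun h => hx ?_⟩
            have := congrArg star h
            rwa [star_mul, star_mul, star_star, star_zero, (hmin i).1, (hmin j).1,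
              ← mul_assoc] at this
          trans := by
            intro i j k hij hjk
            obtain ⟨u, hu1, hu2, hu3, hu4⟩ := hiso i j hij
            obtain ⟨v, hv1, hv2, hv3, hv4⟩ := hiso j k hjk
            refine ⟨u * v, fun h => (hmin i).2.2.1 ?_⟩
            have h1 : u * v = 0 := by
              rw [← h, ← mul_assoc, hu1, mul_assoc, hv2]
            rw [← hu3]
            conv_lhs => rw [← hu2, ← hv3, ← mul_assoc, h1]
            simp } }
  have hSr : ∀ i j : s, (⟦i⟧ : Quotient S) = ⟦j⟧ ↔ ∃ x, i.1 * x * j.1 ≠ 0 := fun i j =>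
    Quotient.eq (r := S)
  haveI : Fintype (Quotient S) := Fintype.ofFinite _
  have hw : ∀ i : s, ∃ w : A, (Quotient.out (⟦i⟧ : Quotient S)).1 * w = w ∧ w * i.1 = w ∧
      w * star w = (Quotient.out (⟦i⟧ : Quotient S)).1 ∧ star w * w = i.1 := by
    intro i
    apply hiso
    rw [← hSr]
    exact Quotient.out_eq _
  choose w hw1 hw2 hw3 hw4 using hw
  have hw2' : ∀ i : s, i.1 * star (w i) = star (w i) := by
    intro i; have := congrArg star (hw2 i); rwa [star_mul, (hmin i).1] at this
  let e : Fin (Fintype.card (Quotient S)) ≃ Quotient S := (Fintype.equivFin _).symm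
  let F : Fin (Fintype.card (Quotient S)) → Type _ := fun k => {i : s // (⟦i⟧ : Quotient S) = e k}
  let E : ∀ k, Fin (Fintype.card (F k)) ≃ F k := fun k => (Fintype.equivFin (F k)).symm
  have hfib : ∀ k (i : F k), Quotient.out (⟦i.1⟧ : Quotient S) = Quotient.out (e k) := by
    intro k i; rw [i.2]
  refine ⟨Fintype.card (Quotient S), fun k => Fintype.card (F k), ?_, ?_⟩
  · intro k
    apply Fintype.one_lt_card_iff.mpr
    let i : s := Quotient.out (e k)
    have hik : (⟦i⟧ : Quotient S) = e k := Quotient.out_eq _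
    by_contra hcon
    push Not at hcon
    have hno : ∀ j : s, j ≠ i → ∀ x, i.1 * x * j.1 = 0 := by
      intro j hj x
      by_contra hx
      have h1 : (⟦i⟧ : Quotient S) = ⟦j⟧ := (hSr i j).mpr ⟨x, hx⟩
      have := hcon ⟨i, hik⟩ ⟨j, h1.symm.trans hik⟩
      exact hj (congrArg Subtype.val this).symm
    have h1 : ∀ x, i.1 * x = i.1 * x * i.1 := by
      intro x
      calc i.1 * x = i.1 * x * ∑ j : s, j.1 := by rw [hsum, mul_one]
        _ = _ := by
          rw [Finset.mul_sum, Finset.sum_eq_single i]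
          · intro j _ hj; exact hno j hj x
          · intro h; exact absurd (Finset.mem_univ i) h
    have h2 : ∀ x, x * i.1 = i.1 * x * i.1 := by
      intro x
      have := congrArg star (h1 (star x))
      simp only [star_mul, star_star, (hmin i).1] at this
      rw [this, mul_assoc]
    apply (hmin i).2.2.1
    apply hN i.1 (hmin i).1 (hmin i).2.1 (fun x => (h1 x).trans (h2 x).symm)
    intro p hps hpp hpi x
    obtain ⟨c, hc⟩ := min_scalar hp hi (hmin i) p
    obtain ⟨d, hd⟩ := min_scalar hp hi (hmin i) x
    rw [← hpi, hc, hd, smul_mul_smul_comm, smul_mul_smul_comm, mul_comm]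
  · apply struct_iso _ _ (fun k => (Quotient.out (e k)).1) (fun k a => w (E k a).1)
    · intro k; exact (hmin _).2.2.1
    · intro k; exact (hmin _).1
    · intro k; exact (hmin _).2.1
    · intro k y; exact min_scalar hp hi (hmin _) y
    · intro k a; have := hw1 (E k a).1; rwa [hfib] at this
    · intro k a; have := hw3 (E k a).1; rwa [hfib] at this
    · intro k a b hab
      have hne : (E k a).1 ≠ (E k b).1 := fun h => hab ((E k).injective (Subtype.ext h))
      rw [← hw2, ← hw2', mul_assoc, ← mul_assoc (E k a).1.1, horth _ _ hne]; simp
    · calc ∑ k, ∑ a, star (w (E k a).1) * w (E k a).1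
          = ∑ k, ∑ i : F k, i.1.1 := by
            refine Finset.sum_congr rfl fun k _ => ?_
            rw [← (E k).sum_comp]
            exact Finset.sum_congr rfl fun a _ => hw4 _
        _ = ∑ q : Quotient S, ∑ i : {i : s // (⟦i⟧ : Quotient S) = q}, i.1.1 :=
            e.sum_comp (fun q => ∑ i : {i : s // (⟦i⟧ : Quotient S) = q}, i.1.1)
        _ = ∑ i : s, i.1 := by
            rw [← Fintype.sum_sigma']
            exact (Equiv.sigmaFiberEquiv (fun i : s => (⟦i⟧ : Quotient S))).sum_comp
              (fun i : s => i.1)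
        _ = 1 := hsum
    · intro k l a b x hkl
      have h0 : (E k a).1.1 * x * (E l b).1.1 = 0 := by
        by_contra hx
        have := (hSr _ _).mpr ⟨x, hx⟩
        rw [(E k a).2, (E l b).2] at this
        exact hkl (e.injective this)
      rw [← hw2, ← hw2']
      calc _ = w (E k a).1 * ((E k a).1.1 * x * (E l b).1.1) * star (w (E l b).1) := by
            simp only [mul_assoc]
        _ = 0 := by rw [h0]; simp

theorem main_nonunital {M : Type*} [NonUnitalRing M] [Module ℂ M]
    [SMulCommClass ℂ M M] [IsScalarTower ℂ M M] [StarRing M] [StarModule ℂ M]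
    (hA : IsAlgebraicAlgebra M) (hB : IsBaerStarRing M) (hN : HasNoAbelianSummand M) :
      ∃ (m : ℕ) (n : Fin m → ℕ), (∀ k, 2 ≤ n k) ∧
        Nonempty (M ≃⋆ₐ[ℂ] ∀ k, Matrix (Fin (n k)) (Fin (n k)) ℂ) := by
  obtain ⟨u, hus, huu, hS⟩ := hB {0} ⟨0, rfl⟩
  have hu : ∀ x : M, u * x = x := by
    intro x
    have : x ∈ {z : M | ∃ x : M, z = u * x} := by
      rw [← hS]; rintro s rfl; exact zero_mul x
    obtain ⟨y, rfl⟩ := this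
    rw [← mul_assoc, huu]
  have hu' : ∀ x : M, x * u = x := by
    intro x
    have := congrArg star (hu (star x))
    rwa [star_mul, star_star, hus] at this
  letI R : Ring M := { (inferInstance : NonUnitalRing M) with
    one := u
    one_mul := hu
    mul_one := hu' }
  letI : Algebra ℂ M := Algebra.ofModule (fun r x y => smul_mul_assoc r x y)
    (fun r x y => mul_smul_comm r x y)
  exact main_unital hB hA hN

end BaerAux
/-- A complex `*`-algebra is an algebraic Baer `*`-algebra without
Abelian summand iff it is a finite-dimensional Baer `*`-algebra without Abelian summand;
in that case it is `*`-isomorphic to a finite direct product of full complex matrix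
algebras of size at least `2 × 2`. -/
theorem algebraic_baer_noAbelianSummand_iff (M : Type*) [NonUnitalRing M] [Module ℂ M]
    [SMulCommClass ℂ M M] [IsScalarTower ℂ M M] [StarRing M] [StarModule ℂ M] :
    ((IsAlgebraicAlgebra M ∧ IsBaerStarRing M ∧ HasNoAbelianSummand M) ↔
      (FiniteDimensional ℂ M ∧ IsBaerStarRing M ∧ HasNoAbelianSummand M)) ∧
    ((IsAlgebraicAlgebra M ∧ IsBaerStarRing M ∧ HasNoAbelianSummand M) →
      ∃ (m : ℕ) (n : Fin m → ℕ), (∀ k, 2 ≤ n k) ∧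
        Nonempty (M ≃⋆ₐ[ℂ] ∀ k, Matrix (Fin (n k)) (Fin (n k)) ℂ)) := by
  have key : (IsAlgebraicAlgebra M ∧ IsBaerStarRing M ∧ HasNoAbelianSummand M) →
      ∃ (m : ℕ) (n : Fin m → ℕ), (∀ k, 2 ≤ n k) ∧
        Nonempty (M ≃⋆ₐ[ℂ] ∀ k, Matrix (Fin (n k)) (Fin (n k)) ℂ) :=
    fun h => BaerAux.main_nonunital h.1 h.2.1 h.2.2
  refine ⟨⟨fun h => ⟨?_, h.2⟩, fun h => ⟨fun a => ⟨⊤, trivial, ?_⟩, h.2⟩⟩, key⟩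
  · obtain ⟨m, n, -, ⟨Φ⟩⟩ := key h
    let L : M →ₗ[ℂ] (∀ k, Matrix (Fin (n k)) (Fin (n k)) ℂ) :=
      { toFun := Φ
        map_add' := map_add Φ
        map_smul' := map_smul Φ }
    exact Module.Finite.of_injective L Φ.injective
  · haveI := h.1
    exact Module.Finite.of_injective
      (NonUnitalSubalgebra.toSubmodule (⊤ : NonUnitalSubalgebra ℂ M)).subtype
      Subtype.val_injective
end

section
/- Let B be a commutative complex *-algebra. Then B is an algebraic Baer *-algebra if and only if there exists a Stonean topological space T such that B is *-isomorphic to the ℂ-linear span, inside the C*-algebra C(T, ℂ) of continuous complex-valued functions on T, of the characteristic functions of the clopen subsets of T. -/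
/-- The set of characteristic functions of clopen subsets of `T`, inside `C(T, ℂ)`. -/
def clopenCharacteristicFunctions (T : Type*) [TopologicalSpace T] : Set C(T, ℂ) :=
  {f : C(T, ℂ) | ∃ U : Set T, IsClopen U ∧ ∀ t : T, f t = U.indicator 1 t}

open Polynomial

theorem aux_integral {B : Type*} [CommRing B] [Algebra ℂ B] (h : IsAlgebraicAlgebra B) (a : B) :
    IsIntegral ℂ a := by
  obtain ⟨S, ha, hS⟩ := h a
  let L : Module.End ℂ S := LinearMap.mulLeft ℂ (⟨a, ha⟩ : S)
  have hL : IsIntegral ℂ L := Algebra.IsIntegral.isIntegral L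
  obtain ⟨p, hp, hpe⟩ := hL
  have key : ∀ (q : ℂ[X]) (s : S), ((aeval L q s : S) : B) = aeval a q * (s : B) := by
    intro q s
    induction q using Polynomial.induction_on' with
    | add p q hp hq => simp [hp, hq, add_mul]
    | monomial n c =>
      have : ∀ n : ℕ, (((L ^ n) s : S) : B) = a ^ n * (s : B) := by
        intro n
        induction n with
        | zero => simp
        | succ n ih =>
          rw [pow_succ', Module.End.mul_apply]
          change a * (((L ^ n) s : S) : B) = _
          rw [ih, pow_succ']; ring
      rw [aeval_monomial, aeval_monomial, Module.algebraMap_end_eq_smul_id]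
      simp [this, Algebra.smul_def, mul_assoc]
  refine ⟨p * X, hp.mul monic_X, ?_⟩
  have := key p ⟨a, ha⟩
  rw [aeval_def, hpe] at this
  rw [← aeval_def, map_mul, aeval_X, ← this]
  simp

/-- characters -/
def Chr (B : Type u) [CommRing B] [Algebra ℂ B] : Type u := B →ₐ[ℂ] ℂ

namespace Chr
variable {B : Type u} [CommRing B] [Algebra ℂ B]

/-- evaluation -/
def ev (x : Chr B) : B →ₐ[ℂ] ℂ := x

theorem ev_inj {x y : Chr B} (h : ∀ b, x.ev b = y.ev b) : x = y := AlgHom.ext (φ₁ := x) (φ₂ := y) h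

noncomputable instance : TopologicalSpace (Chr B) := TopologicalSpace.induced (fun x b => x.ev b) inferInstance

theorem isEmb : Topology.IsEmbedding (fun (x : Chr B) (b : B) => x.ev b) :=
  ⟨⟨rfl⟩, fun _ _ h => ev_inj (congrFun h)⟩

theorem cont (b : B) : Continuous (fun x : Chr B => x.ev b) :=
  (continuous_apply b).comp isEmb.continuous

instance : T2Space (Chr B) := isEmb.t2Space

theorem exists_finset (hB : ∀ b : B, IsIntegral ℂ b) (b : B) :
    ∃ R : Finset ℂ, ∀ x : Chr B, x.ev b ∈ R := by
  obtain ⟨p, hp, h⟩ := hB b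
  refine ⟨p.roots.toFinset, fun x => ?_⟩
  rw [Multiset.mem_toFinset, mem_roots hp.ne_zero, IsRoot, ← Polynomial.coe_aeval_eq_eval,
    aeval_algHom_apply, aeval_def, h, map_zero]

theorem compact (hB : ∀ b : B, IsIntegral ℂ b) : CompactSpace (Chr B) := by
  choose R hR using exists_finset hB
  have hK : IsCompact (Set.univ.pi fun b => (R b : Set ℂ)) :=
    isCompact_univ_pi fun b => (R b).finite_toSet.isCompact
  have hr : Set.range (fun (x : Chr B) (b : B) => x.ev b) =
      {f : B → ℂ | (∀ c : ℂ, f (algebraMap ℂ B c) = c) ∧ (∀ a b, f (a + b) = f a + f b) ∧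
        (∀ a b, f (a * b) = f a * f b)} := by
    ext f
    constructor
    · rintro ⟨x, rfl⟩
      refine ⟨fun c => by simp, fun a b => by simp, fun a b => by simp⟩
    · rintro ⟨h1, h2, h3⟩
      exact ⟨({ toFun := f, map_one' := by simpa using h1 1, map_zero' := by simpa using h1 0,
                map_add' := h2, map_mul' := h3, commutes' := h1 } : B →ₐ[ℂ] ℂ), rfl⟩
  have hcl : IsClosed (Set.range (fun (x : Chr B) (b : B) => x.ev b)) := by
    rw [hr]
    simp only [Set.ofPred_and, Set.ofPred_forall]
    refine IsClosed.inter (isClosed_iInter fun c => isClosed_eq (by fun_prop) (by fun_prop))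
      (IsClosed.inter ?_ ?_) <;>
    exact isClosed_iInter fun a => isClosed_iInter fun b => isClosed_eq (by fun_prop) (by fun_prop)
  have : IsCompact (Set.range (fun (x : Chr B) (b : B) => x.ev b)) := by
    refine hK.of_isClosed_subset hcl ?_
    rintro _ ⟨x, rfl⟩ b _
    exact hR b x
  rw [← isCompact_univ_iff, isEmb.isCompact_iff, Set.image_univ]
  exact this

theorem ext_of_reduced (hB : ∀ b : B, IsIntegral ℂ b) [IsReduced B] {b c : B}
    (h : ∀ x : Chr B, x.ev b = x.ev c) : b = c := by
  rw [← sub_eq_zero]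
  by_contra hb
  have : b - c ∉ nilradical B := by
    rw [mem_nilradical]; exact fun h => hb h.eq_zero
  rw [nilradical_eq_sInf, Ideal.mem_sInf] at this
  push Not at this
  obtain ⟨p, hp, hbp⟩ := this
  have hp' : p.IsPrime := hp
  have : Algebra.IsIntegral ℂ B := ⟨hB⟩
  have hbij := IsAlgClosed.algebraMap_bijective_of_isIntegral (k := ℂ) (K := B ⧸ p)
  let e := AlgEquiv.ofBijective (Algebra.ofId ℂ (B ⧸ p)) hbij
  let x : Chr B := (e.symm : (B ⧸ p) →ₐ[ℂ] ℂ).comp (Ideal.Quotient.mkₐ ℂ p)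
  have := h x
  rw [← sub_eq_zero, ← map_sub] at this
  apply hbp
  rw [← Ideal.Quotient.eq_zero_iff_mem]
  exact (map_eq_zero_iff e.symm e.symm.injective).1 this

/-- Functional calculus by Lagrange interpolation. -/
theorem lagrangeCalc (hB : ∀ b : B, IsIntegral ℂ b) (b : B) (g : ℂ → ℂ) :
    ∃ c : B, ∀ x : Chr B, x.ev c = g (x.ev b) := by
  obtain ⟨R, hR⟩ := exists_finset hB b
  refine ⟨aeval b (Lagrange.interpolate R id g), fun x => ?_⟩
  rw [← aeval_algHom_apply, Polynomial.coe_aeval_eq_eval]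
  exact Lagrange.eval_interpolate_at_node g (v := id) (Set.injOn_id _) (hR x)

theorem totsep (hB : ∀ b : B, IsIntegral ℂ b) : TotallySeparatedSpace (Chr B) := by
  rw [totallySeparatedSpace_iff_exists_isClopen]
  intro x y hxy
  obtain ⟨b, hb⟩ : ∃ b, x.ev b ≠ y.ev b := by
    by_contra! h; exact hxy (ev_inj h)
  obtain ⟨c, hc⟩ := lagrangeCalc hB b (fun z => if z = x.ev b then 1 else 0)
  obtain ⟨R, hR⟩ := exists_finset hB c
  refine ⟨{z | z.ev c = 1}, ⟨isClosed_eq (cont c) continuous_const, ?_⟩, ?_, ?_⟩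
  · have : {z : Chr B | z.ev c = 1} = {z : Chr B | z.ev c ≠ 0} := by
      ext z; simp only [Set.mem_ofPred_eq, hc]; split_ifs <;> simp
    rw [this]
    exact isOpen_ne_fun (cont c) continuous_const
  · simp [hc]
  · simp [hc, hb.symm]

end Chr

section fwd
variable {B : Type u} [CommRing B] [Algebra ℂ B] [StarRing B]

theorem baer_proper (h : IsBaerStarRing B) (a : B) (ha : star a * a = 0) : a = 0 := by
  obtain ⟨f, hf, hff, hS⟩ := h {a} (Set.singleton_nonempty a)
  simp only [Set.ext_iff, Set.mem_ofPred_eq, Set.mem_singleton_iff, forall_eq] at hS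
  obtain ⟨x, hx⟩ := (hS (star a)).1 (by rw [mul_comm, ha])
  have h1 : a * f = 0 := (hS f).2 ⟨f, hff.symm⟩
  have h2 : star a = 0 := by
    rw [hx, ← hff, mul_assoc, ← hx, ← hf, ← star_mul, h1, star_zero]
  simpa using h2

theorem baer_reduced (h : IsBaerStarRing B) : IsReduced B := by
  rw [isReduced_iff_pow_one_lt 2 one_lt_two]
  intro a ha
  apply baer_proper h
  apply baer_proper h
  rw [star_mul, star_star]
  linear_combination (star a) ^ 2 * ha

theorem baer_idem (h : IsBaerStarRing B) (e : B) (he : e * e = e) : star e = e := by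
  obtain ⟨f, hf, hff, hS⟩ := h {e} (Set.singleton_nonempty e)
  simp only [Set.ext_iff, Set.mem_ofPred_eq, Set.mem_singleton_iff, forall_eq] at hS
  obtain ⟨x, hx⟩ := (hS (1 - e)).1 (by linear_combination -he)
  have h1 : e * f = 0 := (hS f).2 ⟨f, hff.symm⟩
  have : e = 1 - f := by linear_combination (f - 1) * hx + h1 + x * hff
  rw [this, star_sub, star_one, hf]

variable [StarModule ℂ B]

theorem ev_star (hB : ∀ b : B, IsIntegral ℂ b) (h : IsBaerStarRing B) (x : Chr B) (b : B) :
    x.ev (star b) = star (x.ev b) := by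
  have := baer_reduced h
  obtain ⟨R, hR⟩ := Chr.exists_finset hB b
  choose e he using fun r : ℂ => Chr.lagrangeCalc hB b (fun z => if z = r then 1 else 0)
  have hs : ∀ r, star (e r) = e r := fun r => by
    apply baer_idem h
    apply Chr.ext_of_reduced hB
    intro y
    rw [map_mul, he]; split_ifs <;> simp
  have hb : b = ∑ r ∈ R, r • e r := by
    apply Chr.ext_of_reduced hB
    intro y
    simp [he, hR]
  have h1 : x.ev b = ∑ r ∈ R, r * x.ev (e r) := by
    conv_lhs => rw [hb]
    simp
  have h2 : x.ev (star b) = ∑ r ∈ R, star r * x.ev (e r) := by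
    conv_lhs => rw [hb]
    simp [star_sum, hs]
  rw [h1, h2, star_sum]
  refine Finset.sum_congr rfl fun r _ => ?_
  rw [he]; split_ifs <;> simp

/-- Gelfand transform -/
noncomputable def gel (hB : ∀ b : B, IsIntegral ℂ b) (h : IsBaerStarRing B) :
    B →⋆ₐ[ℂ] C(Chr B, ℂ) where
  toFun b := ⟨fun x => x.ev b, Chr.cont b⟩
  map_one' := by ext; simp
  map_mul' _ _ := by ext; simp
  map_zero' := by ext; simp
  map_add' _ _ := by ext; simp
  commutes' _ := by ext; simp
  map_star' _ := by ext x; simp [ev_star hB h]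

theorem clopen_rep (hB : ∀ b : B, IsIntegral ℂ b) (h : IsBaerStarRing B) (U : Set (Chr B))
    (hU : IsClopen U) : ∃ b : B, ∀ x : Chr B, x.ev b = U.indicator 1 x := by
  have := Chr.compact hB
  have hsep : (gel hB h).range.SeparatesPoints := by
    intro x y hxy
    by_contra! hc
    exact hxy (Chr.ev_inj fun b => hc _ ⟨gel hB h b, ⟨b, rfl⟩, rfl⟩)
  have hd := ContinuousMap.starSubalgebra_topologicalClosure_eq_top_of_separatesPoints _ hsep
  let χ : C(Chr B, ℂ) := ⟨U.indicator 1, (continuous_indicator (by simp [hU.frontier_eq])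
    continuous_one.continuousOn)⟩
  have hχ : χ ∈ (gel hB h).range.topologicalClosure := by rw [hd]; trivial
  rw [← SetLike.mem_coe, StarSubalgebra.topologicalClosure_coe, Metric.mem_closure_iff] at hχ
  obtain ⟨_, ⟨b, rfl⟩, hb⟩ := hχ (1 / 2) (by norm_num)
  obtain ⟨c, hc⟩ := Chr.lagrangeCalc hB b (fun z => if 1 / 2 < z.re then 1 else 0)
  refine ⟨c, fun x => ?_⟩
  have h1 : dist (U.indicator 1 x : ℂ) (x.ev b) < 1 / 2 :=
    (ContinuousMap.dist_apply_le_dist (f := χ) (g := gel hB h b) x).trans_lt hb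
  rw [Complex.dist_eq] at h1
  have h2 := (Complex.abs_re_le_norm _).trans_lt h1
  rw [abs_lt, Complex.sub_re] at h2
  rw [hc]
  by_cases hx : x ∈ U
  · simp only [hx, Set.indicator_of_mem, Pi.one_apply, Complex.one_re] at h2 ⊢
    rw [if_pos]; linarith
  · simp only [hx, Set.indicator_of_notMem, not_false_eq_true, Complex.zero_re] at h2 ⊢
    rw [if_neg]; linarith

theorem clopen_fiber (hB : ∀ b : B, IsIntegral ℂ b) (b : B) (r : ℂ) :
    IsClopen {x : Chr B | x.ev b = r} := by
  obtain ⟨c, hc⟩ := Chr.lagrangeCalc hB b (fun z => if z = r then 1 else 0)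
  refine ⟨isClosed_eq (Chr.cont b) continuous_const, ?_⟩
  have : {z : Chr B | z.ev b = r} = {z : Chr B | z.ev c ≠ 0} := by
    ext z; simp only [Set.mem_ofPred_eq, hc]; split_ifs <;> simp [*]
  rw [this]
  exact isOpen_ne_fun (Chr.cont c) continuous_const

theorem gel_range (hB : ∀ b : B, IsIntegral ℂ b) (h : IsBaerStarRing B) :
    ((gel hB h).range : Set C(Chr B, ℂ)) =
      (Submodule.span ℂ (clopenCharacteristicFunctions (Chr B)) : Set C(Chr B, ℂ)) := by
  apply Set.Subset.antisymm
  · rintro _ ⟨b, rfl⟩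
    obtain ⟨R, hR⟩ := Chr.exists_finset hB b
    choose e he using fun r : ℂ => Chr.lagrangeCalc hB b (fun z => if z = r then 1 else 0)
    have : gel hB h b = ∑ r ∈ R, r • gel hB h (e r) := by
      ext x
      have : x.ev b = ∑ r ∈ R, r * x.ev (e r) := by simp [he, hR]
      rw [ContinuousMap.coe_sum, Finset.sum_apply]
      exact this
    change gel hB h b ∈ _
    rw [this]
    refine Submodule.sum_mem _ fun r _ => Submodule.smul_mem _ _ (Submodule.subset_span ?_)
    refine ⟨_, clopen_fiber hB b r, fun x => ?_⟩
    refine (he r x).trans ?_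
    simp [Set.indicator_apply]
  · change Submodule.span ℂ _ ≤ Subalgebra.toSubmodule (gel hB h).range.toSubalgebra
    rw [Submodule.span_le]
    rintro f ⟨U, hU, hf⟩
    obtain ⟨b, hb⟩ := clopen_rep hB h U hU
    exact ⟨b, by ext x; exact (hb x).trans (hf x).symm⟩

theorem chr_ed (hB : ∀ b : B, IsIntegral ℂ b) (h : IsBaerStarRing B) :
    ExtremallyDisconnected (Chr B) := by
  have := Chr.compact hB
  have := Chr.totsep hB
  have := baer_reduced h
  refine ⟨fun V hV => ?_⟩
  obtain ⟨f, -, hff, hS⟩ := h {b : B | ∀ x : Chr B, x ∉ V → x.ev b = 0} ⟨0, by simp⟩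
  simp only [Set.ext_iff, Set.mem_ofPred_eq] at hS
  have hF := clopen_fiber hB f 0
  suffices closure V = {x : Chr B | x.ev f = 0} by rw [this]; exact hF.2
  apply Set.Subset.antisymm
  · refine closure_minimal (fun x hx => ?_) hF.1
    obtain ⟨K, hK, hxK, hKV⟩ := compact_exists_isClopen_in_isOpen hV hx
    obtain ⟨k, hk⟩ := clopen_rep hB h K hK
    have h0 := (hS f).2 ⟨f, hff.symm⟩ k fun y hy => by
      rw [hk, Set.indicator_of_notMem fun hyK => hy (hKV hyK)]
    have h1 := congrArg x.ev h0
    rw [map_mul, hk, Set.indicator_of_mem hxK] at h1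
    simpa using h1
  · intro x hx
    by_contra hxV
    obtain ⟨K, hK, hxK, hKV⟩ := compact_exists_isClopen_in_isOpen
      (isClosed_closure (s := V)).isOpen_compl hxV
    obtain ⟨k, hk⟩ := clopen_rep hB h K hK
    obtain ⟨z, hz⟩ := (hS k).1 fun s hs => by
      apply Chr.ext_of_reduced hB
      intro y
      rw [map_mul, map_zero, hk]
      by_cases hy : y ∈ V
      · rw [Set.indicator_of_notMem fun hyK => hKV hyK (subset_closure hy), mul_zero]
      · rw [hs y hy, zero_mul]
    have h1 := hk x
    have hx' : x.ev f = 0 := hx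
    rw [hz, map_mul, hx', Set.indicator_of_mem hxK] at h1
    simp at h1

theorem fwd_unital (ha : IsAlgebraicAlgebra B) (h : IsBaerStarRing B) :
      ∃ (T : Type u) (_ : TopologicalSpace T), CompactSpace T ∧ T2Space T ∧
        ExtremallyDisconnected T ∧
        ∃ S : StarSubalgebra ℂ C(T, ℂ),
          (S : Set C(T, ℂ)) =
            (Submodule.span ℂ (clopenCharacteristicFunctions T) : Set C(T, ℂ)) ∧
          Nonempty (B ≃⋆ₐ[ℂ] S) := by
  have hB := aux_integral ha
  have := baer_reduced h
  refine ⟨Chr B, inferInstance, Chr.compact hB, inferInstance, chr_ed hB h, (gel hB h).range,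
    gel_range hB h, ⟨StarAlgEquiv.ofInjective (gel hB h) fun a b hab => ?_⟩⟩
  exact Chr.ext_of_reduced hB fun x => DFunLike.congr_fun hab x

end fwd

theorem fwd_nonunital (B : Type u) [NonUnitalCommRing B]
    [Module ℂ B] [SMulCommClass ℂ B B] [IsScalarTower ℂ B B] [StarRing B] [StarModule ℂ B]
    (ha : IsAlgebraicAlgebra B) (h : IsBaerStarRing B) :
      ∃ (T : Type u) (_ : TopologicalSpace T), CompactSpace T ∧ T2Space T ∧
        ExtremallyDisconnected T ∧
        ∃ S : StarSubalgebra ℂ C(T, ℂ),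
          (S : Set C(T, ℂ)) =
            (Submodule.span ℂ (clopenCharacteristicFunctions T) : Set C(T, ℂ)) ∧
          Nonempty (B ≃⋆ₐ[ℂ] S) := by
  obtain ⟨u, -, huu, hS⟩ := h {0} (Set.singleton_nonempty 0)
  simp only [Set.ext_iff, Set.mem_ofPred_eq, Set.mem_singleton_iff, forall_eq, zero_mul,
    true_iff] at hS
  have hu : ∀ b : B, u * b = b := fun b => by
    obtain ⟨x, hx⟩ := hS b
    rw [hx, ← mul_assoc, huu]
  let : CommRing B :=
    { ‹NonUnitalCommRing B› with
      one := u
      one_mul := hu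
      mul_one := fun b => (mul_comm b u).trans (hu b) }
  let : Algebra ℂ B := Algebra.ofModule (fun r x y => smul_mul_assoc r x y)
    (fun r x y => mul_smul_comm r x y)
  exact fwd_unital ha h

theorem bwd (B : Type u) [NonUnitalCommRing B]
    [Module ℂ B] [SMulCommClass ℂ B B] [IsScalarTower ℂ B B] [StarRing B] [StarModule ℂ B]
    (T : Type u) [TopologicalSpace T] [CompactSpace T] [T2Space T] [ExtremallyDisconnected T]
    (S : StarSubalgebra ℂ C(T, ℂ))
    (hS : (S : Set C(T, ℂ)) =
            (Submodule.span ℂ (clopenCharacteristicFunctions T) : Set C(T, ℂ)))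
    (φ : B ≃⋆ₐ[ℂ] S) : IsAlgebraicAlgebra B ∧ IsBaerStarRing B := by
  constructor
  · intro b
    have hint : IsIntegral ℂ (φ b : C(T, ℂ)) := by
      have h1 : (φ b : C(T, ℂ)) ∈ Submodule.span ℂ (clopenCharacteristicFunctions T) := by
        rw [← SetLike.mem_coe, ← hS]; exact (φ b).2
      have h2 : Submodule.span ℂ (clopenCharacteristicFunctions T) ≤
          Subalgebra.toSubmodule (integralClosure ℂ C(T, ℂ)) := by
        rw [Submodule.span_le]
        rintro f ⟨U, hU, hf⟩
        refine ⟨X ^ 2 - X, by monicity!, ?_⟩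
        ext t
        by_cases ht : t ∈ U <;> simp [hf, ht]
      exact h2 h1
    have hint' : IsIntegral ℂ (φ b) :=
      (isIntegral_algHom_iff S.toSubalgebra.val Subtype.val_injective).1 hint
    have hfd : FiniteDimensional ℂ (Algebra.adjoin ℂ {φ b}) :=
      Module.Finite.iff_fg.2 hint'.fg_adjoin_singleton
    let A := (Algebra.adjoin ℂ {φ b}).toNonUnitalSubalgebra
    have hA : FiniteDimensional ℂ A := hfd
    refine ⟨A.map (φ.symm : S →⋆ₙₐ[ℂ] B), ⟨φ b, Algebra.self_mem_adjoin_singleton ℂ _,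
      φ.symm_apply_apply b⟩, ?_⟩
    exact Module.Finite.map A.toSubmodule (((φ.symm : S →⋆ₙₐ[ℂ] B) : S →ₙₐ[ℂ] B) : S →ₗ[ℂ] B)
  · intro Q hQ
    have hφ0 : φ 0 = 0 := map_zero φ
    let V : Set T := ⋃ s ∈ Q, {t | (φ s : C(T, ℂ)) t ≠ 0}
    have hV : IsOpen V := isOpen_biUnion fun s _ =>
      isOpen_ne_fun (φ s : C(T, ℂ)).continuous continuous_const
    have hF : IsClopen (closure V)ᶜ :=
      IsClopen.compl ⟨isClosed_closure, ExtremallyDisconnected.open_closure V hV⟩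
    let χ : C(T, ℂ) := ⟨(closure V)ᶜ.indicator 1, (continuous_indicator (by simp [hF.frontier_eq])
      continuous_one.continuousOn)⟩
    have hχ : χ ∈ S := by
      rw [← SetLike.mem_coe, hS]
      exact Submodule.subset_span ⟨_, hF, fun t => rfl⟩
    have hχ1 : ∀ t, t ∉ closure V → χ t = 1 := fun t ht => Set.indicator_of_mem (s := (closure V)ᶜ) ht _
    have hχ0 : ∀ t, t ∈ closure V → χ t = 0 := fun t ht =>
      Set.indicator_of_notMem (s := (closure V)ᶜ) (fun h => h ht) _
    obtain ⟨f, hf⟩ : ∃ f, φ f = ⟨χ, hχ⟩ := φ.surjective ⟨χ, hχ⟩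
    have hext : ∀ a b : B, (∀ t, (φ a : C(T, ℂ)) t = (φ b : C(T, ℂ)) t) → a = b := fun a b hab =>
      φ.injective (Subtype.ext (ContinuousMap.ext hab))
    have hf' : ∀ t, (φ f : C(T, ℂ)) t = χ t := fun t => by rw [hf]
    have hmul : ∀ a b t, (φ (a * b) : C(T, ℂ)) t = (φ a : C(T, ℂ)) t * (φ b : C(T, ℂ)) t :=
      fun a b t => by rw [map_mul]; rfl
    have hz : ∀ t, (φ 0 : C(T, ℂ)) t = 0 := fun t => by rw [hφ0]; rfl
    have hst : ∀ a t, (φ (star a) : C(T, ℂ)) t = star ((φ a : C(T, ℂ)) t) :=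
      fun a t => by rw [map_star]; rfl
    refine ⟨f, hext _ _ fun t => ?_, hext _ _ fun t => ?_, ?_⟩
    · rw [hst, hf']
      by_cases ht : t ∈ closure V
      · simp [hχ0 t ht]
      · simp [hχ1 t ht]
    · rw [hmul, hf']
      by_cases ht : t ∈ closure V
      · simp [hχ0 t ht]
      · simp [hχ1 t ht]
    · ext y
      constructor
      · intro hy
        refine ⟨y, hext _ _ fun t => ?_⟩
        rw [hmul, hf']
        by_cases ht : t ∈ closure V
        · rw [hχ0 t ht, zero_mul]
          have hcl : IsClosed {t | (φ y : C(T, ℂ)) t = 0} :=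
            isClosed_eq (φ y : C(T, ℂ)).continuous continuous_const
          refine closure_minimal (fun v hv => ?_) hcl ht
          simp only [V, Set.mem_iUnion] at hv
          obtain ⟨s, hs, hsv⟩ := hv
          have := hmul s y v
          rw [hy s hs, hz] at this
          exact (mul_eq_zero.1 this.symm).resolve_left hsv
        · rw [hχ1 t ht, one_mul]
      · rintro ⟨x, rfl⟩ s hs
        refine hext _ _ fun t => ?_
        rw [hmul, hmul, hf', hz]
        by_cases ht : t ∈ closure V
        · rw [hχ0 t ht]; simp
        · have : (φ s : C(T, ℂ)) t = 0 := by
            by_contra hne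
            exact ht (subset_closure (Set.mem_biUnion hs hne))
          rw [this, zero_mul]

/-- A commutative complex `*`-algebra is an algebraic Baer `*`-algebra
iff it is `*`-isomorphic to the ℂ-linear span, inside `C(T, ℂ)` for some Stonean space
`T`, of the characteristic functions of the clopen subsets of `T`. -/
theorem commutative_algebraic_baer_iff_span_clopen (B : Type u) [NonUnitalCommRing B]
    [Module ℂ B] [SMulCommClass ℂ B B] [IsScalarTower ℂ B B] [StarRing B] [StarModule ℂ B] :
    (IsAlgebraicAlgebra B ∧ IsBaerStarRing B) ↔
      ∃ (T : Type u) (_ : TopologicalSpace T), CompactSpace T ∧ T2Space T ∧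
        ExtremallyDisconnected T ∧
        ∃ S : StarSubalgebra ℂ C(T, ℂ),
          (S : Set C(T, ℂ)) =
            (Submodule.span ℂ (clopenCharacteristicFunctions T) : Set C(T, ℂ)) ∧
          Nonempty (B ≃⋆ₐ[ℂ] S) := by
  constructor
  · rintro ⟨ha, h⟩
    exact fwd_nonunital B ha h
  · rintro ⟨T, _, _, _, _, S, hS, ⟨φ⟩⟩
    exact bwd B T S hS φ
end
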